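/- arXiv:1012.2853 — 6 statements merged into one kernel-verified Lean document; each statement's English description precedes it below -/
import Mathlib

section
/- Fix λ ∈ ℂ with Re λ = 0, fix g ∈ SL(2,ℝ) with g ∉ SO(2), and let φ be a lift of the circle map of g, M = max_{θ∈[0,2π]} φ'(θ) (so M > 1). For every positive integer P there exists a constant C > 0 such that for all integers n ≥ 1 and k ≥ 1 with either k ≥ 1.1·M·n or k ≤ 0.9·M⁻¹·n, the oscillatory integral satisfies |I(k,n)| ≤ C·(k + n)^{−P}. -/
/-!
The phase `kφ(θ) - nθ` is non-stationary in the given range, so the bound follows by integrating by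
parts `P` times, provided all constants are uniform in `(k, n)`.

Homogeneity gives the uniformity. With `N = k + n` and `t = k / N ∈ [0, 1]`, the derivative of the
phase is `N · D(t, θ)`, where `D(t, θ) = t φ'(θ) - (1 - t)` (`phaseSpeed`) is jointly smooth. One
integration by parts replaces a `2π`-periodic amplitude `F(t, θ)` by `(i / N) ∂_θ (F / D)`, which is
again periodic and smooth on the open set `{D ≠ 0}`. After `P` steps the amplitude is continuous
on `{D ≠ 0}`, hence bounded on `T × [0, 2π]` for every compact `T` with `T × ℝ ⊆ {D ≠ 0}`
(`exists_bound_of_phaseSpeed_ne_zero`).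

The set `T` of `t ∈ [0, 1]` with `1.1 M (1 - t) ≤ t` or `t ≤ 0.9 M⁻¹ (1 - t)` is compact, and
`D ≠ 0` there because `M⁻¹ ≤ φ' ≤ M`. Here `φ' = ‖g v‖⁻²` comes from differentiating
`(g v)₀ sin φ = (g v)₁ cos φ`, and `‖g v‖² ≤ M` from the fact that the smallest and largest
singular values of `g` are reciprocal (`normSq_le_of_forall_normSq_ge`).
-/

open Matrix

/-- Euclidean norm on `ℝ²` (as `Fin 2 → ℝ`). -/
noncomputable def enorm2 (w : Fin 2 → ℝ) : ℝ := Real.sqrt (w 0 ^ 2 + w 1 ^ 2)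

/-- The unit vector `v(θ) = (cos θ, sin θ)`. -/
noncomputable def vCirc (θ : ℝ) : Fin 2 → ℝ := ![Real.cos θ, Real.sin θ]

/-- A lift of the circle map of `g ∈ SL(2,ℝ)`: a smooth `φ : ℝ → ℝ` with
`g·v(θ) = ‖g·v(θ)‖ · v(φ θ)` for all `θ`. -/
def IsLift (g : Matrix.SpecialLinearGroup (Fin 2) ℝ) (φ : ℝ → ℝ) : Prop :=
  ContDiff ℝ (⊤ : ℕ∞) φ ∧
    ∀ θ : ℝ, (g : Matrix (Fin 2) (Fin 2) ℝ).mulVec (vCirc θ) =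
      enorm2 ((g : Matrix (Fin 2) (Fin 2) ℝ).mulVec (vCirc θ)) • vCirc (φ θ)

/-- The oscillatory integral `I(k,n) = ∫₀^{2π} φ'(θ)^{(λ−1)/2} e^{i(kφ(θ) − nθ)} dθ`,
complex powers of positive reals taken via `x ^ w = exp (w log x)`. -/
noncomputable def oscI (φ : ℝ → ℝ) (lam : ℂ) (k n : ℤ) : ℂ :=
  ∫ θ in (0 : ℝ)..(2 * Real.pi),
    ((deriv φ θ : ℝ) : ℂ) ^ ((lam - 1) / 2) *
      Complex.exp (Complex.I * ((k : ℂ) * (φ θ : ℂ) - (n : ℂ) * (θ : ℂ)))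

/-- The derivative in `θ` of the normalized phase `t φ(θ) - (1 - t) θ`, at `p = (t, θ)`. -/
noncomputable def phaseSpeed (φ : ℝ → ℝ) (p : ℝ × ℝ) : ℝ := p.1 * deriv φ p.2 - (1 - p.1)

lemma contDiff_deriv_of_smooth {φ : ℝ → ℝ} (hφ : ContDiff ℝ (⊤ : ℕ∞) φ) :
    ContDiff ℝ (⊤ : ℕ∞) (deriv φ) :=
  (contDiff_infty_iff_deriv.1 hφ).2

lemma contDiff_phaseSpeed {φ : ℝ → ℝ} (hφ : ContDiff ℝ (⊤ : ℕ∞) φ) :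
    ContDiff ℝ (⊤ : ℕ∞) (phaseSpeed φ) := by
  have h := contDiff_deriv_of_smooth hφ
  unfold phaseSpeed
  fun_prop

lemma hasDerivAt_exp_phase {φ : ℝ → ℝ} (hφ : ContDiff ℝ (⊤ : ℕ∞) φ) (k n : ℂ) (θ : ℝ) :
    HasDerivAt (fun θ : ℝ => Complex.exp (Complex.I * (k * (φ θ : ℂ) - n * (θ : ℂ))))
      (Complex.exp (Complex.I * (k * (φ θ : ℂ) - n * (θ : ℂ))) *
        (Complex.I * (k * ((deriv φ θ : ℝ) : ℂ) - n))) θ := by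
  have h1 : HasDerivAt φ (deriv φ θ) θ :=
    ((hφ.differentiable (by simp)) θ).hasDerivAt
  have h2 : HasDerivAt (fun θ : ℝ => (θ : ℂ)) 1 θ := (hasDerivAt_id θ).ofReal_comp
  have h3 := ((h1.ofReal_comp.const_mul k).sub (h2.const_mul n)).const_mul Complex.I
  simpa using h3.cexp

/-- Non-stationary phase with a bound uniform in the direction `k / (k + n) ∈ T`; the amplitude may
depend smoothly on that direction. -/
lemma exists_bound_of_phaseSpeed_ne_zero {φ : ℝ → ℝ} (hφ : ContDiff ℝ (⊤ : ℕ∞) φ)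
    (hper : ∀ θ, deriv φ (θ + 2 * Real.pi) = deriv φ θ)
    (hexp : ∀ k n : ℤ,
      Complex.exp (Complex.I * ((k : ℂ) * (φ (2 * Real.pi) : ℂ) - n * ((2 * Real.pi : ℝ) : ℂ))) =
      Complex.exp (Complex.I * ((k : ℂ) * (φ 0 : ℂ) - n * ((0 : ℝ) : ℂ))))
    {T : Set ℝ} (hT : IsCompact T) (hD : ∀ t ∈ T, ∀ θ, phaseSpeed φ (t, θ) ≠ 0) (P : ℕ) :
    ∀ F : ℝ × ℝ → ℂ, ContDiffOn ℝ (⊤ : ℕ∞) F {p | phaseSpeed φ p ≠ 0} →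
      (∀ p : ℝ × ℝ, F (p + (0, 2 * Real.pi)) = F p) →
      ∃ C : ℝ, 0 < C ∧ ∀ n k : ℤ, 0 < (k : ℝ) + n → (k : ℝ) / (k + n) ∈ T →
        ‖∫ θ in (0 : ℝ)..(2 * Real.pi), F ((k : ℝ) / (k + n), θ) *
          Complex.exp (Complex.I * ((k : ℂ) * (φ θ : ℂ) - (n : ℂ) * (θ : ℂ)))‖ ≤
          C * (((k : ℝ) + n) ^ P)⁻¹ := by
  have hDs := contDiff_phaseSpeed hφ
  have hopen : IsOpen {p | phaseSpeed φ p ≠ 0} := isOpen_ne_fun hDs.continuous continuous_const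
  have hpi : (0 : ℝ) ≤ 2 * Real.pi := by positivity
  induction P with
  | zero =>
    intro F hF _
    have hK : IsCompact (T ×ˢ Set.Icc (0 : ℝ) (2 * Real.pi)) := hT.prod isCompact_Icc
    obtain ⟨B, hB⟩ := hK.exists_bound_of_continuousOn
      (hF.continuousOn.mono fun p hp => hD p.1 hp.1 p.2)
    refine ⟨(|B| + 1) * (2 * Real.pi), by positivity, fun n k _ ht => ?_⟩
    have := intervalIntegral.norm_integral_le_of_norm_le_const (a := (0 : ℝ)) (b := 2 * Real.pi)
      (C := |B| + 1) (f := fun θ : ℝ => F ((k : ℝ) / (k + n), θ) *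
          Complex.exp (Complex.I * ((k : ℂ) * (φ θ : ℂ) - (n : ℂ) * (θ : ℂ)))) ?_
    · simpa [abs_of_nonneg hpi, abs_of_pos Real.pi_pos] using this
    · intro θ hθ
      rw [Set.uIoc_of_le hpi] at hθ
      have h1 : ‖Complex.exp (Complex.I * ((k : ℂ) * (φ θ : ℂ) - (n : ℂ) * (θ : ℂ)))‖ = 1 := by
        have := Complex.norm_exp_I_mul_ofReal ((k : ℝ) * φ θ - n * θ)
        push_cast at this
        exact this
      rw [norm_mul, h1, mul_one]
      have := hB ((k : ℝ) / (k + n), θ) ⟨ht, hθ.1.le, hθ.2⟩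
      linarith [le_abs_self B]
  | succ P ih =>
    intro F hF hFper
    set G : ℝ × ℝ → ℂ := fun p => F p / (phaseSpeed φ p : ℂ) with hG
    have hGs : ContDiffOn ℝ (⊤ : ℕ∞) G {p | phaseSpeed φ p ≠ 0} := by
      have e : G = fun p => F p * Complex.ofRealCLM ((phaseSpeed φ p)⁻¹) := by
        funext p
        simp [hG, div_eq_mul_inv]
      rw [e]
      exact hF.mul (Complex.ofRealCLM.contDiff.comp_contDiffOn (hDs.contDiffOn.inv fun p hp => hp))
    have hGper : ∀ p : ℝ × ℝ, G (p + (0, 2 * Real.pi)) = G p := by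
      intro p
      have : phaseSpeed φ (p + (0, 2 * Real.pi)) = phaseSpeed φ p := by
        simp [phaseSpeed, hper]
      simp only [hG, hFper, this]
    set H : ℝ × ℝ → ℂ := fun p => fderiv ℝ G p (0, 1) with hH
    have hHs : ContDiffOn ℝ (⊤ : ℕ∞) H {p | phaseSpeed φ p ≠ 0} :=
      (hGs.fderiv_of_isOpen hopen (by simp)).clm_apply contDiffOn_const
    have hHper : ∀ p : ℝ × ℝ, H (p + (0, 2 * Real.pi)) = H p := by
      intro p
      simp only [hH]
      rw [← fderiv_comp_add_right]
      simp only [hGper]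
    obtain ⟨C, hC, hb⟩ := ih H hHs hHper
    refine ⟨C, hC, fun n k hN ht => ?_⟩
    have hb := hb n k hN ht
    set t : ℝ := (k : ℝ) / (k + n) with htdef
    set E : ℝ → ℂ := fun θ => Complex.exp (Complex.I * ((k : ℂ) * (φ θ : ℂ) - (n : ℂ) * (θ : ℂ)))
      with hE
    have hmem : ∀ θ, (t, θ) ∈ {p | phaseSpeed φ p ≠ 0} := fun θ => hD t ht θ
    have hline : ContDiff ℝ (⊤ : ℕ∞) (fun θ : ℝ => (t, θ)) := by fun_prop
    have hGd : ∀ θ, HasDerivAt (fun θ => G (t, θ)) (H (t, θ)) θ := by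
      intro θ
      have h1 : DifferentiableAt ℝ G (t, θ) :=
        (hGs.differentiableOn (by simp)).differentiableAt (hopen.mem_nhds (hmem θ))
      exact h1.hasFDerivAt.comp_hasDerivAt θ ((hasDerivAt_const θ t).prodMk (hasDerivAt_id θ))
    have hEd : ∀ θ, HasDerivAt E (E θ * (Complex.I * ((k : ℂ) * ((deriv φ θ : ℝ) : ℂ) - n))) θ :=
      fun θ => hasDerivAt_exp_phase hφ k n θ
    have hEc : Continuous E := continuous_iff_continuousAt.2 fun θ => (hEd θ).continuousAt
    have hdc : Continuous (deriv φ) := (contDiff_deriv_of_smooth hφ).continuous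
    have hHc : Continuous fun θ => H (t, θ) :=
      hHs.continuousOn.comp_continuous hline.continuous hmem
    have hparts := intervalIntegral.integral_mul_deriv_eq_deriv_mul (a := (0 : ℝ))
      (b := 2 * Real.pi) (u := fun θ => G (t, θ)) (v := E)
      (u' := fun θ => H (t, θ)) (v' := fun θ => E θ * (Complex.I * ((k : ℂ) * ((deriv φ θ : ℝ) : ℂ) - n)))
      (fun θ _ => hGd θ) (fun θ _ => hEd θ) (hHc.intervalIntegrable _ _)
      (Continuous.intervalIntegrable (by fun_prop) _ _)
    have hG0 : G (t, 2 * Real.pi) = G (t, 0) := by simpa using hGper (t, 0)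
    have hE0 : E (2 * Real.pi) = E 0 := hexp k n
    simp only [hG0, hE0, sub_self, zero_sub] at hparts
    have hNC : (k : ℂ) + n ≠ 0 := by exact_mod_cast ne_of_gt hN
    -- `k φ' - n = (k + n) D(t, θ)` turns the left side of `hparts` into the original integral.
    have hint : ∀ θ, G (t, θ) * (E θ * (Complex.I * ((k : ℂ) * ((deriv φ θ : ℝ) : ℂ) - n))) =
        (Complex.I * (k + n)) * (F (t, θ) * E θ) := by
      intro θ
      have hD0 : (phaseSpeed φ (t, θ) : ℂ) ≠ 0 := by exact_mod_cast hD t ht θ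
      have h1 : ((k : ℂ) * ((deriv φ θ : ℝ) : ℂ) - n) = (k + n) * (phaseSpeed φ (t, θ) : ℂ) := by
        simp only [phaseSpeed, htdef]
        push_cast
        field_simp
        ring
      rw [h1]
      simp only [hG]
      field_simp
    simp only [hint] at hparts
    rw [intervalIntegral.integral_const_mul] at hparts
    have hnorm := congrArg norm hparts
    have hNn : ‖(k : ℂ) + n‖ = (k : ℝ) + n := by
      have := Complex.norm_of_nonneg hN.le
      push_cast at this
      exact this
    rw [norm_mul, norm_mul, Complex.norm_I, one_mul, hNn, norm_neg] at hnorm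
    rw [pow_succ, mul_inv, ← mul_assoc, ← div_eq_mul_inv, le_div_iff₀ hN, mul_comm, hnorm]
    exact hb

section Lift

/-- If `‖g x‖² ≥ M⁻¹ ‖x‖²` for all `x`, and `det g = 1`, then `‖g x‖² ≤ M ‖x‖²`; stated on unit
vectors, with `g = !![a, b; c, d]`. -/
lemma normSq_le_of_forall_normSq_ge {a b c d M : ℝ} (hdet : a * d - b * c = 1)
    (hM : ∀ θ : ℝ, 1 ≤ M * ((a * Real.cos θ + b * Real.sin θ) ^ 2 +
      (c * Real.cos θ + d * Real.sin θ) ^ 2)) (θ : ℝ) :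
    (a * Real.cos θ + b * Real.sin θ) ^ 2 + (c * Real.cos θ + d * Real.sin θ) ^ 2 ≤ M := by
  have hom : ∀ x y : ℝ, x ^ 2 + y ^ 2 ≤ M * ((a * x + b * y) ^ 2 + (c * x + d * y) ^ 2) := by
    intro x y
    have hx := Complex.norm_mul_cos_arg (⟨x, y⟩ : ℂ)
    have hy := Complex.norm_mul_sin_arg (⟨x, y⟩ : ℂ)
    simp only at hx hy
    have h := mul_le_mul_of_nonneg_left (hM (Complex.arg ⟨x, y⟩))
      (sq_nonneg ‖(⟨x, y⟩ : ℂ)‖)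
    have h1 := Real.sin_sq_add_cos_sq (Complex.arg ⟨x, y⟩)
    generalize ‖(⟨x, y⟩ : ℂ)‖ = r at *
    generalize Complex.arg ⟨x, y⟩ = η at *
    subst hx hy
    linear_combination h + r ^ 2 * h1
  set x := Real.cos θ
  set y := Real.sin θ
  have hxy : x ^ 2 + y ^ 2 = 1 := by rw [add_comm]; exact Real.sin_sq_add_cos_sq θ
  set A := a * x + b * y with hA
  set B := c * x + d * y with hB
  -- The vector `w = g⁻¹ J g v` has `‖g w‖ = ‖g v‖`, and `v × w = g v × g w = ‖g v‖²` forces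
  -- `‖w‖ ≥ ‖g v‖²`.
  have hw := hom (-d * B - b * A) (c * B + a * A)
  have e1 : a * (-d * B - b * A) + b * (c * B + a * A) = -B := by linear_combination -B * hdet
  have e2 : c * (-d * B - b * A) + d * (c * B + a * A) = A := by linear_combination A * hdet
  rw [e1, e2] at hw
  have hcross : x * (c * B + a * A) - y * (-d * B - b * A) = A ^ 2 + B ^ 2 := by
    rw [hA, hB]; ring
  have hCS : (A ^ 2 + B ^ 2) ^ 2 ≤ (-d * B - b * A) ^ 2 + (c * B + a * A) ^ 2 := by
    rw [← hcross]
    have : (-d * B - b * A) ^ 2 + (c * B + a * A) ^ 2 =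
        (x ^ 2 + y ^ 2) * ((-d * B - b * A) ^ 2 + (c * B + a * A) ^ 2) := by rw [hxy, one_mul]
    rw [this]
    nlinarith [sq_nonneg (x * (-d * B - b * A) + y * (c * B + a * A))]
  have hq : 0 < A ^ 2 + B ^ 2 := by
    rcases (by positivity : 0 ≤ A ^ 2 + B ^ 2).lt_or_eq with h | h
    · exact h
    · have := hom x y
      rw [hxy, ← hA, ← hB, ← h] at this
      norm_num at this
  nlinarith

variable {g : Matrix.SpecialLinearGroup (Fin 2) ℝ} {φ : ℝ → ℝ}

/-- `‖g v(θ)‖²` in coordinates. -/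
noncomputable def circNormSq (g : Matrix.SpecialLinearGroup (Fin 2) ℝ) (θ : ℝ) : ℝ :=
  (g 0 0 * Real.cos θ + g 0 1 * Real.sin θ) ^ 2 + (g 1 0 * Real.cos θ + g 1 1 * Real.sin θ) ^ 2

lemma det_entries (g : Matrix.SpecialLinearGroup (Fin 2) ℝ) :
    g 0 0 * g 1 1 - g 0 1 * g 1 0 = 1 := by
  rw [← Matrix.det_fin_two, g.det_coe]

lemma circNormSq_pos (g : Matrix.SpecialLinearGroup (Fin 2) ℝ) (θ : ℝ) : 0 < circNormSq g θ := by
  have hdet := det_entries g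
  have h1 := Real.sin_sq_add_cos_sq θ
  unfold circNormSq
  set A := g 0 0 * Real.cos θ + g 0 1 * Real.sin θ with hA
  set B := g 1 0 * Real.cos θ + g 1 1 * Real.sin θ with hB
  rcases (by positivity : 0 ≤ A ^ 2 + B ^ 2).lt_or_eq with h | h
  · exact h
  · have hA0 : A = 0 := by nlinarith [sq_nonneg A, sq_nonneg B]
    have hB0 : B = 0 := by nlinarith [sq_nonneg A, sq_nonneg B]
    have hc : Real.cos θ = 0 := by
      linear_combination (-Real.cos θ) * hdet - g 1 1 * hA + g 0 1 * hB + g 1 1 * hA0 - g 0 1 * hB0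
    have hs : Real.sin θ = 0 := by
      linear_combination (-Real.sin θ) * hdet + g 1 0 * hA - g 0 0 * hB - g 1 0 * hA0 + g 0 0 * hB0
    simp [hc, hs] at h1

lemma IsLift.coords (h : IsLift g φ) (θ : ℝ) :
    g 0 0 * Real.cos θ + g 0 1 * Real.sin θ = √(circNormSq g θ) * Real.cos (φ θ) ∧
    g 1 0 * Real.cos θ + g 1 1 * Real.sin θ = √(circNormSq g θ) * Real.sin (φ θ) := by
  have h0 := congrFun (h.2 θ) 0
  have h1 := congrFun (h.2 θ) 1
  simp [enorm2, vCirc, Matrix.mulVec, dotProduct, Fin.sum_univ_two] at h0 h1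
  exact ⟨h0, h1⟩

lemma IsLift.deriv_eq (h : IsLift g φ) (θ : ℝ) : deriv φ θ = (circNormSq g θ)⁻¹ := by
  have hφ : HasDerivAt φ (deriv φ θ) θ := ((h.1.differentiable (by simp)) θ).hasDerivAt
  have hc := Real.hasDerivAt_cos θ
  have hs := Real.hasDerivAt_sin θ
  have hfun : (fun θ => (g 0 0 * Real.cos θ + g 0 1 * Real.sin θ) * Real.sin (φ θ)) =
      fun θ => (g 1 0 * Real.cos θ + g 1 1 * Real.sin θ) * Real.cos (φ θ) := by
    funext θ
    rw [(h.coords θ).1, (h.coords θ).2]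
    ring
  have d1 : HasDerivAt
      (fun θ => (g 0 0 * Real.cos θ + g 0 1 * Real.sin θ) * Real.sin (φ θ)) _ θ :=
    ((hc.const_mul (g 0 0)).add (hs.const_mul (g 0 1))).mul hφ.sin
  have d2 : HasDerivAt
      (fun θ => (g 1 0 * Real.cos θ + g 1 1 * Real.sin θ) * Real.cos (φ θ)) _ θ :=
    ((hc.const_mul (g 1 0)).add (hs.const_mul (g 1 1))).mul hφ.cos
  rw [← hfun] at d2
  have hd := d1.unique d2
  simp only [Pi.add_apply] at hd
  have hq := circNormSq_pos g θ
  have hr := Real.sq_sqrt hq.le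
  obtain ⟨h0, h1⟩ := h.coords θ
  have hdet := det_entries g
  have hcs := Real.sin_sq_add_cos_sq θ
  have hcs' := Real.sin_sq_add_cos_sq (φ θ)
  rw [h0, h1] at hd
  set r := √(circNormSq g θ)
  rw [← one_div, eq_div_iff hq.ne', ← hr]
  generalize deriv φ θ = p at *
  generalize Real.sin (φ θ) = S at *
  generalize Real.cos (φ θ) = K at *
  generalize Real.sin θ = s at *
  generalize Real.cos θ = c at *
  have key : p * r ^ 2 = (r * K) * (g 1 1 * c - g 1 0 * s) - (r * S) * (g 0 1 * c - g 0 0 * s) := by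
    linear_combination r * hd - p * r ^ 2 * hcs'
  rw [key, ← h0, ← h1]
  linear_combination (s ^ 2 + c ^ 2) * hdet + hcs

lemma circNormSq_add_two_pi (g : Matrix.SpecialLinearGroup (Fin 2) ℝ) (θ : ℝ) :
    circNormSq g (θ + 2 * Real.pi) = circNormSq g θ := by
  simp [circNormSq]

/-- Both sides equal `g v(0) / ‖g v(0)‖` as points of the unit circle in `ℂ`. -/
lemma IsLift.exp_two_pi (h : IsLift g φ) :
    Complex.exp (φ (2 * Real.pi) * Complex.I) = Complex.exp (φ 0 * Complex.I) := by
  have hr : √(circNormSq g 0) ≠ 0 := (Real.sqrt_pos.2 (circNormSq_pos g 0)).ne'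
  have hq : circNormSq g (2 * Real.pi) = circNormSq g 0 := by
    simpa using circNormSq_add_two_pi g 0
  obtain ⟨a0, a1⟩ := h.coords 0
  obtain ⟨b0, b1⟩ := h.coords (2 * Real.pi)
  simp only [hq, Real.cos_two_pi, Real.sin_two_pi] at b0 b1
  simp only [Real.cos_zero, Real.sin_zero] at a0 a1
  have hc : Real.cos (φ (2 * Real.pi)) = Real.cos (φ 0) :=
    mul_left_cancel₀ hr (b0.symm.trans a0)
  have hs : Real.sin (φ (2 * Real.pi)) = Real.sin (φ 0) :=
    mul_left_cancel₀ hr (b1.symm.trans a1)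
  rw [Complex.exp_mul_I, Complex.exp_mul_I]
  norm_cast
  rw [hc, hs]

lemma IsLift.exp_phase_two_pi (h : IsLift g φ) (k n : ℤ) :
    Complex.exp (Complex.I * ((k : ℂ) * (φ (2 * Real.pi) : ℂ) - n * ((2 * Real.pi : ℝ) : ℂ))) =
      Complex.exp (Complex.I * ((k : ℂ) * (φ 0 : ℂ) - n * ((0 : ℝ) : ℂ))) := by
  have e1 : Complex.I * ((k : ℂ) * (φ (2 * Real.pi) : ℂ) - n * ((2 * Real.pi : ℝ) : ℂ)) =
      k * (φ (2 * Real.pi) * Complex.I) - n * (2 * Real.pi * Complex.I) := by push_cast; ring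
  have e2 : Complex.I * ((k : ℂ) * (φ 0 : ℂ) - n * ((0 : ℝ) : ℂ)) = k * (φ 0 * Complex.I) := by
    push_cast; ring
  rw [e1, e2, Complex.exp_sub, Complex.exp_int_mul_two_pi_mul_I, div_one, Complex.exp_int_mul,
    Complex.exp_int_mul, h.exp_two_pi]

end Lift

theorem oscI_cutoff_bound (lam : ℂ) (hlam : lam.re = 0)
    (g : Matrix.SpecialLinearGroup (Fin 2) ℝ)
    (hg : (g : Matrix (Fin 2) (Fin 2) ℝ)ᵀ * (g : Matrix (Fin 2) (Fin 2) ℝ) ≠ 1)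
    (φ : ℝ → ℝ) (hφ : IsLift g φ)
    (M : ℝ) (hM : M = sSup (deriv φ '' Set.Icc (0 : ℝ) (2 * Real.pi)))
    (P : ℕ) (hP : 0 < P) :
    ∃ C : ℝ, 0 < C ∧ ∀ n k : ℤ, 1 ≤ n → 1 ≤ k →
      ((1.1 : ℝ) * M * n ≤ k ∨ (k : ℝ) ≤ (0.9 : ℝ) * M⁻¹ * n) →
      ‖oscI φ lam k n‖ ≤ C * ((k : ℝ) + (n : ℝ)) ^ (-(P : ℤ)) := by
  have hsm := hφ.1
  have hpos : ∀ θ, 0 < deriv φ θ := fun θ => by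
    rw [hφ.deriv_eq]; exact inv_pos.2 (circNormSq_pos g θ)
  have hper : ∀ θ, deriv φ (θ + 2 * Real.pi) = deriv φ θ := fun θ => by
    rw [hφ.deriv_eq, hφ.deriv_eq, circNormSq_add_two_pi]
  have hdsm := contDiff_deriv_of_smooth hsm
  have hle : ∀ θ, deriv φ θ ≤ M := by
    intro θ
    obtain ⟨y, hy, he⟩ := Function.Periodic.exists_mem_Ico₀ (f := deriv φ) (c := 2 * Real.pi)
      hper (by positivity) θ
    rw [he, hM]
    exact le_csSup (isCompact_Icc.bddAbove_image hdsm.continuous.continuousOn)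
      ⟨y, Set.Ico_subset_Icc_self hy, rfl⟩
  have hM0 : 0 < M := (hpos 0).trans_le (hle 0)
  have hge : ∀ θ, M⁻¹ ≤ deriv φ θ := by
    intro θ
    rw [hφ.deriv_eq]
    refine inv_anti₀ (circNormSq_pos g θ) (normSq_le_of_forall_normSq_ge (det_entries g) ?_ θ)
    intro η
    have := hle η
    rw [hφ.deriv_eq] at this
    exact (inv_le_iff_one_le_mul₀ (circNormSq_pos g η)).1 this
  set T : Set ℝ := Set.Icc 0 1 ∩ {t | 1.1 * M * (1 - t) ≤ t ∨ t ≤ 0.9 * M⁻¹ * (1 - t)} with hTdef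
  have hT : IsCompact T := by
    refine isCompact_Icc.inter_right ?_
    rw [Set.ofPred_or]
    refine (isClosed_le ?_ ?_).union (isClosed_le ?_ ?_) <;> fun_prop
  have hD : ∀ t ∈ T, ∀ θ, phaseSpeed φ (t, θ) ≠ 0 := by
    rintro t ⟨⟨h0, h1⟩, h⟩ θ
    have hMM : M * M⁻¹ = 1 := mul_inv_cancel₀ hM0.ne'
    have hMi : 0 < M⁻¹ := inv_pos.2 hM0
    simp only [phaseSpeed]
    rcases h with h | h
    · have h2 : t * M⁻¹ ≤ t * deriv φ θ := mul_le_mul_of_nonneg_left (hge θ) h0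
      have h3 : 1.1 * (1 - t) ≤ t * M⁻¹ := by
        have := mul_le_mul_of_nonneg_right h hMi.le
        calc 1.1 * (1 - t) = 1.1 * M * (1 - t) * M⁻¹ := by linear_combination -1.1 * (1 - t) * hMM
          _ ≤ _ := this
      rcases h1.lt_or_eq with h1 | rfl
      · have : 0 < t * deriv φ θ - (1 - t) := by linarith
        exact this.ne'
      · simpa using (hpos θ).ne'
    · have h2 : t * deriv φ θ ≤ t * M := mul_le_mul_of_nonneg_left (hle θ) h0
      have h3 : t * M ≤ 0.9 * (1 - t) := by
        have := mul_le_mul_of_nonneg_right h hM0.le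
        calc t * M ≤ 0.9 * M⁻¹ * (1 - t) * M := this
          _ = _ := by linear_combination 0.9 * (1 - t) * hMM
      rcases h1.lt_or_eq with h1 | rfl
      · have : t * deriv φ θ - (1 - t) < 0 := by linarith
        exact this.ne
      · norm_num at h
  -- The amplitude `φ' ^ ((λ - 1) / 2)`, as a function of `(t, θ)` that does not depend on `t`.
  let F : ℝ × ℝ → ℂ := fun p => ((deriv φ p.2 : ℝ) : ℂ) ^ ((lam - 1) / 2)
  have hF : ContDiff ℝ (⊤ : ℕ∞) F := by
    have e : F = fun p => Complex.exp (((Real.log (deriv φ p.2) : ℝ) : ℂ) * ((lam - 1) / 2)) := by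
      funext p
      have : ((deriv φ p.2 : ℝ) : ℂ) ≠ 0 := by exact_mod_cast (hpos p.2).ne'
      simp only [F]
      rw [Complex.cpow_def_of_ne_zero this, Complex.ofReal_log (hpos p.2).le]
    rw [e]
    have hlog : ContDiff ℝ (⊤ : ℕ∞) fun p : ℝ × ℝ => Real.log (deriv φ p.2) :=
      (hdsm.comp contDiff_snd).log fun p => (hpos p.2).ne'
    exact ((Complex.ofRealCLM.contDiff.comp hlog).mul contDiff_const).cexp
  obtain ⟨C, hC, hb⟩ := exists_bound_of_phaseSpeed_ne_zero hsm hper hφ.exp_phase_two_pi hT hD P F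
    hF.contDiffOn (fun p => by simp [F, hper])
  refine ⟨C, hC, fun n k hn hk hkn => ?_⟩
  have hn' : (1 : ℝ) ≤ n := by exact_mod_cast hn
  have hk' : (1 : ℝ) ≤ k := by exact_mod_cast hk
  have hN : 0 < (k : ℝ) + n := by linarith
  rw [_root_.zpow_neg, zpow_natCast]
  refine hb n k hN ⟨⟨by positivity, (div_le_one hN).2 (by linarith)⟩, ?_⟩
  have e : 1 - (k : ℝ) / (k + n) = n / (k + n) := by field_simp; ring
  simp only [Set.mem_ofPred_eq]
  rw [e, ← mul_div_assoc, ← mul_div_assoc, div_le_div_iff_of_pos_right hN,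
    div_le_div_iff_of_pos_right hN]
  exact hkn
end

section
/- Fix λ ∈ ℂ with Re λ = 0, fix g ∈ SL(2,ℝ) with g ∉ SO(2), and let φ be a lift of the circle map of g, M = max_{θ∈[0,2π]} φ'(θ) (so M > 1). There exists a constant C > 0 such that for all integers n ≥ 1 and k with 1.1·M⁻¹·n ≤ k ≤ 0.9·M·n, the oscillatory integral satisfies |I(k,n)| ≤ C·n^{−1/2}. -/
/-!
Put `q(θ) = ‖g·v(θ)‖²`, so that `φ' = 1/q` and the phase of `I(k,n)` has derivative
`-n (q - κ)/q` with `κ = k/n`. Moreover `q` is a trigonometric polynomial of degree `2` with range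
`[M⁻¹, M]` and `q'² = 4 (M - q)(q - M⁻¹)`. The hypothesis on `k` keeps `κ` well inside this range,
hence `q'² + (q - κ)² ≥ c > 0` uniformly in `κ`: all stationary points are nondegenerate.

In place of cutting out neighbourhoods of the stationary points, one takes `δ = n^{-1/2}` and
splits the amplitude as `1 = δ²/((q-κ)²+δ²) + (q-κ)²/((q-κ)²+δ²)`. The second part
is integrated by parts, which produces boundary terms of size `1/(nδ) = δ` and an integral bounded
by `n⁻¹ ∫ ((q-κ)²+δ²)⁻¹` (`norm_integral_le_of_nondegenerate`). Everything thus reduces to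
`∫ ((q-κ)²+δ²)⁻¹ = O(1/δ)` (`integral_lorentz_le`).
-/

open Matrix

/-! ### Stationary phase with nondegenerate critical points -/

/-- Since `c ≤ q'² + (q - κ)²`, the Lorentzian `1/((q-κ)²+δ²)` is dominated by
`q'²/((q-κ)²+δ²)` up to a bounded term, and the latter is
`q' · (arctan ((q-κ)/δ))' / δ`, whose integral is `O(1/δ)` by parts. -/
lemma integral_lorentz_le {q q1 q2 : ℝ → ℝ} {K c T κ δ : ℝ} (hT : 0 ≤ T)
    (hq : ∀ θ, HasDerivAt q (q1 θ) θ) (hq1 : ∀ θ, HasDerivAt q1 (q2 θ) θ)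
    (hq2 : Continuous q2) (hc : 0 < c) (hδ : 0 < δ) (hδ1 : δ ≤ 1)
    (hK1 : ∀ θ ∈ Set.Icc 0 T, |q1 θ| ≤ K) (hK2 : ∀ θ ∈ Set.Icc 0 T, |q2 θ| ≤ K)
    (hnd : ∀ θ ∈ Set.Icc 0 T, c ≤ q1 θ ^ 2 + (q θ - κ) ^ 2) :
    ∫ θ in (0 : ℝ)..T, 1 / ((q θ - κ) ^ 2 + δ ^ 2) ≤ (K * (4 + 2 * T) + T) / c / δ := by
  have hqc : Continuous q := continuous_iff_continuousAt.2 fun θ => (hq θ).continuousAt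
  have hq1c : Continuous q1 := continuous_iff_continuousAt.2 fun θ => (hq1 θ).continuousAt
  have hpos : ∀ θ, 0 < (q θ - κ) ^ 2 + δ ^ 2 := fun θ => by positivity
  have hat : ∀ x : ℝ, |Real.arctan x| ≤ 2 := fun x => by
    have h1 := Real.arctan_lt_pi_div_two x
    have h2 := Real.neg_pi_div_two_lt_arctan x
    have h3 := Real.pi_lt_four
    rw [abs_le]; constructor <;> linarith
  set G : ℝ → ℝ := fun θ => q1 θ * Real.arctan ((q θ - κ) / δ) with hG
  set G' : ℝ → ℝ := fun θ => q2 θ * Real.arctan ((q θ - κ) / δ)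
    + δ * (q1 θ ^ 2 / ((q θ - κ) ^ 2 + δ ^ 2)) with hG'
  have hGd : ∀ θ, HasDerivAt G (G' θ) θ := fun θ => by
    have h := (hq1 θ).mul ((((hq θ).sub_const κ).div_const δ).arctan)
    refine h.congr_deriv ?_
    have := (hpos θ).ne'
    have h' : 1 + ((q θ - κ) / δ) ^ 2 = ((q θ - κ) ^ 2 + δ ^ 2) / δ ^ 2 := by
      field_simp; ring
    simp only [hG', h']
    field_simp
  have hG'c : Continuous G' := by
    have : ∀ θ, (q θ - κ) ^ 2 + δ ^ 2 ≠ 0 := fun θ => (hpos θ).ne'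
    have hA : Continuous fun θ => Real.arctan ((q θ - κ) / δ) :=
      Real.continuous_arctan.comp (by fun_prop)
    exact (hq2.mul hA).add (continuous_const.mul ((hq1c.pow 2).div (by fun_prop) this))
  have hb : ∀ θ ∈ Set.Icc 0 T, |G θ| ≤ K * 2 := fun θ hθ => by
    rw [hG]; simp only [abs_mul]
    exact mul_le_mul (hK1 θ hθ) (hat _) (abs_nonneg _) ((abs_nonneg _).trans (hK1 θ hθ))
  have hFTC : ∫ θ in (0 : ℝ)..T, G' θ = G T - G 0 :=
    intervalIntegral.integral_eq_sub_of_hasDerivAt (fun θ _ => hGd θ)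
      (hG'c.intervalIntegrable _ _)
  have hpt : ∀ θ ∈ Set.Icc 0 T, 1 / ((q θ - κ) ^ 2 + δ ^ 2)
      ≤ (G' θ + (2 * K + 1)) / c / δ := fun θ hθ => by
    have h1 : -(q2 θ * Real.arctan ((q θ - κ) / δ)) ≤ K * 2 := by
      refine (neg_le_abs _).trans ?_
      rw [abs_mul]
      exact mul_le_mul (hK2 θ hθ) (hat _) (abs_nonneg _) ((abs_nonneg _).trans (hK2 θ hθ))
    have h2 : δ * (c / ((q θ - κ) ^ 2 + δ ^ 2))
        ≤ δ * (q1 θ ^ 2 / ((q θ - κ) ^ 2 + δ ^ 2)) + 1 := by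
      have h3 : c / ((q θ - κ) ^ 2 + δ ^ 2) ≤ q1 θ ^ 2 / ((q θ - κ) ^ 2 + δ ^ 2) + 1 := by
        rw [div_add_one (hpos θ).ne']
        gcongr
        nlinarith [hnd θ hθ, sq_nonneg δ]
      nlinarith
    rw [le_div_iff₀ hδ, le_div_iff₀ hc]
    calc 1 / ((q θ - κ) ^ 2 + δ ^ 2) * δ * c = δ * (c / ((q θ - κ) ^ 2 + δ ^ 2)) := by ring
      _ ≤ _ := by simp only [hG']; linarith
  have hLc : Continuous fun θ => 1 / ((q θ - κ) ^ 2 + δ ^ 2) :=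
    continuous_const.div (by fun_prop) fun θ => (hpos θ).ne'
  have hRc : Continuous fun θ => (G' θ + (2 * K + 1)) / c / δ := by fun_prop
  refine (intervalIntegral.integral_mono_on hT (hLc.intervalIntegrable _ _)
    (hRc.intervalIntegrable _ _) hpt).trans ?_
  rw [intervalIntegral.integral_div, intervalIntegral.integral_div,
    intervalIntegral.integral_add (hG'c.intervalIntegrable _ _) (by simp), hFTC]
  simp only [intervalIntegral.integral_const, smul_eq_mul, sub_zero]
  have h0 := abs_le.1 (hb 0 ⟨le_rfl, hT⟩)
  have h1 := abs_le.1 (hb T ⟨hT, le_rfl⟩)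
  have h2 : G T - G 0 + T * (2 * K + 1) ≤ K * (4 + 2 * T) + T := by linarith
  gcongr

/-- A stationary phase bound: the phase of `E` has derivative `-n (q - κ)/q`, whose zeros are
nondegenerate since `c ≤ q'² + (q - κ)²`. With `δ = n^{-1/2}`, the part
`a (q-κ)²/((q-κ)²+δ²)` of the amplitude vanishes on the stationary set and is integrated by
parts; both the remaining part and the derivative produced are controlled by
`integral_lorentz_le`. -/
lemma norm_integral_le_of_nondegenerate {q q1 q2 : ℝ → ℝ} {b b1 a E : ℝ → ℂ} {K c T κ δ n : ℝ}
    (hT : 0 ≤ T) (hK : 0 ≤ K)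
    (hq : ∀ θ, HasDerivAt q (q1 θ) θ) (hq1 : ∀ θ, HasDerivAt q1 (q2 θ) θ)
    (hq2 : Continuous q2) (hc : 0 < c) (hδ : 0 < δ) (hδ1 : δ ≤ 1) (hn : δ ^ 2 * n = 1)
    (hK1 : ∀ θ ∈ Set.Icc 0 T, |q1 θ| ≤ K) (hK2 : ∀ θ ∈ Set.Icc 0 T, |q2 θ| ≤ K)
    (hnd : ∀ θ ∈ Set.Icc 0 T, c ≤ q1 θ ^ 2 + (q θ - κ) ^ 2)
    (hq0 : ∀ θ, q θ ≠ 0)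
    (hb : ∀ θ, HasDerivAt b (b1 θ) θ) (hb1 : Continuous b1) (hab : ∀ θ, a θ * q θ = b θ)
    (hE : ∀ θ, HasDerivAt E (-Complex.I * n * ((q θ - κ) / q θ : ℝ) * E θ) θ)
    (hEn : ∀ θ, ‖E θ‖ ≤ 1)
    (hKa : ∀ θ ∈ Set.Icc 0 T, ‖a θ‖ ≤ K) (hKb : ∀ θ ∈ Set.Icc 0 T, ‖b θ‖ ≤ K)
    (hKb1 : ∀ θ ∈ Set.Icc 0 T, ‖b1 θ‖ ≤ K) :
    ‖∫ θ in (0 : ℝ)..T, a θ * E θ‖ ≤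
      ((K + K ^ 2) * ((K * (4 + 2 * T) + T) / c) + K * T + 2 * K) * δ := by
  have hJ := integral_lorentz_le hT hq hq1 hq2 hc hδ hδ1 hK1 hK2 hnd
  have hqc : Continuous q := continuous_iff_continuousAt.2 fun θ => (hq θ).continuousAt
  have hq1c : Continuous q1 := continuous_iff_continuousAt.2 fun θ => (hq1 θ).continuousAt
  have hbc : Continuous b := continuous_iff_continuousAt.2 fun θ => (hb θ).continuousAt
  have hEc : Continuous E := continuous_iff_continuousAt.2 fun θ => (hE θ).continuousAt
  have hpos : ∀ θ, 0 < (q θ - κ) ^ 2 + δ ^ 2 := fun θ => by positivity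
  have hpos' : ∀ θ, (q θ - κ) ^ 2 + δ ^ 2 ≠ 0 := fun θ => (hpos θ).ne'
  set w : ℝ → ℝ := fun θ => (q θ - κ) / ((q θ - κ) ^ 2 + δ ^ 2) with hw
  set w' : ℝ → ℝ := fun θ => q1 θ * (δ ^ 2 - (q θ - κ) ^ 2) / ((q θ - κ) ^ 2 + δ ^ 2) ^ 2
    with hw'
  have hwd : ∀ θ, HasDerivAt w (w' θ) θ := fun θ => by
    have h1 := (hq θ).sub_const κ
    refine (h1.div ((h1.pow 2).add_const (δ ^ 2)) (hpos' θ)).congr_deriv ?_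
    simp only [hw', Pi.pow_apply]
    congr 1
    push_cast
    ring
  have hwc : Continuous w := continuous_iff_continuousAt.2 fun θ => (hwd θ).continuousAt
  have hw'c : Continuous w' :=
    (by fun_prop : Continuous fun θ => q1 θ * (δ ^ 2 - (q θ - κ) ^ 2)).div (by fun_prop)
      fun θ => pow_ne_zero 2 (hpos' θ)
  have hwb : ∀ θ, |w θ| ≤ 1 / δ := fun θ => by
    rw [hw]; simp only [abs_div, abs_of_pos (hpos θ)]
    rw [div_le_div_iff₀ (hpos θ) hδ]
    nlinarith [sq_abs (q θ - κ), sq_nonneg (|q θ - κ| - δ), abs_nonneg (q θ - κ)]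
  have hw'b : ∀ θ ∈ Set.Icc 0 T, |w' θ| ≤ K * (1 / ((q θ - κ) ^ 2 + δ ^ 2)) := fun θ hθ => by
    have h1 : |δ ^ 2 - (q θ - κ) ^ 2| ≤ (q θ - κ) ^ 2 + δ ^ 2 := by
      rw [abs_le]; constructor <;> nlinarith [sq_nonneg δ, sq_nonneg (q θ - κ)]
    rw [hw']
    simp only [abs_div, abs_mul, abs_pow, abs_of_pos (hpos θ)]
    calc _ ≤ K * ((q θ - κ) ^ 2 + δ ^ 2) / ((q θ - κ) ^ 2 + δ ^ 2) ^ 2 := by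
          gcongr
          exact hK1 θ hθ
      _ = _ := by have := hpos' θ; field_simp
  set F : ℝ → ℂ := fun θ => b θ * (w θ : ℂ) with hF
  set F' : ℝ → ℂ := fun θ => b1 θ * (w θ : ℂ) + b θ * (w' θ : ℂ) with hF'
  have hFd : ∀ θ, HasDerivAt F (F' θ) θ := fun θ => (hb θ).mul (hwd θ).ofReal_comp
  have hF'c : Continuous F' := by fun_prop
  have hFc : Continuous F := by fun_prop
  set H : ℝ → ℂ := fun θ => F' θ * E θ
    + F θ * (-Complex.I * n * ((q θ - κ) / q θ : ℝ) * E θ) with hH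
  have hHc : Continuous H := by
    have : Continuous fun θ => (q θ - κ) / q θ := (by fun_prop : Continuous _).div hqc hq0
    fun_prop
  have hFTC : ∫ θ in (0 : ℝ)..T, H θ = F T * E T - F 0 * E 0 :=
    intervalIntegral.integral_eq_sub_of_hasDerivAt (f := fun θ => F θ * E θ)
      (fun θ _ => (hFd θ).mul (hE θ)) (hHc.intervalIntegrable _ _)
  have hac : Continuous a := by
    have : a = fun θ => b θ / (q θ : ℂ) := by
      funext θ
      rw [← hab, mul_div_cancel_right₀ _ (by exact_mod_cast hq0 θ)]
    rw [this]
    exact hbc.div (by fun_prop) fun θ => by exact_mod_cast hq0 θ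
  set R : ℝ → ℂ := fun θ => a θ * (δ ^ 2 * (1 / ((q θ - κ) ^ 2 + δ ^ 2)) : ℝ) * E θ
    - Complex.I * (δ ^ 2 : ℝ) * (F' θ * E θ) with hR
  have hLc : Continuous fun θ => 1 / ((q θ - κ) ^ 2 + δ ^ 2) :=
    continuous_const.div (by fun_prop) hpos'
  have hRc : Continuous R := by fun_prop
  have hdecomp : ∀ θ, a θ * E θ = R θ + Complex.I * (δ ^ 2 : ℝ) * H θ := fun θ => by
    have hqc : (q θ : ℂ) ≠ 0 := by exact_mod_cast hq0 θ
    have hpc : ((q θ : ℂ) - κ) ^ 2 + (δ : ℂ) ^ 2 ≠ 0 := by exact_mod_cast hpos' θ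
    have hnc : (δ : ℂ) ^ 2 * n = 1 := by exact_mod_cast hn
    simp only [hR, hH, hF, hw, ← hab]
    push_cast
    have h : Complex.I * (δ : ℂ) ^ 2 * (a θ * q θ * ((q θ - κ) / ((q θ - κ) ^ 2 + (δ : ℂ) ^ 2))
          * (-Complex.I * n * ((q θ - κ) / q θ) * E θ))
        = a θ * ((q θ - κ) ^ 2 / ((q θ - κ) ^ 2 + (δ : ℂ) ^ 2)) * E θ := by
      calc _ = -(Complex.I ^ 2) * ((δ : ℂ) ^ 2 * n) * (q θ / q θ) *
            (a θ * ((q θ - κ) ^ 2 / ((q θ - κ) ^ 2 + (δ : ℂ) ^ 2)) * E θ) := by ring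
        _ = _ := by rw [hnc, div_self hqc, Complex.I_sq]; ring
    rw [mul_add, h]
    field_simp
    ring
  have hRb : ∀ θ ∈ Set.Icc 0 T, ‖R θ‖ ≤
      δ ^ 2 * ((K + K ^ 2) * (1 / ((q θ - κ) ^ 2 + δ ^ 2)) + K / δ) := fun θ hθ => by
    have hl : 0 < 1 / ((q θ - κ) ^ 2 + δ ^ 2) := one_div_pos.2 (hpos θ)
    have h1 : ‖F' θ‖ ≤ K * (1 / δ) + K * (K * (1 / ((q θ - κ) ^ 2 + δ ^ 2))) := by
      refine (norm_add_le _ _).trans ?_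
      rw [norm_mul, norm_mul, Complex.norm_real, Complex.norm_real]
      gcongr
      · exact hKb1 θ hθ
      · exact hwb θ
      · exact hKb θ hθ
      · exact hw'b θ hθ
    refine (norm_sub_le _ _).trans ?_
    simp only [norm_mul, Complex.norm_I, Complex.norm_real, Real.norm_eq_abs, one_mul,
      abs_of_pos hl, abs_of_pos (pow_pos hδ 2)]
    calc _ ≤ K * (δ ^ 2 * (1 / ((q θ - κ) ^ 2 + δ ^ 2))) * 1 + δ ^ 2 *
          ((K * (1 / δ) + K * (K * (1 / ((q θ - κ) ^ 2 + δ ^ 2)))) * 1) := by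
          gcongr
          · exact hKa θ hθ
          · exact hEn θ
          · exact hEn θ
      _ = _ := by ring
  have hbd : ∀ θ ∈ Set.Icc 0 T, ‖F θ * E θ‖ ≤ K * (1 / δ) := fun θ hθ => by
    rw [norm_mul, norm_mul, Complex.norm_real]
    calc _ ≤ K * (1 / δ) * 1 := by
          gcongr
          · exact hKb θ hθ
          · exact hwb θ
          · exact hEn θ
      _ = _ := mul_one _
  have hBc : Continuous fun θ =>
      δ ^ 2 * ((K + K ^ 2) * (1 / ((q θ - κ) ^ 2 + δ ^ 2)) + K / δ) := by fun_prop
  have hRint : ‖∫ θ in (0 : ℝ)..T, R θ‖ ≤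
      δ ^ 2 * ((K + K ^ 2) * ((K * (4 + 2 * T) + T) / c / δ) + T * (K / δ)) := by
    refine (intervalIntegral.norm_integral_le_of_norm_le hT
      (Filter.Eventually.of_forall fun θ hθ => hRb θ ⟨hθ.1.le, hθ.2⟩)
      (hBc.intervalIntegrable _ _)).trans ?_
    rw [intervalIntegral.integral_const_mul, intervalIntegral.integral_add
      ((hLc.const_mul (K + K ^ 2)).intervalIntegrable _ _) (by simp),
      intervalIntegral.integral_const_mul]
    simp only [intervalIntegral.integral_const, smul_eq_mul, sub_zero]
    gcongr
  have hsplit : ∫ θ in (0 : ℝ)..T, a θ * E θ =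
      (∫ θ in (0 : ℝ)..T, R θ) + Complex.I * (δ ^ 2 : ℝ) * (F T * E T - F 0 * E 0) := by
    simp_rw [hdecomp]
    rw [intervalIntegral.integral_add (hRc.intervalIntegrable _ _)
      ((hHc.const_mul (Complex.I * (δ ^ 2 : ℝ))).intervalIntegrable _ _),
      intervalIntegral.integral_const_mul, hFTC]
  rw [hsplit]
  refine (norm_add_le _ _).trans ?_
  have h2 : ‖Complex.I * (δ ^ 2 : ℝ) * (F T * E T - F 0 * E 0)‖ ≤ δ ^ 2 * (2 * (K * (1 / δ))) := by
    rw [norm_mul, norm_mul, Complex.norm_I, one_mul, Complex.norm_real, Real.norm_eq_abs,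
      abs_of_pos (pow_pos hδ 2)]
    gcongr
    have := norm_sub_le (F T * E T) (F 0 * E 0)
    have h0 := hbd 0 ⟨le_rfl, hT⟩
    have h1 := hbd T ⟨hT, le_rfl⟩
    linarith
  refine (add_le_add hRint h2).trans (le_of_eq ?_)
  field_simp


/-! ### The circle map of `g` and its lift -/

/-- The squared norm `‖g·v(θ)‖²` is `A + B cos 2θ + D sin 2θ`, with `A² - B² - D² = (det g)² = 1`,
and the lift satisfies `φ' = ‖g·v‖⁻²`. -/
lemma IsLift.exists_hasDerivAt {g : Matrix.SpecialLinearGroup (Fin 2) ℝ} {φ : ℝ → ℝ}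
    (hφ : IsLift g φ) : ∃ A B D : ℝ, A ^ 2 - B ^ 2 - D ^ 2 = 1 ∧
      ∀ θ, 0 < A + B * Real.cos (2 * θ) + D * Real.sin (2 * θ) ∧
        HasDerivAt φ (1 / (A + B * Real.cos (2 * θ) + D * Real.sin (2 * θ))) θ := by
  obtain ⟨hs, hl⟩ := hφ
  set a := g.1 0 0 with ha
  set b := g.1 0 1 with hb
  set c := g.1 1 0 with hc
  set d := g.1 1 1 with hd
  have hdet : a * d - b * c = 1 := by
    have := g.2
    rw [Matrix.det_fin_two] at this
    exact this
  set X : ℝ → ℝ := fun θ => a * Real.cos θ + b * Real.sin θ with hX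
  set Y : ℝ → ℝ := fun θ => c * Real.cos θ + d * Real.sin θ with hY
  have hXY : ∀ θ, X θ = Real.sqrt (X θ ^ 2 + Y θ ^ 2) * Real.cos (φ θ) ∧
      Y θ = Real.sqrt (X θ ^ 2 + Y θ ^ 2) * Real.sin (φ θ) := fun θ => by
    have h0 := congrFun (hl θ) 0
    have h1 := congrFun (hl θ) 1
    simp only [enorm2, vCirc, Matrix.mulVec, dotProduct, Fin.sum_univ_two, Pi.smul_apply,
      smul_eq_mul, Matrix.cons_val_zero, Matrix.cons_val_one] at h0 h1
    exact ⟨h0, h1⟩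
  have hX' : ∀ θ, HasDerivAt X (-a * Real.sin θ + b * Real.cos θ) θ := fun θ =>
    (((Real.hasDerivAt_cos θ).const_mul a).add ((Real.hasDerivAt_sin θ).const_mul b)).congr_deriv
      (by ring)
  have hY' : ∀ θ, HasDerivAt Y (-c * Real.sin θ + d * Real.cos θ) θ := fun θ =>
    (((Real.hasDerivAt_cos θ).const_mul c).add ((Real.hasDerivAt_sin θ).const_mul d)).congr_deriv
      (by ring)
  have hφd : ∀ θ, HasDerivAt φ (deriv φ θ) θ := fun θ =>
    ((hs.differentiable (by simp)) θ).hasDerivAt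
  -- Differentiating `X sin φ = Y cos φ` and multiplying by `√(X² + Y²)`.
  have key : ∀ θ, deriv φ θ * (X θ ^ 2 + Y θ ^ 2) = 1 := fun θ => by
    have h1 := (hX' θ).mul (hφd θ).sin
    have h2 := (hY' θ).mul (hφd θ).cos
    have he : (fun θ => X θ * Real.sin (φ θ)) = fun θ => Y θ * Real.cos (φ θ) := by
      funext t
      obtain ⟨h3, h4⟩ := hXY t
      linear_combination Real.sin (φ t) * h3 - Real.cos (φ t) * h4
    have h3 := h1.unique (h2.congr_of_eventuallyEq (Filter.Eventually.of_forall (congrFun he)))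
    have h5 := Real.sin_sq_add_cos_sq θ
    obtain ⟨hx, hy⟩ := hXY θ
    set s := Real.sqrt (X θ ^ 2 + Y θ ^ 2)
    have h6 : deriv φ θ * (X θ * (s * Real.cos (φ θ)) + Y θ * (s * Real.sin (φ θ))) =
        (-c * Real.sin θ + d * Real.cos θ) * (s * Real.cos (φ θ)) -
        (-a * Real.sin θ + b * Real.cos θ) * (s * Real.sin (φ θ)) := by
      linear_combination s * h3
    rw [← hx, ← hy] at h6
    simp only [hX, hY] at h6 ⊢
    linear_combination h6 + (a * d - b * c) * h5 + hdet
  have hq : ∀ θ, (a ^ 2 + b ^ 2 + c ^ 2 + d ^ 2) / 2 +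
      (a ^ 2 + c ^ 2 - b ^ 2 - d ^ 2) / 2 * Real.cos (2 * θ) + (a * b + c * d) * Real.sin (2 * θ)
      = X θ ^ 2 + Y θ ^ 2 := fun θ => by
    rw [Real.cos_two_mul, Real.sin_two_mul]
    simp only [hX, hY]
    linear_combination (-(b ^ 2 + d ^ 2)) * Real.sin_sq_add_cos_sq θ
  refine ⟨(a ^ 2 + b ^ 2 + c ^ 2 + d ^ 2) / 2, (a ^ 2 + c ^ 2 - b ^ 2 - d ^ 2) / 2,
    a * b + c * d, by linear_combination (a * d - b * c + 1) * hdet, fun θ => ?_⟩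
  rw [hq]
  have hne : X θ ^ 2 + Y θ ^ 2 ≠ 0 := right_ne_zero_of_mul (by rw [key θ]; exact one_ne_zero)
  refine ⟨lt_of_le_of_ne (by positivity) hne.symm, ?_⟩
  rw [← eq_div_of_mul_eq hne (key θ)]
  exact hφd θ

/-- The maximum `M` of `φ'` is `1/q(θ₀)` at a critical point `θ₀` of `q = ‖g·v‖²`; there
`q² - 2Aq + 1 = 0`, so the roots of this quadratic are `M` and `M⁻¹` and
`q'² = -4(q² - 2Aq + 1)` factors. -/
lemma sq_deriv_eq_of_sSup {A B D M : ℝ} {φ : ℝ → ℝ} (hABD : A ^ 2 - B ^ 2 - D ^ 2 = 1)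
    (hφ : ∀ θ, 0 < A + B * Real.cos (2 * θ) + D * Real.sin (2 * θ) ∧
        HasDerivAt φ (1 / (A + B * Real.cos (2 * θ) + D * Real.sin (2 * θ))) θ)
    (hM : M = sSup (deriv φ '' Set.Icc (0 : ℝ) (2 * Real.pi))) :
    0 < M ∧ ∀ θ, (2 * (D * Real.cos (2 * θ) - B * Real.sin (2 * θ))) ^ 2 =
      4 * (M - (A + B * Real.cos (2 * θ) + D * Real.sin (2 * θ))) *
        (A + B * Real.cos (2 * θ) + D * Real.sin (2 * θ) - M⁻¹) := by
  set q : ℝ → ℝ := fun θ => A + B * Real.cos (2 * θ) + D * Real.sin (2 * θ) with hq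
  have hd : ∀ θ, deriv φ θ = 1 / q θ := fun θ => (hφ θ).2.deriv
  have hquad : ∀ θ, (2 * (D * Real.cos (2 * θ) - B * Real.sin (2 * θ))) ^ 2 =
      4 * (2 * A * q θ - q θ ^ 2 - 1) := fun θ => by
    simp only [hq]
    linear_combination 4 * (B ^ 2 + D ^ 2) * Real.sin_sq_add_cos_sq (2 * θ) - 4 * hABD
  have hq' : ∀ θ, HasDerivAt q (2 * (D * Real.cos (2 * θ) - B * Real.sin (2 * θ))) θ := fun θ => by
    have h2 : HasDerivAt (fun θ : ℝ => 2 * θ) 2 θ := by simpa using (hasDerivAt_id θ).const_mul 2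
    exact (((h2.cos.const_mul B).const_add A).add (h2.sin.const_mul D)).congr_deriv (by ring)
  have hqc : Continuous q := continuous_iff_continuousAt.2 fun θ => (hq' θ).continuousAt
  have hdc : Continuous (deriv φ) := by
    rw [funext hd]
    exact continuous_const.div hqc fun θ => (hφ θ).1.ne'
  obtain ⟨t, ht, htM, htmax⟩ := isCompact_Icc.exists_sSup_image_eq_and_ge
    (Set.nonempty_Icc.2 Real.two_pi_pos.le) hdc.continuousOn
  have hper : Function.Periodic q (2 * Real.pi) := fun θ => by
    simp only [hq]
    rw [show 2 * (θ + 2 * Real.pi) = 2 * θ + 2 * Real.pi + 2 * Real.pi by ring]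
    simp
  have hmin : ∀ θ, q t ≤ q θ := fun θ => by
    obtain ⟨y, hy, hyθ⟩ := hper.exists_mem_Ico₀ Real.two_pi_pos θ
    have h := htmax y ⟨hy.1, hy.2.le⟩
    rw [hd, hd] at h
    rw [hyθ]
    exact (one_div_le_one_div (hφ y).1 (hφ t).1).1 h
  have hcrit := IsLocalMin.hasDerivAt_eq_zero (Filter.Eventually.of_forall hmin) (hq' t)
  have hMt : M = 1 / q t := by rw [hM, htM, hd]
  have hqt : 0 < q t := (hφ t).1
  have h0 := hquad t
  rw [hcrit] at h0
  refine ⟨by rw [hMt]; exact one_div_pos.2 hqt, fun θ => ?_⟩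
  rw [hquad θ, hMt]
  have hA : 2 * A = q t + 1 / q t := by
    field_simp
    linarith
  rw [hA]
  change _ = 4 * (1 / q t - q θ) * (q θ - (1 / q t)⁻¹)
  field_simp
  ring

/-- For `κ` strictly inside the range `[M⁻¹, M]` of `q`, in the quantitative sense below, the
critical points of the phase are uniformly nondegenerate: `x = q` close to `κ` keeps both
factors of `q'² = 4 (M - x)(x - M⁻¹)` away from zero. -/
lemma nondegenerate_of_mem {M κ x y : ℝ} (hM : 0 < M) (h1 : 1.1 * M⁻¹ ≤ κ) (h2 : κ ≤ 0.9 * M)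
    (hy : y ^ 2 = 4 * (M - x) * (x - M⁻¹)) : min 0.01 ((0.05 * M⁻¹) ^ 2) ≤ y ^ 2 + (x - κ) ^ 2 := by
  have hi : 0 < M⁻¹ := inv_pos.2 hM
  have hm : M⁻¹ * M = 1 := inv_mul_cancel₀ hM.ne'
  rcases le_total (0.05 * M⁻¹) |x - κ| with h | h
  · refine (min_le_right _ _).trans ?_
    have := pow_le_pow_left₀ (by positivity) h 2
    rw [sq_abs] at this
    nlinarith [sq_nonneg y]
  · refine (min_le_left _ _).trans ?_
    obtain ⟨h3, h4⟩ := abs_le.1 h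
    have h5 : 0.05 * M⁻¹ ≤ x - M⁻¹ := by linarith
    have h6 : 0.05 * M ≤ M - x := by linarith
    have h7 := mul_le_mul h6 h5 (by positivity) (by linarith [mul_pos (by norm_num : (0:ℝ) < 0.05) hM])
    nlinarith [sq_nonneg (x - κ)]

/-! ### The bound -/

theorem oscI_regular_bound (lam : ℂ) (hlam : lam.re = 0)
    (g : Matrix.SpecialLinearGroup (Fin 2) ℝ)
    (hg : (g : Matrix (Fin 2) (Fin 2) ℝ)ᵀ * (g : Matrix (Fin 2) (Fin 2) ℝ) ≠ 1)
    (φ : ℝ → ℝ) (hφ : IsLift g φ)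
    (M : ℝ) (hM : M = sSup (deriv φ '' Set.Icc (0 : ℝ) (2 * Real.pi))) :
    ∃ C : ℝ, 0 < C ∧ ∀ n k : ℤ, 1 ≤ n →
      (1.1 : ℝ) * M⁻¹ * n ≤ k → (k : ℝ) ≤ (0.9 : ℝ) * M * n →
      ‖oscI φ lam k n‖ ≤ C * (n : ℝ) ^ (-(1 : ℝ) / 2) := by
  obtain ⟨A, B, D, hABD, hφd⟩ := hφ.exists_hasDerivAt
  obtain ⟨hM0, hsq⟩ := sq_deriv_eq_of_sSup hABD hφd hM
  set q : ℝ → ℝ := fun θ => A + B * Real.cos (2 * θ) + D * Real.sin (2 * θ) with hq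
  set q1 : ℝ → ℝ := fun θ => 2 * (D * Real.cos (2 * θ) - B * Real.sin (2 * θ)) with hq1
  set q2 : ℝ → ℝ := fun θ => -4 * (D * Real.sin (2 * θ) + B * Real.cos (2 * θ)) with hq2
  have hqpos : ∀ θ, 0 < q θ := fun θ => (hφd θ).1
  have hφq : ∀ θ, HasDerivAt φ (1 / q θ) θ := fun θ => (hφd θ).2
  have hdq : deriv φ = fun θ => 1 / q θ := funext fun θ => (hφq θ).deriv
  have h2 : ∀ θ, HasDerivAt (fun θ : ℝ => 2 * θ) 2 θ := fun θ => by
    simpa using (hasDerivAt_id θ).const_mul (2 : ℝ)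
  have hqd : ∀ θ, HasDerivAt q (q1 θ) θ := fun θ =>
    ((((h2 θ).cos.const_mul B).const_add A).add ((h2 θ).sin.const_mul D)).congr_deriv
      (by simp only [hq1]; ring)
  have hq1d : ∀ θ, HasDerivAt q1 (q2 θ) θ := fun θ =>
    ((((h2 θ).cos.const_mul D).sub ((h2 θ).sin.const_mul B)).const_mul 2).congr_deriv
      (by simp only [hq2]; ring)
  have hq1c : Continuous q1 := by fun_prop
  have hq2c : Continuous q2 := by fun_prop
  have hqsm : ContDiff ℝ 1 q := by fun_prop
  set a : ℝ → ℂ := fun θ => ((deriv φ θ : ℝ) : ℂ) ^ ((lam - 1) / 2) with ha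
  have hasm : ContDiff ℝ 1 a := by
    have : a = fun θ => Complex.exp (((Real.log (1 / q θ) : ℝ) : ℂ) * ((lam - 1) / 2)) := by
      funext θ
      have h := one_div_pos.2 (hqpos θ)
      simp only [ha, hdq]
      rw [Complex.cpow_def_of_ne_zero (by exact_mod_cast h.ne'), Complex.ofReal_log h.le]
    rw [this]
    have hlog : ContDiff ℝ 1 fun θ => Real.log (1 / q θ) :=
      (contDiff_const.div hqsm fun θ => (hqpos θ).ne').log fun θ => (one_div_pos.2 (hqpos θ)).ne'
    exact ((Complex.ofRealCLM.contDiff.comp hlog).mul contDiff_const).cexp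
  set b : ℝ → ℂ := fun θ => a θ * (q θ : ℂ) with hb
  have hbsm : ContDiff ℝ 1 b := hasm.mul (Complex.ofRealCLM.contDiff.comp hqsm)
  have hb1c : Continuous (deriv b) := hbsm.continuous_deriv le_rfl
  have hbd : ∀ θ, HasDerivAt b (deriv b θ) θ := fun θ =>
    (hbsm.differentiable one_ne_zero θ).hasDerivAt
  obtain ⟨K, hK⟩ := (isCompact_Icc (a := (0 : ℝ)) (b := 2 * Real.pi)).exists_bound_of_continuousOn
    (f := fun θ => |q1 θ| + |q2 θ| + ‖a θ‖ + ‖b θ‖ + ‖deriv b θ‖)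
    (by have := hasm.continuous; have := hbsm.continuous; fun_prop)
  have hK' : ∀ θ ∈ Set.Icc 0 (2 * Real.pi), |q1 θ| ≤ K ∧ |q2 θ| ≤ K ∧ ‖a θ‖ ≤ K ∧ ‖b θ‖ ≤ K ∧
      ‖deriv b θ‖ ≤ K := fun θ hθ => by
    have h := (Real.le_norm_self _).trans (hK θ hθ)
    have := abs_nonneg (q1 θ)
    have := abs_nonneg (q2 θ)
    have := norm_nonneg (a θ)
    have := norm_nonneg (b θ)
    have := norm_nonneg (deriv b θ)
    refine ⟨?_, ?_, ?_, ?_, ?_⟩ <;> linarith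
  have hT : (0 : ℝ) ≤ 2 * Real.pi := Real.two_pi_pos.le
  have hK0 : 0 ≤ K := (abs_nonneg _).trans (hK' 0 ⟨le_rfl, hT⟩).1
  have hMi : 0 < M⁻¹ := inv_pos.2 hM0
  set c : ℝ := min 0.01 ((0.05 * M⁻¹) ^ 2) with hc
  have hc0 : 0 < c := lt_min (by norm_num) (by positivity)
  -- The summand `1` makes the constant positive even if `K = 0`.
  refine ⟨((K + K ^ 2) * ((K * (4 + 2 * (2 * Real.pi)) + 2 * Real.pi) / c) + K * (2 * Real.pi)
    + 2 * K) + 1, by positivity, fun n k hn hk1 hk2 => ?_⟩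
  have hn1 : (1 : ℝ) ≤ n := by exact_mod_cast hn
  have hn0 : (0 : ℝ) < n := by linarith
  set δ : ℝ := (n : ℝ) ^ (-(1 : ℝ) / 2) with hδ
  have hδ0 : 0 < δ := Real.rpow_pos_of_pos hn0 _
  have hδ1 : δ ≤ 1 := Real.rpow_le_one_of_one_le_of_nonpos hn1 (by norm_num)
  have hδn : δ ^ 2 * n = 1 := by
    rw [hδ, ← Real.rpow_natCast, ← Real.rpow_mul hn0.le]
    norm_num
    rw [Real.rpow_neg_one, inv_mul_cancel₀ hn0.ne']
  have hE : ∀ θ, HasDerivAt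
      (fun θ => Complex.exp (Complex.I * ((k : ℂ) * (φ θ : ℂ) - (n : ℂ) * (θ : ℂ))))
      (-Complex.I * (n : ℝ) * ((q θ - k / n) / q θ : ℝ) *
        Complex.exp (Complex.I * ((k : ℂ) * (φ θ : ℂ) - (n : ℂ) * (θ : ℂ)))) θ := fun θ => by
    have h := ((((hφq θ).ofReal_comp.const_mul (k : ℂ)).sub
      ((hasDerivAt_id θ).ofReal_comp.const_mul (n : ℂ))).const_mul Complex.I).cexp
    refine h.congr_deriv ?_
    have h1 : (q θ : ℂ) ≠ 0 := by exact_mod_cast (hqpos θ).ne'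
    have h2 : (n : ℂ) ≠ 0 := by exact_mod_cast hn0.ne'
    simp only [Pi.sub_apply, id]
    push_cast
    field_simp
    ring
  have hEn : ∀ θ : ℝ,
      ‖Complex.exp (Complex.I * ((k : ℂ) * (φ θ : ℂ) - (n : ℂ) * (θ : ℂ)))‖ ≤ 1 := fun θ => by
    rw [Complex.norm_exp]
    simp
  have hnd : ∀ θ ∈ Set.Icc 0 (2 * Real.pi), c ≤ q1 θ ^ 2 + (q θ - k / n) ^ 2 := fun θ _ =>
    nondegenerate_of_mem hM0 ((le_div_iff₀ hn0).2 hk1) ((div_le_iff₀ hn0).2 hk2) (hsq θ)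
  have := norm_integral_le_of_nondegenerate hT hK0 hqd hq1d hq2c hc0 hδ0 hδ1 hδn
    (fun θ hθ => (hK' θ hθ).1) (fun θ hθ => (hK' θ hθ).2.1) hnd (fun θ => (hqpos θ).ne')
    hbd hb1c (fun θ => rfl) hE hEn (fun θ hθ => (hK' θ hθ).2.2.1)
    (fun θ hθ => (hK' θ hθ).2.2.2.1) (fun θ hθ => (hK' θ hθ).2.2.2.2)
  exact this.trans (mul_le_mul_of_nonneg_right (le_add_of_nonneg_right zero_le_one) hδ0.le)
end

section
/- Fix λ ∈ ℂ with Re λ = 0, fix g ∈ SL(2,ℝ) with g ∉ SO(2), and let φ be a lift of the circle map of g. There exists a constant C > 0 such that for all integers n ≥ 1 and k ≥ 1, the oscillatory integral satisfies the uniform bound |I(k,n)| ≤ C·(min(n,k))^{−1/3}. -/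
/-!
Write `g·v(θ) = M(θ)` and `r = ‖M‖²`. Differentiating the relation `M ∥ v(φ)` and using
`det g = 1` gives `φ' = 1/r` (`lift_deriv_mul`). Since `r` is a trigonometric polynomial
`A + B cos(2θ - β)`, with `B ≠ 0` exactly because `gᵀg ≠ 1`, one gets
`φ'' = -φ'² R sin(2θ - α)` with `R > 0`; hence `|φ''| ≥ c |sin(2θ - α)|`, with constant sign on
quarter periods (`lift_second_deriv`).

The phase is `Φ = kφ - nθ`, and `Φ'' = kφ''` does not involve `n`. This gives the bound
`C k^{-1/3}` for every `n`, which is stronger than the claim. The oscillatory estimate is a smoothed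
van der Corput argument. With `ε = k^{1/3}`, split
`1 = Φ'²/(Φ'² + ε²) + ε²/(Φ'² + ε²)`. In the first part, integrate `Φ' e^{iΦ}` by parts
against `a Φ'/(Φ'² + ε²)`, at a cost `O(1/ε)` plus `∫ |Φ''|/(Φ'² + ε²)`
(`norm_integral_exp_le`). On an interval where `Φ''` has constant sign this last integral is a
difference of values of `arctan(Φ'/ε)/ε`, so it is at most `π/ε` (`integral_abs_div_le`). The
second part is estimated by its trivial bound `1` within `δ ∼ k^{-1/3}` of the zeros of `Φ''`, and
elsewhere, where `|Φ''| ≳ kδ`, by the same arctangent (`integral_cutoff_le`). Every term is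
`O(k^{-1/3})`.
-/

open Matrix

/-! ### Oscillatory integrals with a smooth cutoff at stationary points -/

/-- If `Ψ'` has constant sign `s`, the integrand is the derivative of `s · arctan(Ψ/ε)/ε`, whose
total oscillation is at most `π/ε`. -/
lemma integral_abs_div_le (Ψ Ψ' : ℝ → ℝ) (hΨ : ∀ x, HasDerivAt Ψ (Ψ' x) x)
    (hΨ' : Continuous Ψ') {ε : ℝ} (hε : 0 < ε) {a b s : ℝ} (hab : a ≤ b)
    (hs : |s| = 1) (hsign : ∀ x ∈ Set.Icc a b, 0 ≤ s * Ψ' x) :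
    ∫ x in a..b, |Ψ' x| / (Ψ x ^ 2 + ε ^ 2) ≤ Real.pi / ε := by
  have hpos : ∀ x, 0 < Ψ x ^ 2 + ε ^ 2 := fun x => by positivity
  have hΨc : Continuous Ψ := continuous_iff_continuousAt.2 fun x => (hΨ x).continuousAt
  have hd : ∀ x, HasDerivAt (fun x => s * Real.arctan (Ψ x / ε) / ε)
      (s * Ψ' x / (Ψ x ^ 2 + ε ^ 2)) x := by
    intro x
    refine ((((hΨ x).div_const ε).arctan.const_mul s).div_const ε).congr_deriv ?_
    have := (hpos x).ne'
    have h2 : 1 + (Ψ x / ε) ^ 2 ≠ 0 := by positivity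
    field_simp
    ring
  have hc : Continuous fun x => s * Ψ' x / (Ψ x ^ 2 + ε ^ 2) :=
    (continuous_const.mul hΨ').div (by fun_prop) fun x => (hpos x).ne'
  have heq : ∫ x in a..b, |Ψ' x| / (Ψ x ^ 2 + ε ^ 2) =
      ∫ x in a..b, s * Ψ' x / (Ψ x ^ 2 + ε ^ 2) := by
    refine intervalIntegral.integral_congr fun x hx => ?_
    rw [Set.uIcc_of_le hab] at hx
    have : |Ψ' x| = s * Ψ' x := by
      rw [← abs_of_nonneg (hsign x hx), abs_mul, hs, one_mul]
    simp only [this]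
  rw [heq, intervalIntegral.integral_eq_sub_of_hasDerivAt (fun x _ => hd x)
    (hc.intervalIntegrable _ _)]
  have key : s * (Real.arctan (Ψ b / ε) - Real.arctan (Ψ a / ε)) ≤ Real.pi := by
    have h1 := Real.arctan_lt_pi_div_two (Ψ b / ε)
    have h2 := Real.neg_pi_div_two_lt_arctan (Ψ b / ε)
    have h3 := Real.arctan_lt_pi_div_two (Ψ a / ε)
    have h4 := Real.neg_pi_div_two_lt_arctan (Ψ a / ε)
    rcases (abs_eq zero_le_one).1 hs with rfl | rfl <;> linarith
  rw [← sub_div, ← mul_sub]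
  gcongr

/-- The trivial bound `1` is used within `δ` of the endpoints; in between, `1 ≤ |Ψ'|/μ` reduces the
integral to `integral_abs_div_le`. -/
lemma integral_cutoff_le (Ψ Ψ' : ℝ → ℝ) (hΨ : ∀ x, HasDerivAt Ψ (Ψ' x) x)
    (hΨ' : Continuous Ψ') {ε : ℝ} (hε : 0 < ε) {a b s δ μ : ℝ}
    (hδ : 0 ≤ δ) (hab : a + δ ≤ b - δ) (hμ : 0 < μ)
    (hs : |s| = 1) (hsign : ∀ x ∈ Set.Icc a b, 0 ≤ s * Ψ' x)
    (hlow : ∀ x ∈ Set.Icc (a + δ) (b - δ), μ ≤ |Ψ' x|) :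
    ∫ x in a..b, ε ^ 2 / (Ψ x ^ 2 + ε ^ 2) ≤ 2 * δ + Real.pi * ε / μ := by
  have hpos : ∀ x, 0 < Ψ x ^ 2 + ε ^ 2 := fun x => by positivity
  have hΨc : Continuous Ψ := continuous_iff_continuousAt.2 fun x => (hΨ x).continuousAt
  have hc : Continuous fun x => ε ^ 2 / (Ψ x ^ 2 + ε ^ 2) :=
    continuous_const.div (by fun_prop) fun x => (hpos x).ne'
  have hc2 : Continuous fun x => |Ψ' x| / (Ψ x ^ 2 + ε ^ 2) :=
    hΨ'.abs.div (by fun_prop) fun x => (hpos x).ne'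
  have hi : ∀ u v, IntervalIntegrable (fun x => ε ^ 2 / (Ψ x ^ 2 + ε ^ 2))
    MeasureTheory.volume u v := fun u v => hc.intervalIntegrable u v
  have hle1 : ∀ x, ε ^ 2 / (Ψ x ^ 2 + ε ^ 2) ≤ 1 := fun x => by
    rw [div_le_one (hpos x)]; nlinarith [sq_nonneg (Ψ x)]
  have hend : ∀ u, ∫ x in u..(u + δ), ε ^ 2 / (Ψ x ^ 2 + ε ^ 2) ≤ δ := by
    intro u
    have := intervalIntegral.integral_mono_on (a := u) (b := u + δ) (by linarith) (hi _ _)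
      (intervalIntegrable_const (c := (1 : ℝ))) fun x _ => hle1 x
    simpa using this
  have hmid : ∫ x in (a + δ)..(b - δ), ε ^ 2 / (Ψ x ^ 2 + ε ^ 2) ≤ Real.pi * ε / μ := by
    calc ∫ x in (a + δ)..(b - δ), ε ^ 2 / (Ψ x ^ 2 + ε ^ 2)
        ≤ ∫ x in (a + δ)..(b - δ), ε ^ 2 / μ * (|Ψ' x| / (Ψ x ^ 2 + ε ^ 2)) := by
          refine intervalIntegral.integral_mono_on hab (hi _ _)
            ((continuous_const.mul hc2).intervalIntegrable _ _) fun x hx => ?_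
          rw [div_mul_div_comm, div_le_div_iff₀ (hpos x) (mul_pos hμ (hpos x))]
          have := mul_le_mul_of_nonneg_left (hlow x hx)
            (mul_nonneg (sq_nonneg ε) (hpos x).le)
          linarith
      _ = ε ^ 2 / μ * ∫ x in (a + δ)..(b - δ), |Ψ' x| / (Ψ x ^ 2 + ε ^ 2) := by
          rw [intervalIntegral.integral_const_mul]
      _ ≤ ε ^ 2 / μ * (Real.pi / ε) := by
          gcongr
          refine integral_abs_div_le Ψ Ψ' hΨ hΨ' hε hab hs fun x hx => hsign x ⟨?_, ?_⟩
          · linarith [hx.1]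
          · linarith [hx.2]
      _ = Real.pi * ε / μ := by field_simp
  have h1 := hend a
  have h2 := hend (b - δ)
  rw [sub_add_cancel] at h2
  rw [← intervalIntegral.integral_add_adjacent_intervals (hi a (a + δ)) (hi (a + δ) b),
    ← intervalIntegral.integral_add_adjacent_intervals (hi (a + δ) (b - δ)) (hi (b - δ) b)]
  linarith

/-- Smoothed first-derivative test: with `q = Ψ/(Ψ² + ε²)` and `F = a q e^{iΦ}`, the integrand plus
`i F'` contains no term `Ψ q` any more, only `1 - Ψ q = ε²/(Ψ² + ε²)`, while `|q| ≤ 1/ε` and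
`|q'| ≤ |Ψ'|/(Ψ² + ε²)`. -/
lemma norm_integral_exp_le (a a' : ℝ → ℂ) (Φ Ψ Ψ' : ℝ → ℝ)
    (ha : ∀ x, HasDerivAt a (a' x) x) (ha' : Continuous a')
    (hΦ : ∀ x, HasDerivAt Φ (Ψ x) x) (hΨ : ∀ x, HasDerivAt Ψ (Ψ' x) x)
    (hΨ' : Continuous Ψ') {ε L A B : ℝ} (hε : 0 < ε) (hL : 0 ≤ L)
    (hA : ∀ x ∈ Set.Icc 0 L, ‖a x‖ ≤ A) (hB : ∀ x ∈ Set.Icc 0 L, ‖a' x‖ ≤ B) :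
    ‖∫ x in (0 : ℝ)..L, a x * Complex.exp (Complex.I * (Φ x : ℂ))‖ ≤
      (2 * A + L * B) / ε + A * (∫ x in (0 : ℝ)..L, |Ψ' x| / (Ψ x ^ 2 + ε ^ 2))
        + A * ∫ x in (0 : ℝ)..L, ε ^ 2 / (Ψ x ^ 2 + ε ^ 2) := by
  have hpos : ∀ x, 0 < Ψ x ^ 2 + ε ^ 2 := fun x => by positivity
  have hac : Continuous a := continuous_iff_continuousAt.2 fun x => (ha x).continuousAt
  have hΦc : Continuous Φ := continuous_iff_continuousAt.2 fun x => (hΦ x).continuousAt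
  have hΨc : Continuous Ψ := continuous_iff_continuousAt.2 fun x => (hΨ x).continuousAt
  have hA0 : 0 ≤ A := (norm_nonneg _).trans (hA 0 ⟨le_rfl, hL⟩)
  have hB0 : 0 ≤ B := (norm_nonneg _).trans (hB 0 ⟨le_rfl, hL⟩)
  set e : ℝ → ℂ := fun x => Complex.exp (Complex.I * (Φ x : ℂ)) with he
  set q : ℝ → ℝ := fun x => Ψ x / (Ψ x ^ 2 + ε ^ 2) with hq
  set q' : ℝ → ℝ := fun x => Ψ' x * (ε ^ 2 - Ψ x ^ 2) / (Ψ x ^ 2 + ε ^ 2) ^ 2 with hq'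
  have hen : ∀ x, ‖e x‖ = 1 := fun x => by
    simp only [he, mul_comm Complex.I]; exact Complex.norm_exp_ofReal_mul_I _
  have hed : ∀ x, HasDerivAt e (e x * (Complex.I * (Ψ x : ℂ))) x := fun x =>
    (((hΦ x).ofReal_comp).const_mul Complex.I).cexp
  have hqd : ∀ x, HasDerivAt q (q' x) x := by
    intro x
    refine ((hΨ x).div (((hΨ x).pow 2).add_const (ε ^ 2)) (hpos x).ne').congr_deriv ?_
    simp only [hq', Pi.pow_apply]
    congr 1
    push_cast
    ring
  have hqb : ∀ x, |q x| ≤ 1 / ε := by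
    intro x
    rw [hq, abs_div, abs_of_pos (hpos x), div_le_div_iff₀ (hpos x) hε]
    nlinarith [sq_nonneg (|Ψ x| - ε), sq_abs (Ψ x), sq_nonneg (|Ψ x|), abs_nonneg (Ψ x)]
  have hqb' : ∀ x, |q' x| ≤ |Ψ' x| / (Ψ x ^ 2 + ε ^ 2) := by
    intro x
    rw [hq', abs_div, abs_mul, abs_of_pos (pow_pos (hpos x) 2),
      div_le_div_iff₀ (pow_pos (hpos x) 2) (hpos x), pow_two (_ + _), ← mul_assoc]
    gcongr
    rw [abs_le]
    constructor <;> nlinarith [sq_nonneg (Ψ x), sq_nonneg ε]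
  have hq'c : Continuous q' :=
    (hΨ'.mul (by fun_prop)).div (by fun_prop) fun x => (pow_pos (hpos x) 2).ne'
  have hqc : Continuous q := hΨc.div (by fun_prop) fun x => (hpos x).ne'
  have hec : Continuous e := by fun_prop
  set F : ℝ → ℂ := fun x => e x * a x * (q x : ℂ) with hF
  set F' : ℝ → ℂ := fun x =>
    (e x * (Complex.I * (Ψ x : ℂ)) * a x + e x * a' x) * (q x : ℂ) + e x * a x * (q' x : ℂ)
    with hF'
  have hFd : ∀ x, HasDerivAt F (F' x) x := fun x =>
    ((hed x).mul (ha x)).mul (hqd x).ofReal_comp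
  have hF'c : Continuous F' := by fun_prop
  have hFT : ∫ x in (0 : ℝ)..L, F' x = F L - F 0 :=
    intervalIntegral.integral_eq_sub_of_hasDerivAt (fun x _ => hFd x)
      (hF'c.intervalIntegrable _ _)
  have hFb : ∀ x ∈ Set.Icc 0 L, ‖F x‖ ≤ A / ε := by
    intro x hx
    rw [hF, norm_mul, norm_mul, hen, one_mul, Complex.norm_real, Real.norm_eq_abs,
      div_eq_mul_one_div]
    exact mul_le_mul (hA x hx) (hqb x) (abs_nonneg _) hA0
  have hsplit : ∫ x in (0 : ℝ)..L, a x * e x =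
      (∫ x in (0 : ℝ)..L, (a x * e x + Complex.I * F' x)) - Complex.I * (F L - F 0) := by
    have i1 : Continuous fun x => a x * e x := by fun_prop
    have i2 : Continuous fun x => Complex.I * F' x := by fun_prop
    rw [intervalIntegral.integral_add (i1.intervalIntegrable _ _) (i2.intervalIntegrable _ _),
      intervalIntegral.integral_const_mul, hFT, add_sub_cancel_right]
  have hc1 : Continuous fun x => |Ψ' x| / (Ψ x ^ 2 + ε ^ 2) :=
    hΨ'.abs.div (by fun_prop) fun x => (hpos x).ne'
  have hc2 : Continuous fun x => ε ^ 2 / (Ψ x ^ 2 + ε ^ 2) :=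
    continuous_const.div (by fun_prop) fun x => (hpos x).ne'
  have hpt : ∀ x ∈ Set.Icc 0 L, ‖a x * e x + Complex.I * F' x‖ ≤
      B / ε + A * (|Ψ' x| / (Ψ x ^ 2 + ε ^ 2)) + A * (ε ^ 2 / (Ψ x ^ 2 + ε ^ 2)) := by
    intro x hx
    have h1 : (1 : ℂ) - (Ψ x : ℂ) * (q x : ℂ) = ((ε ^ 2 / (Ψ x ^ 2 + ε ^ 2) : ℝ) : ℂ) := by
      rw [← Complex.ofReal_mul, ← Complex.ofReal_one, ← Complex.ofReal_sub]
      congr 1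
      have := (hpos x).ne'
      simp only [hq]
      field_simp
      ring
    have h2 : a x * e x + Complex.I * F' x =
        Complex.I * e x * (a' x * (q x : ℂ)) + Complex.I * e x * (a x * (q' x : ℂ)) +
          e x * (a x * ((ε ^ 2 / (Ψ x ^ 2 + ε ^ 2) : ℝ) : ℂ)) := by
      rw [← h1, hF']
      linear_combination (e x * a x * Ψ x * q x) * Complex.I_sq
    rw [h2]
    refine (norm_add₃_le).trans ?_
    simp only [norm_mul, hen, Complex.norm_I, one_mul, Complex.norm_real, Real.norm_eq_abs]
    rw [div_eq_mul_one_div B, abs_of_nonneg (a := ε ^ 2 / _) (by positivity)]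
    refine add_le_add (add_le_add ?_ ?_) ?_
    · exact mul_le_mul (hB x hx) (hqb x) (abs_nonneg _) hB0
    · exact mul_le_mul (hA x hx) (hqb' x) (abs_nonneg _) hA0
    · exact mul_le_mul_of_nonneg_right (hA x hx) (by positivity)
  have hmain : ‖∫ x in (0 : ℝ)..L, (a x * e x + Complex.I * F' x)‖ ≤
      L * (B / ε) + A * (∫ x in (0 : ℝ)..L, |Ψ' x| / (Ψ x ^ 2 + ε ^ 2))
        + A * ∫ x in (0 : ℝ)..L, ε ^ 2 / (Ψ x ^ 2 + ε ^ 2) := by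
    have i1 := (hc1.const_mul A).intervalIntegrable (μ := MeasureTheory.volume) 0 L
    have i2 := (hc2.const_mul A).intervalIntegrable (μ := MeasureTheory.volume) 0 L
    have i0 : IntervalIntegrable (fun _ : ℝ => B / ε) MeasureTheory.volume 0 L :=
      intervalIntegrable_const
    refine (intervalIntegral.norm_integral_le_of_norm_le hL
      (Filter.Eventually.of_forall fun x hx => hpt x ⟨hx.1.le, hx.2⟩)
      ((i0.add i1).add i2)).trans (le_of_eq ?_)
    rw [intervalIntegral.integral_add (i0.add i1) i2, intervalIntegral.integral_add i0 i1,
      intervalIntegral.integral_const_mul, intervalIntegral.integral_const_mul,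
      intervalIntegral.integral_const, sub_zero, smul_eq_mul]
  have hbd : ‖Complex.I * (F L - F 0)‖ ≤ 2 * A / ε := by
    rw [norm_mul, Complex.norm_I, one_mul]
    refine (norm_sub_le _ _).trans ?_
    have h1 := hFb L ⟨hL, le_rfl⟩
    have h2 := hFb 0 ⟨le_rfl, hL⟩
    rw [mul_div_assoc]
    linarith
  change ‖∫ x in (0 : ℝ)..L, a x * e x‖ ≤ _
  rw [hsplit]
  refine (norm_sub_le _ _).trans ?_
  have : (2 * A + L * B) / ε = 2 * A / ε + L * (B / ε) := by ring
  linarith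

/-! ### Derivatives of a lift -/

/-- Amplitude-phase form of a combination of `sin` and `cos`, from the polar form of `u - iv`. -/
lemma exists_phase (u v : ℝ) (h : ¬(u = 0 ∧ v = 0)) :
    ∃ R > 0, ∃ α, -Real.pi < α ∧ α ≤ Real.pi ∧
      ∀ x : ℝ, u * Real.sin x + v * Real.cos x = R * Real.sin (x - α) := by
  have hz : (⟨u, -v⟩ : ℂ) ≠ 0 := by
    intro h0
    rw [Complex.ext_iff] at h0
    exact h ⟨h0.1, by simpa using h0.2⟩
  refine ⟨‖(⟨u, -v⟩ : ℂ)‖, norm_pos_iff.2 hz, Complex.arg ⟨u, -v⟩, Complex.neg_pi_lt_arg _,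
    Complex.arg_le_pi _, fun x => ?_⟩
  have h1 := Complex.norm_mul_cos_arg ⟨u, -v⟩
  have h2 := Complex.norm_mul_sin_arg ⟨u, -v⟩
  simp only at h1 h2
  rw [Real.sin_sub]
  linear_combination (-Real.sin x) * h1 + Real.cos x * h2

/-- The identity `φ'(θ) ‖g·v(θ)‖² = 1`. -/
lemma lift_deriv_mul (g : Matrix.SpecialLinearGroup (Fin 2) ℝ) (φ : ℝ → ℝ) (hφ : IsLift g φ)
    (θ : ℝ) :
    deriv φ θ * ((g 0 0 * Real.cos θ + g 0 1 * Real.sin θ) ^ 2 +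
      (g 1 0 * Real.cos θ + g 1 1 * Real.sin θ) ^ 2) = 1 := by
  obtain ⟨hsm, hl⟩ := hφ
  have hdet : g 0 0 * g 1 1 - g 0 1 * g 1 0 = 1 := by
    rw [← Matrix.det_fin_two]; exact g.2
  set a := g 0 0
  set b := g 0 1
  set c := g 1 0
  set d := g 1 1
  set N : ℝ → ℝ := fun θ => enorm2 ((g : Matrix (Fin 2) (Fin 2) ℝ).mulVec (vCirc θ)) with hN
  have h0 : ∀ θ, a * Real.cos θ + b * Real.sin θ = N θ * Real.cos (φ θ) := by
    intro θ
    simp only [hN]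
    have := congrFun (hl θ) 0
    simpa [Matrix.mulVec, dotProduct, Fin.sum_univ_two, vCirc, a, b, c, d] using this
  have h1 : ∀ θ, c * Real.cos θ + d * Real.sin θ = N θ * Real.sin (φ θ) := by
    intro θ
    simp only [hN]
    have := congrFun (hl θ) 1
    simpa [Matrix.mulVec, dotProduct, Fin.sum_univ_two, vCirc, a, b, c, d] using this
  have hd : HasDerivAt φ (deriv φ θ) θ :=
    ((hsm.differentiable (by simp)) θ).hasDerivAt
  have hder := (((((Real.hasDerivAt_cos θ).const_mul a).add
      ((Real.hasDerivAt_sin θ).const_mul b)).mul hd.sin).sub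
    ((((Real.hasDerivAt_cos θ).const_mul c).add
      ((Real.hasDerivAt_sin θ).const_mul d)).mul hd.cos))
  have hzero : HasDerivAt (fun _ : ℝ => (0 : ℝ)) 0 θ := hasDerivAt_const _ _
  have key := hder.unique (hzero.congr_of_eventuallyEq (Filter.Eventually.of_forall fun x => by
    simp only [Pi.add_apply, Pi.sub_apply, Pi.mul_apply]
    rw [h0 x, h1 x]; ring))
  simp only [Pi.add_apply] at key
  have hcs := Real.sin_sq_add_cos_sq (φ θ)
  have hcst := Real.sin_sq_add_cos_sq θ
  have e0 := h0 θ
  have e1 := h1 θ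
  set x := Real.cos θ
  set y := Real.sin θ
  set X := Real.cos (φ θ)
  set Y := Real.sin (φ θ)
  -- Multiplying the differentiated identity by the norm `N θ` replaces `N cos φ`, `N sin φ` by
  -- the coordinates of `g·v`, and the Wronskian of these is `det g = 1`.
  have k2 : N θ * ((a * -y + b * x) * Y - (c * -y + d * x) * X +
      deriv φ θ * ((a * x + b * y) * X + (c * x + d * y) * Y)) = 0 := by
    linear_combination N θ * key
  linear_combination k2 + (-(c * -y + d * x) + deriv φ θ * (a * x + b * y)) * e0
    + ((a * -y + b * x) + deriv φ θ * (c * x + d * y)) * e1 + (x ^ 2 + y ^ 2) * hdet + hcst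

/-- A lift has `φ' > 0`, and `φ''` vanishes at most linearly at the points `T + jπ/2`, keeping a
constant sign `s` between consecutive ones. The window `-π ≤ T ≤ 0` makes `[T, T + 3π]` contain
`[0, 2π]`. -/
lemma lift_second_deriv (g : Matrix.SpecialLinearGroup (Fin 2) ℝ)
    (hg : (g : Matrix (Fin 2) (Fin 2) ℝ)ᵀ * (g : Matrix (Fin 2) (Fin 2) ℝ) ≠ 1)
    (φ : ℝ → ℝ) (hφ : IsLift g φ) :
    (∀ x, 0 < deriv φ x) ∧ ∃ c > 0, ∃ T, -Real.pi ≤ T ∧ T ≤ 0 ∧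
      ∀ j : ℕ, ∃ s : ℝ, |s| = 1 ∧ ∀ x, 0 ≤ x → x ≤ Real.pi / 2 →
        c * Real.sin (2 * x) ≤ s * deriv (deriv φ) (T + j * (Real.pi / 2) + x) := by
  have hm := lift_deriv_mul g φ hφ
  have hsm := hφ.1
  have hdet : g 0 0 * g 1 1 - g 0 1 * g 1 0 = 1 := by
    rw [← Matrix.det_fin_two]; exact g.2
  have hne : ¬((g 0 1 ^ 2 + g 1 1 ^ 2 - g 0 0 ^ 2 - g 1 0 ^ 2) = 0 ∧
      2 * (g 0 0 * g 0 1 + g 1 0 * g 1 1) = 0) := by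
    rintro ⟨h1, h2⟩
    apply hg
    have hq : g 0 0 * g 0 1 + g 1 0 * g 1 1 = 0 := by linarith
    have hp : g 0 0 ^ 2 + g 1 0 ^ 2 = 1 := by
      have h3 : (g 0 0 ^ 2 + g 1 0 ^ 2) * (g 0 0 ^ 2 + g 1 0 ^ 2) = 1 := by
        linear_combination (-(g 0 0 ^ 2 + g 1 0 ^ 2)) * h1
          + (g 0 0 * g 0 1 + g 1 0 * g 1 1) * hq + (g 0 0 * g 1 1 - g 0 1 * g 1 0 + 1) * hdet
      nlinarith [sq_nonneg (g 0 0), sq_nonneg (g 1 0)]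
    ext i j
    fin_cases i <;> fin_cases j <;>
      simp [Matrix.mul_apply, Fin.sum_univ_two] <;> linarith
  set a := g 0 0
  set b := g 0 1
  set c := g 1 0
  set d := g 1 1
  set r : ℝ → ℝ := fun θ => (a * Real.cos θ + b * Real.sin θ) ^ 2 +
      (c * Real.cos θ + d * Real.sin θ) ^ 2 with hr
  obtain ⟨R, hR, α, hα1, hα2, hα⟩ := exists_phase _ _ hne
  have hr0 : ∀ x, 0 ≤ r x := fun x => by positivity
  have hpos : ∀ x, 0 < deriv φ x := fun x =>
    pos_of_mul_pos_left (by rw [hm x]; exact one_pos) (hr0 x)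
  set K := a ^ 2 + b ^ 2 + c ^ 2 + d ^ 2 with hK
  have hrK : ∀ x, r x ≤ K := by
    intro x
    have := Real.sin_sq_add_cos_sq x
    have e : K - r x = (a * Real.sin x - b * Real.cos x) ^ 2 +
        (c * Real.sin x - d * Real.cos x) ^ 2 := by
      simp only [hK, hr]
      linear_combination (-K) * this
    nlinarith [sq_nonneg (a * Real.sin x - b * Real.cos x),
      sq_nonneg (c * Real.sin x - d * Real.cos x)]
  have hKD : ∀ x, 1 ≤ deriv φ x * K := fun x => by
    rw [← hm x]; exact mul_le_mul_of_nonneg_left (hrK x) (hpos x).le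
  have hKpos : 0 < K := pos_of_mul_pos_right (one_pos.trans_le (hKD 0)) (hpos 0).le
  have hD2 : ∀ x, HasDerivAt (deriv φ) (deriv (deriv φ) x) x := fun x =>
    (((contDiff_infty_iff_deriv.1 hsm).2.differentiable (by simp)) x).hasDerivAt
  have hform : ∀ x, deriv (deriv φ) x = -(deriv φ x ^ 2 * (R * Real.sin (2 * x - α))) := by
    intro x
    have hr' : HasDerivAt r (R * Real.sin (2 * x - α)) x := by
      have := (((((Real.hasDerivAt_cos x).const_mul a).add
        ((Real.hasDerivAt_sin x).const_mul b)).pow 2).add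
        ((((Real.hasDerivAt_cos x).const_mul c).add
        ((Real.hasDerivAt_sin x).const_mul d)).pow 2))
      refine this.congr_deriv ?_
      rw [← hα, Real.sin_two_mul, Real.cos_two_mul']
      simp only [Pi.add_apply]
      push_cast
      ring
    have hone : HasDerivAt (fun _ : ℝ => (1 : ℝ)) 0 x := hasDerivAt_const _ _
    have key := ((hD2 x).mul hr').unique
      (hone.congr_of_eventuallyEq (Filter.Eventually.of_forall fun y => hm y))
    have := hm x
    change deriv φ x * r x = 1 at this
    linear_combination (-(deriv (deriv φ) x)) * this + deriv φ x * key
  refine ⟨hpos, R / K ^ 2, by positivity, (α - Real.pi) / 2, by linarith, by linarith,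
    fun j => ⟨(-1) ^ j, by simp, fun x hx0 hx1 => ?_⟩⟩
  have hs0 : 0 ≤ Real.sin (2 * x) :=
    Real.sin_nonneg_of_nonneg_of_le_pi (by linarith) (by linarith)
  set y := (α - Real.pi) / 2 + j * (Real.pi / 2) + x
  have hsin : Real.sin (2 * y - α) = -((-1) ^ j * Real.sin (2 * x)) := by
    have : 2 * y - α = 2 * x + j * Real.pi - Real.pi := by simp only [y]; ring
    rw [this, Real.sin_sub_pi, Real.sin_add_nat_mul_pi]
  have hsq : ((-1 : ℝ) ^ j) * (-1) ^ j = 1 := by rw [← mul_pow]; simp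
  rw [hform, hsin]
  have : (-1 : ℝ) ^ j * -(deriv φ y ^ 2 * (R * -((-1) ^ j * Real.sin (2 * x)))) =
      deriv φ y ^ 2 * (R * Real.sin (2 * x)) := by
    linear_combination (deriv φ y ^ 2 * (R * Real.sin (2 * x))) * hsq
  rw [this, div_mul_eq_mul_div, div_le_iff₀ (by positivity)]
  have h1 : 1 ≤ (deriv φ y * K) ^ 2 := one_le_pow₀ (hKD y)
  nlinarith [mul_nonneg hR.le hs0]

/-! ### The uniform bound -/

/-- The interval `[0, 2π]` lies in `[T, T + 3π]`, a union of six intervals of length `π/2`. -/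
lemma integral_two_pi_le {f : ℝ → ℝ} (hf : Continuous f) (h0 : ∀ x, 0 ≤ f x) {T M : ℝ}
    (hT : -Real.pi ≤ T) (hT' : T ≤ 0)
    (hM : ∀ j : ℕ, ∫ x in (T + j * (Real.pi / 2))..(T + (j + 1 : ℕ) * (Real.pi / 2)), f x ≤ M) :
    ∫ x in (0 : ℝ)..(2 * Real.pi), f x ≤ 6 * M := by
  have hi : ∀ u v, IntervalIntegrable f MeasureTheory.volume u v :=
    fun u v => hf.intervalIntegrable u v
  have h1 : ∫ x in (0 : ℝ)..(2 * Real.pi), f x ≤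
      ∫ x in (T + (0 : ℕ) * (Real.pi / 2))..(T + (6 : ℕ) * (Real.pi / 2)), f x := by
    refine intervalIntegral.integral_mono_interval (by simpa using hT') (by positivity) ?_
      (Filter.Eventually.of_forall h0) (hi _ _)
    push_cast
    linarith
  refine h1.trans ?_
  rw [← intervalIntegral.sum_integral_adjacent_intervals
    (a := fun j : ℕ => T + j * (Real.pi / 2)) (fun k _ => hi _ _)]
  refine (Finset.sum_le_sum fun j _ => hM j).trans ?_
  simp

theorem oscI_uniform_bound (lam : ℂ) (hlam : lam.re = 0)
    (g : Matrix.SpecialLinearGroup (Fin 2) ℝ)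
    (hg : (g : Matrix (Fin 2) (Fin 2) ℝ)ᵀ * (g : Matrix (Fin 2) (Fin 2) ℝ) ≠ 1)
    (φ : ℝ → ℝ) (hφ : IsLift g φ) :
    ∃ C : ℝ, 0 < C ∧ ∀ n k : ℤ, 1 ≤ n → 1 ≤ k →
      ‖oscI φ lam k n‖ ≤ C * (min (n : ℝ) (k : ℝ)) ^ (-(1 : ℝ) / 3) := by
  obtain ⟨hpos, c, hc, T, hT1, hT2, hpiece⟩ := lift_second_deriv g hg φ hφ
  have hsm := hφ.1
  have hsm1 := (contDiff_infty_iff_deriv.1 hsm).2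
  have hsm2 := (contDiff_infty_iff_deriv.1 hsm1).2
  have hD1 : ∀ x, HasDerivAt φ (deriv φ x) x := fun x =>
    ((hsm.differentiable (by simp)) x).hasDerivAt
  have hD2 : ∀ x, HasDerivAt (deriv φ) (deriv (deriv φ) x) x := fun x =>
    ((hsm1.differentiable (by simp)) x).hasDerivAt
  have hc1 : Continuous (deriv φ) := hsm1.continuous
  have hc2 : Continuous (deriv (deriv φ)) := hsm2.continuous
  set w : ℂ := (lam - 1) / 2 with hw
  set a : ℝ → ℂ := fun x => ((deriv φ x : ℝ) : ℂ) ^ w with ha_def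
  set a' : ℝ → ℂ := fun x =>
    w * ((deriv φ x : ℝ) : ℂ) ^ (w - 1) * ((deriv (deriv φ) x : ℝ) : ℂ) with ha'_def
  have hslit : ∀ x, ((deriv φ x : ℝ) : ℂ) ∈ Complex.slitPlane := fun x =>
    Complex.ofReal_mem_slitPlane.2 (hpos x)
  have ha : ∀ x, HasDerivAt a (a' x) x := fun x =>
    HasDerivAt.comp (h₂ := fun z : ℂ => z ^ w) x
      (Complex.hasStrictDerivAt_cpow_const (hslit x)).hasDerivAt (hD2 x).ofReal_comp
  have hcont : ∀ z : ℂ, Continuous fun x => ((deriv φ x : ℝ) : ℂ) ^ z := fun z =>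
    (Complex.continuous_ofReal.comp hc1).cpow continuous_const hslit
  have ha'c : Continuous a' :=
    (continuous_const.mul (hcont _)).mul (Complex.continuous_ofReal.comp hc2)
  obtain ⟨A, hA⟩ := isCompact_Icc.exists_bound_of_continuousOn
    (s := Set.Icc 0 (2 * Real.pi)) (hcont w).continuousOn
  obtain ⟨B, hB⟩ := isCompact_Icc.exists_bound_of_continuousOn
    (s := Set.Icc 0 (2 * Real.pi)) ha'c.continuousOn
  have hpi := Real.pi_pos
  have hA0 : 0 ≤ A := (norm_nonneg _).trans (hA 0 ⟨le_rfl, by positivity⟩)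
  have hB0 : 0 ≤ B := (norm_nonneg _).trans (hB 0 ⟨le_rfl, by positivity⟩)
  refine ⟨(2 * A + 2 * Real.pi * B) + A * (6 * Real.pi) +
    A * (6 * (1 + 2 * Real.pi / c)) + 1, by positivity, fun n k hn hk => ?_⟩
  have hn' : (1 : ℝ) ≤ n := by exact_mod_cast hn
  have hk' : (1 : ℝ) ≤ k := by exact_mod_cast hk
  have hk0 : (0 : ℝ) < k := by linarith
  set t : ℝ := (k : ℝ) ^ ((1 : ℝ) / 3) with ht_def
  have ht1 : 1 ≤ t := Real.one_le_rpow hk' (by norm_num)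
  have ht : 0 < t := by linarith
  have ht3 : t ^ 3 = k := by
    rw [ht_def, ← Real.rpow_natCast, ← Real.rpow_mul hk0.le]; norm_num
  set Ψ : ℝ → ℝ := fun x => k * deriv φ x - n with hΨ_def
  set Ψ' : ℝ → ℝ := fun x => k * deriv (deriv φ) x with hΨ'_def
  have hΦ : ∀ x, HasDerivAt (fun x => k * φ x - n * x) (Ψ x) x := fun x =>
    (((hD1 x).const_mul (k : ℝ)).sub ((hasDerivAt_id x).const_mul (n : ℝ))).congr_deriv
      (by simp [hΨ_def])
  have hΨ : ∀ x, HasDerivAt Ψ (Ψ' x) x := fun x =>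
    ((hD2 x).const_mul (k : ℝ)).sub_const _
  have hΨ'c : Continuous Ψ' := continuous_const.mul hc2
  have hΨc : Continuous Ψ := (continuous_const.mul hc1).sub continuous_const
  have hden : ∀ x, Ψ x ^ 2 + t ^ 2 ≠ 0 := fun x => by positivity
  have hlen : ∀ j : ℕ, T + (j + 1 : ℕ) * (Real.pi / 2) =
      T + j * (Real.pi / 2) + Real.pi / 2 := fun j => by push_cast; ring
  have hsign : ∀ j : ℕ, ∃ s : ℝ, |s| = 1 ∧ ∀ x, 0 ≤ x → x ≤ Real.pi / 2 →
      k * (c * Real.sin (2 * x)) ≤ s * Ψ' (T + j * (Real.pi / 2) + x) := by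
    intro j
    obtain ⟨s, hs, h⟩ := hpiece j
    refine ⟨s, hs, fun x hx0 hx1 => ?_⟩
    have := mul_le_mul_of_nonneg_left (h x hx0 hx1) hk0.le
    simp only [hΨ'_def]
    linarith
  have hnn : ∀ j : ℕ, ∀ s : ℝ, (∀ x, 0 ≤ x → x ≤ Real.pi / 2 →
      k * (c * Real.sin (2 * x)) ≤ s * Ψ' (T + j * (Real.pi / 2) + x)) →
      ∀ x ∈ Set.Icc (T + j * (Real.pi / 2)) (T + j * (Real.pi / 2) + Real.pi / 2),
        0 ≤ s * Ψ' x := by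
    intro j s h x hx
    have h1 := h (x - (T + j * (Real.pi / 2))) (by linarith [hx.1]) (by linarith [hx.2])
    rw [add_sub_cancel] at h1
    refine le_trans ?_ h1
    have : 0 ≤ Real.sin (2 * (x - (T + j * (Real.pi / 2)))) :=
      Real.sin_nonneg_of_nonneg_of_le_pi (by linarith [hx.1]) (by linarith [hx.2])
    positivity
  have hI1 : ∫ x in (0 : ℝ)..(2 * Real.pi), |Ψ' x| / (Ψ x ^ 2 + t ^ 2) ≤
      6 * (Real.pi / t) := by
    refine integral_two_pi_le (hΨ'c.abs.div (by fun_prop) hden)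
      (fun x => div_nonneg (abs_nonneg _) (by positivity)) hT1 hT2 fun j => ?_
    obtain ⟨s, hs, h⟩ := hsign j
    rw [hlen]
    exact integral_abs_div_le Ψ Ψ' hΨ hΨ'c ht (by linarith) hs (hnn j s h)
  have hI2 : ∫ x in (0 : ℝ)..(2 * Real.pi), t ^ 2 / (Ψ x ^ 2 + t ^ 2) ≤
      6 * (2 * (1 / (2 * t)) + Real.pi * t / (k * (c * (1 / (2 * t))))) := by
    refine integral_two_pi_le (continuous_const.div (by fun_prop) hden)
      (fun x => div_nonneg (by positivity) (by positivity)) hT1 hT2 fun j => ?_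
    obtain ⟨s, hs, h⟩ := hsign j
    rw [hlen]
    have hδ0 : 0 < 1 / (2 * t) := by positivity
    have hδ1 : 1 / (2 * t) ≤ 1 / 2 := by
      rw [div_le_div_iff₀ (by positivity) (by norm_num)]; linarith
    have hpi3 := Real.pi_gt_three
    refine integral_cutoff_le Ψ Ψ' hΨ hΨ'c ht hδ0.le (by linarith) (by positivity) hs
      (hnn j s h) fun x hx => ?_
    set y := x - (T + j * (Real.pi / 2)) with hy
    have hy0 : 1 / (2 * t) ≤ y := by linarith [hx.1]
    have hy1 : y ≤ Real.pi / 2 - 1 / (2 * t) := by linarith [hx.2]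
    have h1 := h y (by linarith) (by linarith)
    rw [hy, add_sub_cancel, ← hy] at h1
    have h2 : s * Ψ' x ≤ |Ψ' x| := by
      refine (le_abs_self _).trans ?_
      rw [abs_mul, hs, one_mul]
    -- Jordan's inequality `2/π * u ≤ sin u` on `[0, π/2]`, applied to `2y` or to `π - 2y`.
    have hjordan : ∀ u, 2 * (1 / (2 * t)) ≤ u → u ≤ Real.pi / 2 →
        1 / (2 * t) ≤ Real.sin u := by
      intro u hu0 hu1
      refine le_trans ?_ (Real.mul_le_sin (by linarith) hu1)
      rw [div_mul_eq_mul_div, le_div_iff₀ hpi]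
      nlinarith [Real.pi_le_four]
    have h3 : 1 / (2 * t) ≤ Real.sin (2 * y) := by
      rcases le_total (2 * y) (Real.pi / 2) with h | h
      · exact hjordan _ (by linarith) h
      · rw [← Real.sin_pi_sub]
        exact hjordan _ (by linarith) (by linarith)
    refine le_trans ?_ (h1.trans h2)
    gcongr
  have hmain := norm_integral_exp_le a a' _ Ψ Ψ' ha ha'c hΦ hΨ hΨ'c ht
    (by positivity : (0 : ℝ) ≤ 2 * Real.pi) hA hB
  have hosc : oscI φ lam k n = ∫ x in (0 : ℝ)..(2 * Real.pi),
      a x * Complex.exp (Complex.I * ((k * φ x - n * x : ℝ) : ℂ)) := by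
    unfold oscI
    simp only [ha_def, hw]
    push_cast
    rfl
  have hmin : 1 / t ≤ (min (n : ℝ) (k : ℝ)) ^ (-(1 : ℝ) / 3) := by
    have : 1 / t = (k : ℝ) ^ (-(1 : ℝ) / 3) := by
      rw [ht_def, neg_div, Real.rpow_neg hk0.le, one_div]
    rw [this]
    exact Real.rpow_le_rpow_of_nonpos (lt_min (by linarith) hk0) (min_le_right _ _)
      (by norm_num)
  have hrew : Real.pi * t / (k * (c * (1 / (2 * t)))) = 2 * Real.pi / c * (1 / t) := by
    rw [← ht3]; field_simp
  rw [hrew] at hI2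
  rw [hosc]
  calc _ ≤ _ := hmain
    _ ≤ (2 * A + 2 * Real.pi * B) / t + A * (6 * (Real.pi / t)) +
        A * (6 * (2 * (1 / (2 * t)) + 2 * Real.pi / c * (1 / t))) := by gcongr
    _ = ((2 * A + 2 * Real.pi * B) + A * (6 * Real.pi) +
        A * (6 * (1 + 2 * Real.pi / c))) * (1 / t) := by field_simp
    _ ≤ ((2 * A + 2 * Real.pi * B) + A * (6 * Real.pi) +
        A * (6 * (1 + 2 * Real.pi / c)) + 1) * (1 / t) :=
        mul_le_mul_of_nonneg_right (by linarith) (by positivity)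
    _ ≤ _ := by gcongr
end

section
/- Fix λ ∈ ℂ with Re λ = 0, fix g ∈ SL(2,ℝ) with g ∉ SO(2), and let φ be a lift of the circle map of g, M = max_{θ∈[0,2π]} φ'(θ) (so M > 1). There exist constants ε ∈ (0, 1) and C > 0 such that for all integers n ≥ 1 and k ≥ 1 with |k − M·n| ≤ ε·n, the oscillatory integral satisfies the Airy-type bound |I(k,n)| ≤ C·k^{−1/3}·(1 + k^{−1/3}·|M·n − k|)^{−1/4}. -/
/-!
The phase `k φ - n θ` has derivative `k φ' - n`, and `φ'(θ) = ‖g v(θ)‖⁻² = 1 / N(t)` with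
`N(t) = M - B sin² t`, `B = M - 1 / M > 0`, where `t` is the angle from a minimum of `φ'`
(`lift_hasDerivAt`, `exists_normal_form`). Hence the phase derivative is
`B n (sin² t - h) / N(t)` with `h = (M n - k) / (B n)`, which is small when `k` is close to `M n`:
two stationary points coalesce at `t = 0`.

The integrand is `2π`-periodic, so the circle may be cut into four quarters, all of which reduce by
translation and reflection to `0 ≤ t ≤ π / 2`, where the phase derivative is monotone. Put
`m = k ^ (-2/3) (1 + k ^ (-1/3) |M n - k|) ^ (1/4)`. Where `|sin² t - h| ≥ m`, a set of at most two
intervals, the first-derivative test `vdc_first` gives `O(1 / (k m))`, which is exactly the claimed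
bound. The rest is an interval on which the trivial estimate suffices, because its length is
`O(min (√m, m / √|h|))` (`sublevel_length`), again of the claimed size. The two estimates are
combined in `core`. No separate treatment is needed away from the degenerate point, nor any
second- or third-derivative test.
-/


open Matrix

/-! ### First-derivative test and level crossings -/

/-- A continuous function on `[p, q]` has a point at which it passes the level `l` upwards, where
an endpoint is returned if the level is not attained. For monotone `f` this splits `[p, q]` into
`{f ≤ l}` and `{l ≤ f}`, either of which may be degenerate. -/
lemma exists_crossing {f : ℝ → ℝ} (hf : Continuous f) {p q : ℝ} (hpq : p ≤ q) (l : ℝ) :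
    ∃ c ∈ Set.Icc p q, (c = p ∨ f c ≤ l) ∧ (c = q ∨ l ≤ f c) := by
  rcases le_or_gt l (f p) with h1 | h1
  · exact ⟨p, ⟨le_rfl, hpq⟩, Or.inl rfl, Or.inr h1⟩
  rcases le_or_gt (f q) l with h2 | h2
  · exact ⟨q, ⟨hpq, le_rfl⟩, Or.inr h2, Or.inl rfl⟩
  obtain ⟨c, hc, hcl⟩ := intermediate_value_Icc hpq hf.continuousOn ⟨h1.le, h2.le⟩
  exact ⟨c, hc, Or.inr hcl.le, Or.inr hcl.ge⟩

/-- Van der Corput's first-derivative estimate with amplitude `a`: if the phase `Φ` has derivative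
`G` with `|G| ≥ μ` and `G` monotone (its derivative `G'` has the constant sign `s`), the integral
is `O(1 / μ)`. One integration by parts moves the derivative onto `a / (i G)`, and monotonicity
makes `∫ |G'| / G²` telescope. -/
lemma vdc_first {a a' : ℝ → ℂ} {Φ G G' : ℝ → ℝ} {p q A μ s : ℝ} (hpq : p ≤ q)
    (hlen : q - p ≤ 2)
    (hΦ : ∀ t, HasDerivAt Φ (G t) t) (hG : ∀ t, HasDerivAt G (G' t) t) (hG' : Continuous G')
    (ha : ∀ t, HasDerivAt a (a' t) t) (ha' : Continuous a')
    (hA : ∀ t ∈ Set.Icc p q, ‖a t‖ ≤ A) (hA' : ∀ t ∈ Set.Icc p q, ‖a' t‖ ≤ A)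
    (hμ : 0 < μ) (hGμ : ∀ t ∈ Set.Icc p q, μ ≤ |G t|)
    (hs : |s| = 1) (hsG : ∀ t ∈ Set.Icc p q, |G' t| = s * G' t) :
    ‖∫ t in p..q, a t * Complex.exp (Complex.I * (Φ t : ℂ))‖ ≤ 8 * A / μ := by
  have hA0 : 0 ≤ A := (norm_nonneg _).trans (hA p ⟨le_rfl, hpq⟩)
  have hGne : ∀ t ∈ Set.Icc p q, G t ≠ 0 := fun t ht h => by
    have := hGμ t ht
    rw [h, abs_zero] at this
    linarith
  have hGc : Continuous G := continuous_iff_continuousAt.2 fun t => (hG t).continuousAt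
  have hΦc : Continuous Φ := continuous_iff_continuousAt.2 fun t => (hΦ t).continuousAt
  have hac : Continuous a := continuous_iff_continuousAt.2 fun t => (ha t).continuousAt
  have huIcc : Set.uIcc p q = Set.Icc p q := Set.uIcc_of_le hpq
  set u : ℝ → ℂ := fun t => a t / (Complex.I * (G t : ℂ)) with hu
  set u' : ℝ → ℂ := fun t =>
    (a' t * (Complex.I * (G t : ℂ)) - a t * (Complex.I * (G' t : ℂ))) / (Complex.I * (G t : ℂ)) ^ 2
    with hu'
  set v : ℝ → ℂ := fun t => Complex.exp (Complex.I * (Φ t : ℂ)) with hv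
  set v' : ℝ → ℂ := fun t => Complex.exp (Complex.I * (Φ t : ℂ)) * (Complex.I * (G t : ℂ)) with hv'
  have hIG : ∀ t ∈ Set.Icc p q, Complex.I * (G t : ℂ) ≠ 0 := fun t ht =>
    mul_ne_zero Complex.I_ne_zero (by exact_mod_cast hGne t ht)
  have hdu : ∀ t ∈ Set.uIcc p q, HasDerivAt u (u' t) t := by
    intro t ht
    rw [huIcc] at ht
    exact (ha t).div ((hG t).ofReal_comp.const_mul Complex.I) (hIG t ht)
  have hdv : ∀ t ∈ Set.uIcc p q, HasDerivAt v (v' t) t := fun t _ =>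
    ((hΦ t).ofReal_comp.const_mul Complex.I).cexp
  have hcu' : ContinuousOn u' (Set.uIcc p q) := by
    rw [huIcc]
    refine ContinuousOn.div (by fun_prop) (by fun_prop) fun t ht => pow_ne_zero _ (hIG t ht)
  have hcv' : Continuous v' := by fun_prop
  have hparts := intervalIntegral.integral_mul_deriv_eq_deriv_mul hdu hdv
    hcu'.intervalIntegrable (hcv'.intervalIntegrable _ _)
  have hint : ∫ t in p..q, a t * Complex.exp (Complex.I * (Φ t : ℂ)) = ∫ t in p..q, u t * v' t := by
    refine intervalIntegral.integral_congr fun t ht => ?_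
    rw [huIcc] at ht
    simp only [hu, hv']
    rw [mul_comm (Complex.exp _), ← mul_assoc, div_mul_cancel₀ _ (hIG t ht)]
  have hnv : ∀ t, ‖v t‖ = 1 := fun t => by
    simp only [hv]
    rw [mul_comm]
    exact Complex.norm_exp_ofReal_mul_I _
  have hnu : ∀ t ∈ Set.Icc p q, ‖u t‖ ≤ A / μ := fun t ht => by
    simp only [hu, norm_div, norm_mul, Complex.norm_I, one_mul, Complex.norm_real, Real.norm_eq_abs]
    exact div_le_div₀ hA0 (hA t ht) hμ (hGμ t ht)
  have hbd : ∀ t ∈ Set.Icc p q, ‖u' t * v t‖ ≤ A / μ + A * s * (G' t / G t ^ 2) := by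
    intro t ht
    have h1 := hGμ t ht
    have hGp : 0 < |G t| := hμ.trans_le h1
    rw [norm_mul, hnv, mul_one]
    have : u' t = a' t / (Complex.I * (G t : ℂ)) -
        a t * (Complex.I * (G' t : ℂ)) / (Complex.I * (G t : ℂ)) ^ 2 := by
      have := hIG t ht
      simp only [hu']
      field_simp
    rw [this]
    refine (norm_sub_le _ _).trans (add_le_add ?_ ?_)
    · simp only [norm_div, norm_mul, Complex.norm_I, one_mul, Complex.norm_real, Real.norm_eq_abs]
      exact div_le_div₀ hA0 (hA' t ht) hμ h1
    · simp only [norm_div, norm_mul, norm_pow, Complex.norm_I, one_mul, Complex.norm_real,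
        Real.norm_eq_abs, sq_abs, hsG t ht]
      have h2 : 0 ≤ s * G' t := hsG t ht ▸ abs_nonneg _
      calc ‖a t‖ * (s * G' t) / G t ^ 2 ≤ A * (s * G' t) / G t ^ 2 := by
            gcongr
            exact hA t ht
        _ = _ := by ring
  have hq : ContinuousOn (fun t => G' t / G t ^ 2) (Set.uIcc p q) := by
    rw [huIcc]
    exact ContinuousOn.div (by fun_prop) (by fun_prop) fun t ht => pow_ne_zero _ (hGne t ht)
  have hFTC : ∫ t in p..q, G' t / G t ^ 2 = -(G q)⁻¹ - -(G p)⁻¹ := by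
    refine intervalIntegral.integral_eq_sub_of_hasDerivAt (f := fun t => -(G t)⁻¹) (fun t ht => ?_)
      hq.intervalIntegrable
    rw [huIcc] at ht
    exact ((hG t).fun_inv (hGne t ht)).fun_neg.congr_deriv (by ring)
  have hinv : ∀ t ∈ Set.Icc p q, |(G t)⁻¹| ≤ 1 / μ := fun t ht => by
    rw [abs_inv, ← one_div]
    exact one_div_le_one_div_of_le hμ (hGμ t ht)
  have hrest : ‖∫ t in p..q, u' t * v t‖ ≤ A / μ * (q - p) + A * (2 / μ) := by
    refine (intervalIntegral.norm_integral_le_of_norm_le hpq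
      (g := fun t => A / μ + A * s * (G' t / G t ^ 2)) ?_ ?_).trans ?_
    · exact Filter.Eventually.of_forall fun t ht => hbd t ⟨ht.1.le, ht.2⟩
    · exact (continuousOn_const.add (continuousOn_const.mul hq)).intervalIntegrable
    · rw [intervalIntegral.integral_add (by simp) (hq.intervalIntegrable.const_mul _),
        intervalIntegral.integral_const_mul, hFTC, intervalIntegral.integral_const, smul_eq_mul,
        mul_comm (q - p), mul_assoc A s]
      gcongr
      refine (le_abs_self _).trans ?_
      rw [abs_mul, hs, one_mul]
      have h1 := abs_le.1 (hinv p ⟨le_rfl, hpq⟩)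
      have h2 := abs_le.1 (hinv q ⟨hpq, le_rfl⟩)
      have h3 : 2 / μ = 1 / μ + 1 / μ := by ring
      rw [abs_le]
      constructor <;> linarith
  have hp := hnu p ⟨le_rfl, hpq⟩
  have hq' := hnu q ⟨hpq, le_rfl⟩
  rw [hint, hparts]
  have e1 : ‖u q * v q‖ ≤ A / μ := by rw [norm_mul, hnv, mul_one]; exact hq'
  have e2 : ‖u p * v p‖ ≤ A / μ := by rw [norm_mul, hnv, mul_one]; exact hp
  have e3 : A / μ * (q - p) ≤ A / μ * 2 := by gcongr
  have e4 := norm_sub_le (u q * v q - u p * v p) (∫ t in p..q, u' t * v t)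
  have e5 := norm_sub_le (u q * v q) (u p * v p)
  have e6 : 0 ≤ A / μ := by positivity
  have e7 : 8 * A / μ = 8 * (A / μ) := by ring
  have e8 : A * (2 / μ) = 2 * (A / μ) := by ring
  rw [e7]
  linarith

/-! ### Length of the nearly stationary interval -/

set_option maxHeartbeats 1000000 in
/-- Length of the part of `[0, π/2]` on which `|sin² - h| ≤ m`, for `m = u / τ²` and
`|h| ≳ (u⁴ - 1) / τ²`: it is `O(1 / (τ u))`. It is at most of order `√m` in all cases, which suffices
for bounded `u`. For large `u` one has `m ≤ |h| / 2`; then negative `h` is impossible and for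
positive `h` the length is at most of order `m / √h`. -/
lemma sublevel_length {B τ u h m c₁ c₂ : ℝ} (hB : 0 < B) (hτ : 0 < τ) (hu : 1 ≤ u)
    (hm : m * τ ^ 2 = u) (hh : |h| ≤ 1 / 4) (hhu : u ^ 4 - 1 ≤ 2 * B * τ ^ 2 * |h|)
    (h0 : 0 ≤ c₁) (h12 : c₁ ≤ c₂) (h2 : c₂ ≤ Real.pi / 2)
    (hc₁ : h - m ≤ Real.sin c₁ ^ 2) (hc₂ : Real.sin c₂ ^ 2 ≤ h + m) :
    (c₂ - c₁) * (τ * u) ≤ 12 * (1 + B) ^ 2 := by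
  have hπ := Real.pi_pos
  have hπ2 := Real.pi_lt_d2
  have hm0 : 0 < m := by
    by_contra hneg
    nlinarith [mul_nonneg (sub_nonneg.2 (not_lt.1 hneg)) (sq_nonneg τ)]
  set d := c₂ - c₁ with hd
  have hd0 : 0 ≤ d := by linarith
  have hsd : d ≤ 1.6 * Real.sin d := by
    have h := Real.mul_le_sin hd0 (by linarith)
    rw [div_mul_eq_mul_div, div_le_iff₀ hπ] at h
    have : 0 ≤ Real.sin d := Real.sin_nonneg_of_nonneg_of_le_pi hd0 (by linarith)
    nlinarith
  have ha : 0 ≤ Real.sin c₁ := Real.sin_nonneg_of_nonneg_of_le_pi h0 (by linarith)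
  have hb : 0 ≤ Real.sin c₂ := Real.sin_nonneg_of_nonneg_of_le_pi (by linarith) (by linarith)
  have hx : 0 ≤ Real.cos c₁ := Real.cos_nonneg_of_mem_Icc ⟨by linarith, by linarith⟩
  have hy : 0 ≤ Real.cos c₂ := Real.cos_nonneg_of_mem_Icc ⟨by linarith, by linarith⟩
  have hs0 : 0 ≤ Real.sin d := Real.sin_nonneg_of_nonneg_of_le_pi hd0 (by linarith)
  have hsinsub : Real.sin d = Real.sin c₂ * Real.cos c₁ - Real.cos c₂ * Real.sin c₁ :=
    Real.sin_sub _ _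
  set S := Real.sin c₂ * Real.cos c₁ + Real.cos c₂ * Real.sin c₁ with hS
  have hc1 := Real.sin_sq_add_cos_sq c₁
  have hc2 := Real.sin_sq_add_cos_sq c₂
  -- `S = sin (c₂ + c₁)`, and `sin (c₂ - c₁) sin (c₂ + c₁) = sin² c₂ - sin² c₁`
  have hprod : Real.sin d * S = Real.sin c₂ ^ 2 - Real.sin c₁ ^ 2 := by
    rw [hsinsub, hS]
    have e1 : Real.cos c₁ ^ 2 = 1 - Real.sin c₁ ^ 2 := by linarith
    have e2 : Real.cos c₂ ^ 2 = 1 - Real.sin c₂ ^ 2 := by linarith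
    linear_combination Real.sin c₂ ^ 2 * e1 - Real.sin c₁ ^ 2 * e2
  have hdiff : Real.sin d * S ≤ 2 * m := by linarith
  have hdS : Real.sin d ≤ S := by
    rw [hsinsub, hS]
    have := mul_nonneg hy ha
    linarith
  have hd2 : d ^ 2 ≤ 2.56 * Real.sin d ^ 2 := by nlinarith
  have hK : (0 : ℝ) ≤ 12 * (1 + B) ^ 2 := by positivity
  refine le_of_sq_le_sq ?_ hK
  have hu0 : 0 < u := by linarith
  rcases le_total u (2 + 2 * B) with hcase | hcase
  · have h1 : d ^ 2 ≤ 5.12 * m := by nlinarith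
    have h2 : (d * (τ * u)) ^ 2 ≤ 5.12 * u ^ 3 := by
      calc (d * (τ * u)) ^ 2 = d ^ 2 * (τ ^ 2 * u ^ 2) := by ring
        _ ≤ 5.12 * m * (τ ^ 2 * u ^ 2) := by gcongr
        _ = 5.12 * (m * τ ^ 2) * u ^ 2 := by ring
        _ = 5.12 * u ^ 3 := by rw [hm]; ring
    have h3 : u ^ 3 ≤ (2 + 2 * B) ^ 3 := by gcongr
    have h4 : (1 + B) ^ 3 ≤ (1 + B) ^ 4 := pow_le_pow_right₀ (by linarith) (by norm_num)
    have h5 : (2 + 2 * B) ^ 3 = 8 * (1 + B) ^ 3 := by ring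
    have h6 : (12 * (1 + B) ^ 2) ^ 2 = 144 * (1 + B) ^ 4 := by ring
    have h7 : 0 < (1 + B) ^ 4 := by positivity
    rw [h6]
    linarith
  · have hu3 : 8 * (1 + B) ≤ u ^ 3 := by
      have : (2 + 2 * B) ^ 3 ≤ u ^ 3 := by gcongr
      nlinarith [sq_nonneg B, mul_pos hB hB, mul_pos (mul_pos hB hB) hB]
    have hu4 : u ^ 4 ≤ 4 * B * τ ^ 2 * |h| := by
      have : 2 ≤ u ^ 4 := by nlinarith
      linarith
    have hmh : 2 * m ≤ |h| := by
      have h1 : 8 * B * u ≤ u ^ 4 := by nlinarith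
      have h2 : 8 * B * u ≤ 4 * B * τ ^ 2 * |h| := h1.trans hu4
      rw [← hm] at h2
      have h3 : 0 < 4 * B * τ ^ 2 := by positivity
      refine le_of_mul_le_mul_left ?_ h3
      linarith
    have hhpos : 0 < h := by
      by_contra hneg
      rw [abs_of_nonpos (not_lt.1 hneg)] at hmh
      nlinarith [sq_nonneg (Real.sin c₂)]
    rw [abs_of_pos hhpos] at *
    have hsq1 : Real.sin c₁ ^ 2 ≤ Real.sin c₂ ^ 2 := by
      have := mul_nonneg hs0 (hs0.trans hdS)
      linarith
    -- `sin² cᵢ ≥ h / 2` and `cos² cᵢ ≥ 5 / 8`, since `h ≤ 1 / 4` and `m ≤ h / 2`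
    have hS2 : 5 / 8 * h ≤ S ^ 2 := by
      have e1 : h / 2 * (5 / 8) ≤ Real.sin c₂ ^ 2 * Real.cos c₁ ^ 2 :=
        mul_le_mul (by linarith) (by linarith) (by norm_num) (sq_nonneg _)
      have e2 : 5 / 8 * (h / 2) ≤ Real.cos c₂ ^ 2 * Real.sin c₁ ^ 2 :=
        mul_le_mul (by linarith) (by linarith) (by linarith) (sq_nonneg _)
      have e3 : 0 ≤ (Real.sin c₂ * Real.cos c₁) * (Real.cos c₂ * Real.sin c₁) := by positivity
      rw [hS]
      nlinarith
    have hfin : d ^ 2 * h ≤ 16.4 * m ^ 2 := by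
      have e1 : (Real.sin d * S) ^ 2 ≤ (2 * m) ^ 2 :=
        pow_le_pow_left₀ (mul_nonneg hs0 (hs0.trans hdS)) hdiff 2
      have e2 : Real.sin d ^ 2 * (5 / 8 * h) ≤ Real.sin d ^ 2 * S ^ 2 := by gcongr
      have e3 : d ^ 2 * h ≤ 2.56 * Real.sin d ^ 2 * h := by gcongr
      nlinarith
    have hmain : (d * (τ * u)) ^ 2 * u ^ 2 ≤ 65.6 * B * u ^ 2 := by
      calc (d * (τ * u)) ^ 2 * u ^ 2 = d ^ 2 * τ ^ 2 * u ^ 4 := by ring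
        _ ≤ d ^ 2 * τ ^ 2 * (4 * B * τ ^ 2 * h) := by gcongr
        _ = 4 * B * τ ^ 4 * (d ^ 2 * h) := by ring
        _ ≤ 4 * B * τ ^ 4 * (16.4 * m ^ 2) := by gcongr
        _ = 65.6 * B * (m * τ ^ 2) ^ 2 := by ring
        _ = 65.6 * B * u ^ 2 := by rw [hm]
    have := le_of_mul_le_mul_right hmain (by positivity)
    have h6 : (12 * (1 + B) ^ 2) ^ 2 = 144 * (1 + B) ^ 4 := by ring
    have h7 : 1 + B ≤ (1 + B) ^ 4 := le_self_pow₀ (by linarith) (by norm_num)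
    rw [h6]
    linarith

/-! ### The integral over a quarter circle -/

/-- Normal form of `‖g v(θ)‖²`: `t` is the angle from a maximum of the norm, where the value is `M`;
the minimum `1 / M` is taken at `t = π / 2`. -/
noncomputable def qN (M t : ℝ) : ℝ := M - (M - 1 / M) * Real.sin t ^ 2

lemma qN_bounds {M : ℝ} (hM : 1 < M) (t : ℝ) : 1 / M ≤ qN M t ∧ qN M t ≤ M := by
  have h1 : 1 / M < 1 := by rw [div_lt_one (by linarith)]; exact hM
  have h2 := Real.sin_sq_le_one t
  have h3 := sq_nonneg (Real.sin t)
  unfold qN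
  constructor <;> nlinarith

lemma qN_pos {M : ℝ} (hM : 1 < M) (t : ℝ) : 0 < qN M t :=
  lt_of_lt_of_le (by positivity) (qN_bounds hM t).1

/-- The amplitude `φ' ^ w` in the variable `t`. -/
lemma contDiff_amp {M : ℝ} (hM : 1 < M) (w : ℂ) :
    ContDiff ℝ 1 (fun t => ((1 / qN M t : ℝ) : ℂ) ^ w) := by
  have h : (fun t => ((1 / qN M t : ℝ) : ℂ) ^ w) =
      fun t => Complex.exp ((Real.log (1 / qN M t) : ℂ) * w) := by
    funext t
    have hp : 0 < 1 / qN M t := one_div_pos.2 (qN_pos hM t)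
    rw [Complex.cpow_def_of_ne_zero (by exact_mod_cast hp.ne'), Complex.ofReal_log hp.le]
  rw [h]
  have hN : ContDiff ℝ 1 (qN M) := by
    unfold qN
    fun_prop
  have hl : ContDiff ℝ 1 (fun t => Real.log (1 / qN M t)) :=
    (contDiff_const.div hN fun t => (qN_pos hM t).ne').log
      fun t => (one_div_pos.2 (qN_pos hM t)).ne'
  exact ((Complex.ofRealCLM.contDiff.comp hl).mul contDiff_const).cexp

/-- The Airy-type bound on one quarter circle, from a minimum of `φ'` to a maximum. The parameters
are `τ = k ^ (1/3)` and `u = (1 + k ^ (-1/3) |M n - k|) ^ (1/4)`, so that the bound reads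
`O(1 / (τ u))`; the sign `σ` is the direction in which the quarter is traversed. -/
lemma core {M : ℝ} (hM : 1 < M) (w : ℂ) :
    ∃ C : ℝ, 0 < C ∧ ∀ (n τ u σ : ℝ) (Φ : ℝ → ℝ), 0 < n → 0 < τ → 1 ≤ u →
      |M * n - τ ^ 3| = (u ^ 4 - 1) * τ → |M * n - τ ^ 3| ≤ 1 / 2 * n →
      |M * n - τ ^ 3| ≤ (M - 1 / M) / 4 * n → |σ| = 1 →
      (∀ t, HasDerivAt Φ (σ * (τ ^ 3 / qN M t - n)) t) →
      ‖∫ t in (0 : ℝ)..(Real.pi / 2),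
        ((1 / qN M t : ℝ) : ℂ) ^ w * Complex.exp (Complex.I * (Φ t : ℂ))‖ * (τ * u) ≤ C := by
  have hM0 : 0 < M := by linarith
  set B : ℝ := M - 1 / M with hBdef
  have hB : 0 < B := by
    have : 1 / M < 1 := by rw [div_lt_one hM0]; exact hM
    linarith
  set a : ℝ → ℂ := fun t => ((1 / qN M t : ℝ) : ℂ) ^ w with ha_def
  have hcd : ContDiff ℝ 1 a := contDiff_amp hM w
  have hac : Continuous a := hcd.continuous
  have hac' : Continuous (deriv a) := hcd.continuous_deriv le_rfl
  have had : ∀ t, HasDerivAt a (deriv a t) t := fun t =>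
    (hcd.differentiable one_ne_zero t).hasDerivAt
  obtain ⟨A₁, hA₁⟩ := isCompact_Icc.exists_bound_of_continuousOn
    (s := Set.Icc (0 : ℝ) (Real.pi / 2)) hac.continuousOn
  obtain ⟨A₂, hA₂⟩ := isCompact_Icc.exists_bound_of_continuousOn
    (s := Set.Icc (0 : ℝ) (Real.pi / 2)) hac'.continuousOn
  set A : ℝ := max 1 (max A₁ A₂) with hA
  have hA0 : 0 < A := lt_of_lt_of_le one_pos (le_max_left _ _)
  have hAa : ∀ t ∈ Set.Icc (0 : ℝ) (Real.pi / 2), ‖a t‖ ≤ A := fun t ht =>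
    (hA₁ t ht).trans ((le_max_left _ _).trans (le_max_right _ _))
  have hAa' : ∀ t ∈ Set.Icc (0 : ℝ) (Real.pi / 2), ‖deriv a t‖ ≤ A := fun t ht =>
    (hA₂ t ht).trans ((le_max_right _ _).trans (le_max_right _ _))
  refine ⟨A * (12 * (1 + B) ^ 2) + 2 * (8 * A * (M * (M + 1) / B)), by positivity, ?_⟩
  intro n τ u σ Φ hn hτ hu hy h12 hB4 hσ hΦ
  have hu0 : 0 < u := by linarith
  set h : ℝ := (M * n - τ ^ 3) / (B * n) with hh
  -- this threshold balances `1 / (k m)`, from the first-derivative test, against the length of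
  -- the set where `|sin² - h| ≤ m`
  set m : ℝ := u / τ ^ 2 with hm
  set μ : ℝ := B * n * m / M with hμdef
  have hm0 : 0 < m := by positivity
  have hμ : 0 < μ := by positivity
  have habs : |h| * (B * n) = |M * n - τ ^ 3| := by
    rw [hh, abs_div, abs_of_pos (show 0 < B * n by positivity)]
    field_simp
  have habs14 : |h| ≤ 1 / 4 := by
    rw [← habs] at hB4
    have : 0 < B * n := by positivity
    refine le_of_mul_le_mul_right ?_ this
    linarith
  have hτn := abs_le.1 h12
  have hnτ : n ≤ 2 * τ ^ 3 := by nlinarith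
  have hτ3 : τ ^ 3 ≤ (M + 1) * n := by nlinarith
  have hhu : u ^ 4 - 1 ≤ 2 * B * τ ^ 2 * |h| := by
    refine le_of_mul_le_mul_right ?_ hτ
    rw [← hy, ← habs]
    have : |h| * B * n ≤ |h| * B * (2 * τ ^ 3) := by gcongr
    linarith
  set G : ℝ → ℝ := fun t => σ * (τ ^ 3 / qN M t - n) with hG
  set G' : ℝ → ℝ := fun t =>
    σ * (τ ^ 3 * (B * (2 * Real.sin t * Real.cos t)) / qN M t ^ 2) with hG'
  have hN' : ∀ t, HasDerivAt (qN M) (-(B * (2 * Real.sin t * Real.cos t))) t := fun t => by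
    have := (((Real.hasDerivAt_sin t).fun_pow 2).const_mul B).const_sub M
    refine this.congr_deriv ?_
    push_cast
    ring
  have hNc : Continuous (qN M) := continuous_iff_continuousAt.2 fun t => (hN' t).continuousAt
  have hdG : ∀ t, HasDerivAt G (G' t) t := fun t => by
    have := ((((hN' t).fun_inv (qN_pos hM t).ne').const_mul (τ ^ 3)).sub_const n).const_mul σ
    refine this.congr_deriv ?_
    simp only [hG']
    ring
  have hG'c : Continuous G' := by
    refine continuous_const.mul (Continuous.div (by fun_prop) (by fun_prop) fun t => ?_)
    exact pow_ne_zero _ (qN_pos hM t).ne'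
  have hsG : ∀ t ∈ Set.Icc (0 : ℝ) (Real.pi / 2), |G' t| = σ * G' t := fun t ht => by
    have h1 : 0 ≤ Real.sin t :=
      Real.sin_nonneg_of_nonneg_of_le_pi ht.1 (by linarith [ht.2, Real.pi_pos])
    have h2 : 0 ≤ Real.cos t :=
      Real.cos_nonneg_of_mem_Icc ⟨by linarith [ht.1, Real.pi_pos], ht.2⟩
    have h3 : σ * σ = 1 := by rw [← abs_mul_abs_self, hσ, one_mul]
    simp only [hG']
    rw [abs_mul, hσ, ← mul_assoc σ, h3, one_mul, one_mul, abs_of_nonneg (by positivity)]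
  -- the phase derivative factors as `σ B n (sin² t - h) / qN M t`
  have hGμ : ∀ t, m ≤ |Real.sin t ^ 2 - h| → μ ≤ |G t| := fun t ht => by
    have hN := qN_pos hM t
    have e1 : τ ^ 3 / qN M t - n = B * n * (Real.sin t ^ 2 - h) / qN M t := by
      have : B * n * h = M * n - τ ^ 3 := by rw [hh]; field_simp
      rw [div_sub' hN.ne', mul_sub, this]
      congr 1
      unfold qN
      rw [← hBdef]
      ring
    simp only [hG]
    rw [abs_mul, hσ, one_mul, e1, abs_div, abs_mul, abs_of_pos (show 0 < B * n by positivity),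
      abs_of_pos hN, hμdef]
    exact div_le_div₀ (by positivity) (by gcongr) hN (qN_bounds hM t).2
  have hmono : ∀ s t : ℝ, 0 ≤ s → s ≤ t → t ≤ Real.pi / 2 → Real.sin s ^ 2 ≤ Real.sin t ^ 2 :=
    fun s t h0 hst ht => by
      have h1 : 0 ≤ Real.sin s :=
        Real.sin_nonneg_of_nonneg_of_le_pi h0 (by linarith [Real.pi_pos])
      exact pow_le_pow_left₀ h1 (Real.sin_le_sin_of_le_of_le_pi_div_two
        (by linarith [Real.pi_pos]) ht hst) 2
  have hπ : (0 : ℝ) ≤ Real.pi / 2 := by positivity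
  obtain ⟨c₁, hc₁, hc₁l, hc₁r⟩ := exists_crossing
    (f := fun t => Real.sin t ^ 2) (by fun_prop) hπ (h - m)
  obtain ⟨c₂, hc₂, hc₂l, hc₂r⟩ := exists_crossing
    (f := fun t => Real.sin t ^ 2) (by fun_prop) hc₁.2 (h + m)
  set f : ℝ → ℂ := fun t => a t * Complex.exp (Complex.I * (Φ t : ℂ)) with hf
  have hΦc : Continuous Φ := continuous_iff_continuousAt.2 fun t => (hΦ t).continuousAt
  have hfc : Continuous f := by fun_prop
  have hlen : Real.pi / 2 ≤ 2 := by linarith [Real.pi_lt_d2]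
  have hμC : 8 * A / μ * (τ * u) ≤ 8 * A * (M * (M + 1) / B) := by
    have : 8 * A / μ * (τ * u) = 8 * A * (M * τ ^ 3 / (B * n)) := by
      rw [hμdef, hm]
      field_simp
    rw [this]
    gcongr 8 * A * ?_
    rw [div_le_div_iff₀ (by positivity) hB]
    calc M * τ ^ 3 * B ≤ M * ((M + 1) * n) * B := by gcongr
      _ = _ := by ring
  have hC0 : 0 ≤ 8 * A * (M * (M + 1) / B) := by positivity
  have hI₁ : ‖∫ t in (0 : ℝ)..c₁, f t‖ * (τ * u) ≤ 8 * A * (M * (M + 1) / B) := by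
    rcases hc₁l with hc | hc
    · rw [hc, intervalIntegral.integral_same, norm_zero, zero_mul]
      exact hC0
    · refine le_trans (mul_le_mul_of_nonneg_right ?_ (by positivity)) hμC
      have hsub : Set.Icc 0 c₁ ⊆ Set.Icc 0 (Real.pi / 2) := Set.Icc_subset_Icc_right hc₁.2
      refine vdc_first hc₁.1 (by linarith [hc₁.2]) hΦ hdG hG'c had hac'
        (fun t ht => hAa t (hsub ht)) (fun t ht => hAa' t (hsub ht)) hμ (fun t ht => ?_) hσ
        fun t ht => hsG t (hsub ht)
      have := hmono t c₁ ht.1 ht.2 hc₁.2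
      exact hGμ t (le_abs.2 (Or.inr (by linarith)))
  have hI₃ : ‖∫ t in c₂..(Real.pi / 2), f t‖ * (τ * u) ≤ 8 * A * (M * (M + 1) / B) := by
    rcases hc₂r with hc | hc
    · rw [hc, intervalIntegral.integral_same, norm_zero, zero_mul]
      exact hC0
    · refine le_trans (mul_le_mul_of_nonneg_right ?_ (by positivity)) hμC
      have h0 : 0 ≤ c₂ := hc₁.1.trans hc₂.1
      have hsub : Set.Icc c₂ (Real.pi / 2) ⊆ Set.Icc 0 (Real.pi / 2) := Set.Icc_subset_Icc_left h0
      refine vdc_first hc₂.2 (by linarith) hΦ hdG hG'c had hac'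
        (fun t ht => hAa t (hsub ht)) (fun t ht => hAa' t (hsub ht)) hμ (fun t ht => ?_) hσ
        fun t ht => hsG t (hsub ht)
      have := hmono c₂ t h0 ht.1 ht.2
      exact hGμ t (le_abs.2 (Or.inl (by linarith)))
  have hI₂ : ‖∫ t in c₁..c₂, f t‖ * (τ * u) ≤ A * (12 * (1 + B) ^ 2) := by
    rcases eq_or_lt_of_le hc₂.1 with hc | hc
    · rw [hc, intervalIntegral.integral_same, norm_zero, zero_mul]
      positivity
    have hl := sublevel_length hB hτ hu (show m * τ ^ 2 = u by rw [hm]; field_simp) habs14 hhu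
      hc₁.1 hc₂.1 hc₂.2
      (hc₁r.resolve_left fun e => by linarith [hc₂.2]) (hc₂l.resolve_left hc.ne')
    have : ‖∫ t in c₁..c₂, f t‖ ≤ A * |c₂ - c₁| := by
      refine intervalIntegral.norm_integral_le_of_norm_le_const fun t ht => ?_
      rw [Set.uIoc_of_le hc₂.1] at ht
      simp only [hf]
      rw [norm_mul, mul_comm Complex.I, Complex.norm_exp_ofReal_mul_I, mul_one]
      exact hAa t ⟨hc₁.1.trans ht.1.le, ht.2.trans hc₂.2⟩
    rw [abs_of_nonneg (by linarith)] at this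
    calc _ ≤ A * (c₂ - c₁) * (τ * u) := by gcongr
      _ = A * ((c₂ - c₁) * (τ * u)) := by ring
      _ ≤ _ := by gcongr
  have hi : ∀ x y : ℝ, IntervalIntegrable f MeasureTheory.volume x y :=
    fun x y => hfc.intervalIntegrable x y
  rw [← intervalIntegral.integral_add_adjacent_intervals (hi 0 c₂) (hi c₂ (Real.pi / 2)),
    ← intervalIntegral.integral_add_adjacent_intervals (hi 0 c₁) (hi c₁ c₂)]
  have hτu : 0 ≤ τ * u := by positivity
  have := mul_le_mul_of_nonneg_right
    (norm_add₃_le (a := ∫ t in (0 : ℝ)..c₁, f t) (b := ∫ t in c₁..c₂, f t)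
      (c := ∫ t in c₂..(Real.pi / 2), f t)) hτu
  rw [add_mul, add_mul] at this
  linarith

/-! ### The circle map and its lift -/

/-- The first coordinate of `g v(θ)`. -/
noncomputable def gX (g : Matrix.SpecialLinearGroup (Fin 2) ℝ) (θ : ℝ) : ℝ :=
  g.1 0 0 * Real.cos θ + g.1 0 1 * Real.sin θ

/-- The second coordinate of `g v(θ)`. -/
noncomputable def gY (g : Matrix.SpecialLinearGroup (Fin 2) ℝ) (θ : ℝ) : ℝ :=
  g.1 1 0 * Real.cos θ + g.1 1 1 * Real.sin θ

lemma det_eq (g : Matrix.SpecialLinearGroup (Fin 2) ℝ) :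
    g.1 0 0 * g.1 1 1 - g.1 0 1 * g.1 1 0 = 1 := by
  have := g.2
  rwa [Matrix.det_fin_two] at this

lemma lift_coords {g : Matrix.SpecialLinearGroup (Fin 2) ℝ} {φ : ℝ → ℝ} (hφ : IsLift g φ) (θ : ℝ) :
    gX g θ = Real.sqrt (gX g θ ^ 2 + gY g θ ^ 2) * Real.cos (φ θ) ∧
    gY g θ = Real.sqrt (gX g θ ^ 2 + gY g θ ^ 2) * Real.sin (φ θ) := by
  have h := hφ.2 θ
  have h0 := congrFun h 0
  have h1 := congrFun h 1
  simp only [enorm2, vCirc, Matrix.mulVec, dotProduct, Fin.sum_univ_two, Pi.smul_apply,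
    smul_eq_mul, Matrix.cons_val_zero, Matrix.cons_val_one] at h0 h1
  exact ⟨h0, h1⟩

lemma norm_sq_pos (g : Matrix.SpecialLinearGroup (Fin 2) ℝ) (θ : ℝ) :
    0 < gX g θ ^ 2 + gY g θ ^ 2 := by
  have hd := det_eq g
  by_contra hneg
  have hX : gX g θ = 0 := by nlinarith [sq_nonneg (gX g θ), sq_nonneg (gY g θ)]
  have hY : gY g θ = 0 := by nlinarith [sq_nonneg (gX g θ), sq_nonneg (gY g θ)]
  unfold gX at hX
  unfold gY at hY
  have hc : Real.cos θ = 0 := by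
    linear_combination (-Real.cos θ) * hd + g.1 1 1 * hX - g.1 0 1 * hY
  have hs : Real.sin θ = 0 := by
    linear_combination (-Real.sin θ) * hd - g.1 1 0 * hX + g.1 0 0 * hY
  have := Real.sin_sq_add_cos_sq θ
  rw [hc, hs] at this
  norm_num at this

/-- `φ' = ‖g v‖⁻²`, by differentiating `X sin φ = Y cos φ`; the Wronskian of `X` and `Y` is
`det g = 1`. -/
lemma lift_hasDerivAt {g : Matrix.SpecialLinearGroup (Fin 2) ℝ} {φ : ℝ → ℝ} (hφ : IsLift g φ)
    (θ : ℝ) : HasDerivAt φ (1 / (gX g θ ^ 2 + gY g θ ^ 2)) θ := by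
  have hd : HasDerivAt φ (deriv φ θ) θ :=
    (hφ.1.differentiable (by simp) θ).hasDerivAt
  convert hd using 1
  have hX : HasDerivAt (gX g) (g.1 0 0 * -Real.sin θ + g.1 0 1 * Real.cos θ) θ :=
    ((Real.hasDerivAt_cos θ).const_mul _).add ((Real.hasDerivAt_sin θ).const_mul _)
  have hY : HasDerivAt (gY g) (g.1 1 0 * -Real.sin θ + g.1 1 1 * Real.cos θ) θ :=
    ((Real.hasDerivAt_cos θ).const_mul _).add ((Real.hasDerivAt_sin θ).const_mul _)
  have hZ := (hX.mul hd.sin).sub (hY.mul hd.cos)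
  have hZ0 : gX g * (fun x => Real.sin (φ x)) - gY g * (fun x => Real.cos (φ x)) = fun _ => 0 := by
    funext t
    obtain ⟨h1, h2⟩ := lift_coords hφ t
    simp only [Pi.sub_apply, Pi.mul_apply]
    linear_combination Real.sin (φ t) * h1 - Real.cos (φ t) * h2
  rw [hZ0] at hZ
  have hz := hZ.unique (hasDerivAt_const θ (0 : ℝ))
  obtain ⟨h1, h2⟩ := lift_coords hφ θ
  have hp := norm_sq_pos g θ
  have hdet := det_eq g
  set R := Real.sqrt (gX g θ ^ 2 + gY g θ ^ 2) with hR
  rw [div_eq_iff hp.ne']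
  have hsc := Real.sin_sq_add_cos_sq θ
  have key : (g.1 0 0 * -Real.sin θ + g.1 0 1 * Real.cos θ) * gY g θ -
      (g.1 1 0 * -Real.sin θ + g.1 1 1 * Real.cos θ) * gX g θ = -1 := by
    unfold gX gY
    linear_combination (-Real.sin θ ^ 2 - Real.cos θ ^ 2) * hdet - hsc
  have hz2 : R * ((g.1 0 0 * -Real.sin θ + g.1 0 1 * Real.cos θ) * Real.sin (φ θ) +
    gX g θ * (Real.cos (φ θ) * deriv φ θ) -
    ((g.1 1 0 * -Real.sin θ + g.1 1 1 * Real.cos θ) * Real.cos (φ θ) +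
    gY g θ * (-Real.sin (φ θ) * deriv φ θ))) = 0 := by rw [hz, mul_zero]
  linear_combination key - hz2 -
    (gX g θ * deriv φ θ - (g.1 1 0 * -Real.sin θ + g.1 1 1 * Real.cos θ)) * h1 -
    (gY g θ * deriv φ θ + (g.1 0 0 * -Real.sin θ + g.1 0 1 * Real.cos θ)) * h2

/-- `‖g v(θ)‖² = α + β cos 2θ + γ sin 2θ` with `α² - β² - γ² = (det g)² = 1`, and `β = γ = 0` would
force `gᵀ g = 1`. The polar form of `β + γ i` gives the angle `θ₀` of a maximum. -/
lemma exists_normal_form (g : Matrix.SpecialLinearGroup (Fin 2) ℝ)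
    (hg : (g : Matrix (Fin 2) (Fin 2) ℝ)ᵀ * (g : Matrix (Fin 2) (Fin 2) ℝ) ≠ 1) :
    ∃ M θ₀ : ℝ, 1 < M ∧ -(Real.pi / 2) < θ₀ ∧ θ₀ ≤ Real.pi / 2 ∧
      ∀ θ, gX g θ ^ 2 + gY g θ ^ 2 = qN M (θ - θ₀) := by
  have hdet := det_eq g
  set a := g.1 0 0 with ha
  set b := g.1 0 1 with hb
  set c := g.1 1 0 with hc
  set d := g.1 1 1 with hd
  set α := (a ^ 2 + b ^ 2 + c ^ 2 + d ^ 2) / 2 with hα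
  set β := (a ^ 2 + c ^ 2 - b ^ 2 - d ^ 2) / 2 with hβ
  set γ := a * b + c * d with hγ
  set z : ℂ := ⟨β, γ⟩ with hz
  set ρ := ‖z‖ with hρ
  have hρsq : ρ ^ 2 = β ^ 2 + γ ^ 2 := by
    rw [hρ, Complex.sq_norm, Complex.normSq_mk]
    ring
  have hαρ : α ^ 2 - ρ ^ 2 = 1 := by
    rw [hρsq, hα, hβ, hγ]
    linear_combination (a * d - b * c + 1) * hdet
  have hα0 : 0 ≤ α := by positivity
  have hρ0 : 0 < ρ := by
    refine lt_of_le_of_ne (norm_nonneg _) fun h => hg ?_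
    rw [← h] at hρsq hαρ
    have hβ0 : β = 0 := by nlinarith [sq_nonneg β, sq_nonneg γ]
    have hγ0 : γ = 0 := by nlinarith [sq_nonneg β, sq_nonneg γ]
    have hα1 : α = 1 := by nlinarith
    have e1 : a * a + c * c = 1 := by linarith
    have e2 : b * b + d * d = 1 := by linarith
    have e3 : a * b + c * d = 0 := hγ0
    ext i j
    fin_cases i <;> fin_cases j <;>
      simp [Matrix.mul_apply, Fin.sum_univ_two, ← ha, ← hb, ← hc, ← hd] <;> linarith
  have hα1 : 1 ≤ α := by nlinarith
  have hinv : 1 / (α + ρ) = α - ρ := by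
    rw [div_eq_iff (by linarith)]
    linarith
  have hcos : ρ * Real.cos z.arg = β := Complex.norm_mul_cos_arg z
  have hsin : ρ * Real.sin z.arg = γ := Complex.norm_mul_sin_arg z
  have harg1 := Complex.neg_pi_lt_arg z
  have harg2 := Complex.arg_le_pi z
  refine ⟨α + ρ, z.arg / 2, by linarith, by linarith, by linarith, fun θ => ?_⟩
  unfold qN
  rw [hinv]
  have h1 : Real.cos (2 * θ - z.arg) = 1 - 2 * Real.sin (θ - z.arg / 2) ^ 2 := by
    rw [← Real.cos_sq_add_sin_sq (θ - z.arg / 2), show 2 * θ - z.arg = 2 * (θ - z.arg / 2) by ring,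
      Real.cos_two_mul']
    ring
  have h2 : α + ρ - (α + ρ - (α - ρ)) * Real.sin (θ - z.arg / 2) ^ 2 =
      α + ρ * Real.cos (2 * θ - z.arg) := by rw [h1]; ring
  rw [h2, Real.cos_sub, mul_add, mul_left_comm, hcos, mul_left_comm, hsin, Real.sin_two_mul,
    Real.cos_two_mul']
  have hsc := Real.sin_sq_add_cos_sq θ
  unfold gX gY
  rw [← ha, ← hb, ← hc, ← hd, hα, hβ, hγ]
  linear_combination ((a ^ 2 + b ^ 2 + c ^ 2 + d ^ 2) / 2) * hsc

/-- Only `exp (i φ)`, not `φ` itself, is determined by `g v`; integrality of `k` and `n` then makes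
the integrand `2π`-periodic. -/
lemma oscI_integrand_periodic {g : Matrix.SpecialLinearGroup (Fin 2) ℝ} {φ : ℝ → ℝ}
    (hφ : IsLift g φ) (w : ℂ) (k n : ℤ) :
    Function.Periodic (fun θ => ((deriv φ θ : ℝ) : ℂ) ^ w *
      Complex.exp (Complex.I * ((k : ℂ) * (φ θ : ℂ) - (n : ℂ) * (θ : ℂ)))) (2 * Real.pi) := by
  intro θ
  have hX : gX g (θ + 2 * Real.pi) = gX g θ := by simp [gX]
  have hY : gY g (θ + 2 * Real.pi) = gY g θ := by simp [gY]
  have hd : deriv φ (θ + 2 * Real.pi) = deriv φ θ := by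
    rw [(lift_hasDerivAt hφ _).deriv, (lift_hasDerivAt hφ _).deriv, hX, hY]
  obtain ⟨h1, h2⟩ := lift_coords hφ θ
  obtain ⟨h3, h4⟩ := lift_coords hφ (θ + 2 * Real.pi)
  rw [hX, hY] at h3 h4
  have hR : Real.sqrt (gX g θ ^ 2 + gY g θ ^ 2) ≠ 0 := (Real.sqrt_pos.2 (norm_sq_pos g θ)).ne'
  have hc : Real.cos (φ (θ + 2 * Real.pi)) = Real.cos (φ θ) :=
    mul_left_cancel₀ hR (h3.symm.trans h1)
  have hs : Real.sin (φ (θ + 2 * Real.pi)) = Real.sin (φ θ) :=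
    mul_left_cancel₀ hR (h4.symm.trans h2)
  have he : Complex.exp ((φ (θ + 2 * Real.pi) : ℂ) * Complex.I) =
      Complex.exp ((φ θ : ℂ) * Complex.I) := by
    rw [Complex.exp_mul_I, Complex.exp_mul_I, ← Complex.ofReal_cos, ← Complex.ofReal_sin,
      ← Complex.ofReal_cos, ← Complex.ofReal_sin, hc, hs]
  have hform : ∀ x y : ℂ, Complex.exp (Complex.I * ((k : ℂ) * x - (n : ℂ) * y)) =
      Complex.exp (x * Complex.I) ^ k * (Complex.exp (y * Complex.I) ^ n)⁻¹ := fun x y => by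
    rw [← Complex.exp_int_mul, ← Complex.exp_int_mul, ← Complex.exp_neg, ← Complex.exp_add]
    congr 1
    ring
  have hθ : Complex.exp (((θ + 2 * Real.pi : ℝ) : ℂ) * Complex.I) =
      Complex.exp ((θ : ℂ) * Complex.I) := by
    push_cast
    rw [add_mul, Complex.exp_add, Complex.exp_two_pi_mul_I, mul_one]
  simp only [hd, hform, he, hθ]

/-! ### The Airy-type bound -/

theorem oscI_airy_bound (lam : ℂ) (hlam : lam.re = 0)
    (g : Matrix.SpecialLinearGroup (Fin 2) ℝ)
    (hg : (g : Matrix (Fin 2) (Fin 2) ℝ)ᵀ * (g : Matrix (Fin 2) (Fin 2) ℝ) ≠ 1)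
    (φ : ℝ → ℝ) (hφ : IsLift g φ)
    (M : ℝ) (hM : M = sSup (deriv φ '' Set.Icc (0 : ℝ) (2 * Real.pi))) :
    ∃ ε : ℝ, 0 < ε ∧ ε < 1 ∧ ∃ C : ℝ, 0 < C ∧
      ∀ n k : ℤ, 1 ≤ n → 1 ≤ k → |(k : ℝ) - M * n| ≤ ε * n →
        ‖oscI φ lam k n‖ ≤ C * (k : ℝ) ^ (-(1 : ℝ) / 3) *
          (1 + (k : ℝ) ^ (-(1 : ℝ) / 3) * |M * (n : ℝ) - (k : ℝ)|) ^ (-(1 : ℝ) / 4) := by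
  obtain ⟨M', θ₀, hM', hθ1, hθ2, hN⟩ := exists_normal_form g hg
  have hπ := Real.pi_pos
  have hderiv : ∀ θ, deriv φ θ = 1 / qN M' (θ - θ₀) := fun θ => by
    rw [(lift_hasDerivAt hφ θ).deriv, hN]
  have hdφ : ∀ θ, HasDerivAt φ (1 / qN M' (θ - θ₀)) θ := fun θ => by
    rw [← hN]
    exact lift_hasDerivAt hφ θ
  have hMM : M = M' := by
    rw [hM]
    refine IsGreatest.csSup_eq ⟨⟨θ₀ + Real.pi / 2, ⟨by linarith, by linarith⟩, ?_⟩, ?_⟩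
    · rw [hderiv, add_sub_cancel_left]
      simp [qN]
    · rintro _ ⟨θ, -, rfl⟩
      rw [hderiv]
      exact (one_div_le (by linarith) (qN_pos hM' _)).1 (qN_bounds hM' _).1
  rw [← hMM] at hM' hderiv hdφ
  clear hM hMM hN
  set B : ℝ := M - 1 / M with hBdef
  have hB : 0 < B := by
    have : 1 / M < 1 := by rw [div_lt_one (by linarith)]; exact hM'
    linarith
  obtain ⟨C, hC, hcore⟩ := core hM' ((lam - 1) / 2)
  refine ⟨min (1 / 2) (B / 4), by positivity, (min_le_left _ _).trans_lt (by norm_num), 4 * C,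
    by positivity, fun n k hn hk hnk => ?_⟩
  have hn' : (0 : ℝ) < n := by exact_mod_cast hn
  have hk' : (0 : ℝ) < k := by exact_mod_cast hk
  rw [abs_sub_comm] at hnk
  set τ : ℝ := (k : ℝ) ^ ((1 : ℝ) / 3) with hτdef
  have hτ : 0 < τ := Real.rpow_pos_of_pos hk' _
  have hτ3 : τ ^ 3 = k := by
    rw [hτdef, ← Real.rpow_natCast, ← Real.rpow_mul hk'.le]
    norm_num
  have hτinv : (k : ℝ) ^ (-(1 : ℝ) / 3) = τ⁻¹ := by
    rw [neg_div, Real.rpow_neg hk'.le]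
  rw [hτinv]
  set y : ℝ := τ⁻¹ * |M * (n : ℝ) - (k : ℝ)| with hy
  have hy0 : 0 ≤ y := by positivity
  set u : ℝ := (1 + y) ^ ((1 : ℝ) / 4) with hudef
  have hu : 1 ≤ u := Real.one_le_rpow (by linarith) (by norm_num)
  have hu4 : u ^ 4 = 1 + y := by
    rw [hudef, ← Real.rpow_natCast, ← Real.rpow_mul (by linarith)]
    norm_num
  have huinv : (1 + y) ^ (-(1 : ℝ) / 4) = u⁻¹ := by
    rw [neg_div, Real.rpow_neg (by linarith)]
  rw [huinv]
  have hyu : |M * n - τ ^ 3| = (u ^ 4 - 1) * τ := by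
    rw [hu4, hτ3, hy]
    field_simp
    ring
  have h12 : |M * n - τ ^ 3| ≤ 1 / 2 * n := by
    rw [hτ3]
    exact hnk.trans (by gcongr; exact min_le_left _ _)
  have hB4 : |M * n - τ ^ 3| ≤ B / 4 * n := by
    rw [hτ3]
    exact hnk.trans (by gcongr; exact min_le_right _ _)
  set F : ℝ → ℂ := fun θ => ((deriv φ θ : ℝ) : ℂ) ^ ((lam - 1) / 2) *
      Complex.exp (Complex.I * ((k : ℂ) * (φ θ : ℂ) - (n : ℂ) * (θ : ℂ))) with hF
  have hper : Function.Periodic F (2 * Real.pi) := oscI_integrand_periodic hφ _ k n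
  have hFc : Continuous F := by
    have h1 : Continuous (fun θ => ((1 / qN M (θ - θ₀) : ℝ) : ℂ) ^ ((lam - 1) / 2)) :=
      (contDiff_amp hM' ((lam - 1) / 2)).continuous.comp (continuous_sub_right θ₀)
    have h2 : Continuous φ := hφ.1.continuous
    simp only [hF, hderiv]
    fun_prop
  have hquarter : ∀ c σ : ℝ, |σ| = 1 → (∀ t, qN M (c + σ * t - θ₀) = qN M t) →
      ‖∫ t in (0 : ℝ)..(Real.pi / 2), F (c + σ * t)‖ * (τ * u) ≤ C := by
    intro c σ hσ hq
    have := hcore n τ u σ (fun t => k * φ (c + σ * t) - n * (c + σ * t)) hn' hτ hu hyu h12 hB4 hσ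
      (fun t => by
        have h1 : HasDerivAt (fun t => c + σ * t) σ t := by
          simpa using ((hasDerivAt_id t).const_mul σ).const_add c
        have h2 := ((((hdφ (c + σ * t)).comp t h1).const_mul (k : ℝ)).sub (h1.const_mul (n : ℝ)))
        refine h2.congr_deriv ?_
        rw [hq, hτ3]
        ring)
    convert this using 4
    funext t
    simp only [hF, hderiv, hq]
    push_cast
    rfl
  have hR : ∀ c : ℝ, (∀ t, qN M (c + t - θ₀) = qN M t) →
      ‖∫ θ in c..(c + Real.pi / 2), F θ‖ * (τ * u) ≤ C := by
    intro c hq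
    have h1 := hquarter c 1 (by norm_num) fun t => by rw [one_mul, hq]
    simp only [one_mul] at h1
    rwa [intervalIntegral.integral_comp_add_left (fun x => F x), add_zero] at h1
  have hqneg : ∀ t, qN M (-t) = qN M t := fun t => by simp [qN]
  have hL : ∀ c : ℝ, (∀ t, qN M (c + t - θ₀) = qN M t) →
      ‖∫ θ in (c - Real.pi / 2)..c, F θ‖ * (τ * u) ≤ C := by
    intro c hq
    have h1 := hquarter c (-1) (by norm_num) fun t => by rw [neg_one_mul, hq, hqneg]
    simp only [neg_one_mul, ← sub_eq_add_neg] at h1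
    rwa [intervalIntegral.integral_comp_sub_left (fun x => F x), sub_zero] at h1
  have hq0 : ∀ t, qN M (θ₀ + t - θ₀) = qN M t := fun t => by rw [add_sub_cancel_left]
  have hqπ : ∀ t, qN M (θ₀ + Real.pi + t - θ₀) = qN M t := fun t => by
    rw [show θ₀ + Real.pi + t - θ₀ = t + Real.pi by ring]
    simp [qN]
  have hI1 := hL θ₀ hq0
  have hI2 := hR θ₀ hq0
  have hI3 := hL (θ₀ + Real.pi) hqπ
  have hI4 := hR (θ₀ + Real.pi) hqπ
  rw [show θ₀ + Real.pi - Real.pi / 2 = θ₀ + Real.pi / 2 by ring] at hI3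
  have hi : ∀ x y : ℝ, IntervalIntegrable F MeasureTheory.volume x y :=
    fun x y => hFc.intervalIntegrable x y
  have hosc : oscI φ lam k n = (∫ θ in (θ₀ - Real.pi / 2)..θ₀, F θ) +
      (∫ θ in θ₀..(θ₀ + Real.pi / 2), F θ) +
      (∫ θ in (θ₀ + Real.pi / 2)..(θ₀ + Real.pi), F θ) +
      ∫ θ in (θ₀ + Real.pi)..(θ₀ + Real.pi + Real.pi / 2), F θ := by
    rw [intervalIntegral.integral_add_adjacent_intervals (hi _ _) (hi _ _),
      intervalIntegral.integral_add_adjacent_intervals (hi _ _) (hi _ _),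
      intervalIntegral.integral_add_adjacent_intervals (hi _ _) (hi _ _)]
    have h := hper.intervalIntegral_add_eq 0 (θ₀ - Real.pi / 2)
    rw [zero_add, show θ₀ - Real.pi / 2 + 2 * Real.pi = θ₀ + Real.pi + Real.pi / 2 by ring] at h
    exact h
  have hu0 : 0 < u := by linarith
  rw [show 4 * C * τ⁻¹ * u⁻¹ = 4 * C / (τ * u) by field_simp, le_div_iff₀ (by positivity), hosc]
  have := mul_le_mul_of_nonneg_right (norm_add₄_le
    (a := ∫ θ in (θ₀ - Real.pi / 2)..θ₀, F θ) (b := ∫ θ in θ₀..(θ₀ + Real.pi / 2), F θ)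
    (c := ∫ θ in (θ₀ + Real.pi / 2)..(θ₀ + Real.pi), F θ)
    (d := ∫ θ in (θ₀ + Real.pi)..(θ₀ + Real.pi + Real.pi / 2), F θ)) (mul_pos hτ hu0).le
  rw [add_mul, add_mul, add_mul] at this
  linarith
end

section
/- Let b ≥ 0, and let (t_i)_{i∈ℕ} be real numbers and (c_i)_{i∈ℕ} nonnegative reals such that Σ_{i : |t_i| < 1} c_i ≤ b and, for every real A ≥ 1, Σ_{i : A ≤ |t_i| ≤ 2A} c_i ≤ b·A². Then there is an absolute constant C > 0 such that Σ_{i∈ℕ} (1 + |t_i|)^{−5/2}·c_i ≤ C·b. -/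
open scoped ENNReal

/-!
Dyadic decomposition: each index `i` has `|t i| < 1` or lies in some block
`2 ^ k ≤ |t i| ≤ 2 * 2 ^ k`. On the `k`-th block the weight is at most `(2 ^ k) ^ (-5/2)` while the
mass of `c` is at most `b * (2 ^ k) ^ 2`, so the block contributes at most `b * (2 ^ (-1/2)) ^ k`.
Summing the geometric series gives the constant `1 + (1 - 2 ^ (-1/2))⁻¹`. Overlaps of the blocks
are harmless, since the weighted terms are only bounded above by the sum over all blocks.
-/

/-- The weight bound times the mass bound on the `k`-th dyadic block is a geometric term. -/
lemma dyadic_weight_mul_sq (k : ℕ) :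
    ((2 : ℝ) ^ k) ^ (-(5 : ℝ) / 2) * ((2 : ℝ) ^ k) ^ 2 = ((2 : ℝ) ^ (-(1 : ℝ) / 2)) ^ k := by
  have h2 : (0 : ℝ) < 2 ^ k := by positivity
  rw [← Real.rpow_natCast ((2 : ℝ) ^ k) 2, ← Real.rpow_add h2,
    ← Real.rpow_natCast (2 : ℝ) k, ← Real.rpow_mul (by norm_num),
    ← Real.rpow_natCast _ k, ← Real.rpow_mul (by norm_num)]
  congr 1
  push_cast
  ring

/-- There is an absolute constant `C > 0` such that whenever `Σ_{|t i| < 1} c i ≤ b` and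
`Σ_{A ≤ |t i| ≤ 2A} c i ≤ b A²` for all `A ≥ 1` (sums of nonnegative reals in the extended
sense), then `Σ_i (1 + |t i|)^{-5/2} c i ≤ C b`. -/
theorem weighted_sum_bound_five_half :
    ∃ C : ℝ, 0 < C ∧
      ∀ (b : ℝ) (t : ℕ → ℝ) (c : ℕ → ℝ), 0 ≤ b → (∀ i, 0 ≤ c i) →
        (∑' i : {i : ℕ // |t i| < 1}, ENNReal.ofReal (c i) ≤ ENNReal.ofReal b) →
        (∀ A : ℝ, 1 ≤ A →
          ∑' i : {i : ℕ // A ≤ |t i| ∧ |t i| ≤ 2 * A}, ENNReal.ofReal (c i)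
            ≤ ENNReal.ofReal (b * A ^ 2)) →
        ∑' i : ℕ, ENNReal.ofReal ((1 + |t i|) ^ (-(5 : ℝ) / 2) * c i)
          ≤ ENNReal.ofReal (C * b) := by
  have hr0 : (0 : ℝ) ≤ (2 : ℝ) ^ (-(1 : ℝ) / 2) := by positivity
  have hr1 : (2 : ℝ) ^ (-(1 : ℝ) / 2) < 1 :=
    Real.rpow_lt_one_of_one_lt_of_neg (by norm_num) (by norm_num)
  have hr := dyadic_weight_mul_sq
  generalize (2 : ℝ) ^ (-(1 : ℝ) / 2) = r at hr0 hr1 hr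
  have hinv : 0 ≤ (1 - r)⁻¹ := inv_nonneg.2 (by linarith)
  refine ⟨1 + (1 - r)⁻¹, by positivity, ?_⟩
  intro b t c hb hc h0 hA
  let f : ℕ → ℝ≥0∞ := fun i => ENNReal.ofReal (c i)
  let S : Set ℕ := {i | |t i| < 1}
  let B : ℕ → Set ℕ := fun k => {i | (2 : ℝ) ^ k ≤ |t i| ∧ |t i| ≤ 2 * 2 ^ k}
  let q : ℕ → ℝ≥0∞ := fun k => ENNReal.ofReal (((2 : ℝ) ^ k) ^ (-(5 : ℝ) / 2))
  have hS : ∑' i, S.indicator f i ≤ ENNReal.ofReal b := by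
    rw [← tsum_subtype S f]
    exact h0
  have hB (k : ℕ) : ∑' i, (B k).indicator f i ≤ ENNReal.ofReal (b * ((2 : ℝ) ^ k) ^ 2) := by
    rw [← tsum_subtype (B k) f]
    exact hA _ (one_le_pow₀ (by norm_num))
  have hpt (i : ℕ) : ENNReal.ofReal ((1 + |t i|) ^ (-(5 : ℝ) / 2) * c i)
      ≤ S.indicator f i + ∑' k, q k * (B k).indicator f i := by
    have hpos := abs_nonneg (t i)
    by_cases hi : |t i| < 1
    · refine le_add_right ?_
      rw [Set.indicator_of_mem (show i ∈ S from hi)]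
      refine ENNReal.ofReal_le_ofReal (mul_le_of_le_one_left (hc i) ?_)
      exact Real.rpow_le_one_of_one_le_of_nonpos (by linarith) (by norm_num)
    · obtain ⟨k, hk1, hk2⟩ := exists_nat_pow_near (not_lt.1 hi) (one_lt_two (α := ℝ))
      have hmem : i ∈ B k := ⟨hk1, by rw [pow_succ] at hk2; linarith⟩
      refine le_add_left (le_trans ?_ (ENNReal.le_tsum k))
      rw [Set.indicator_of_mem hmem, ← ENNReal.ofReal_mul (by positivity)]
      refine ENNReal.ofReal_le_ofReal (mul_le_mul_of_nonneg_right ?_ (hc i))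
      exact Real.rpow_le_rpow_of_nonpos (by positivity) (by linarith) (by norm_num)
  calc _ ≤ ∑' i, (S.indicator f i + ∑' k, q k * (B k).indicator f i) :=
        ENNReal.tsum_le_tsum hpt
    _ = ∑' i, S.indicator f i + ∑' k, q k * ∑' i, (B k).indicator f i := by
        rw [ENNReal.tsum_add, ENNReal.tsum_comm]
        simp_rw [ENNReal.tsum_mul_left]
    _ ≤ ENNReal.ofReal b + ∑' k, ENNReal.ofReal (b * r ^ k) := by
        refine add_le_add hS (ENNReal.tsum_le_tsum fun k => ?_)
        refine (mul_le_mul_right (hB k) (q k)).trans (le_of_eq ?_)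
        rw [← ENNReal.ofReal_mul (by positivity), ← hr k]
        congr 1
        ring
    _ = ENNReal.ofReal ((1 + (1 - r)⁻¹) * b) := by
        rw [← ENNReal.ofReal_tsum_of_nonneg (fun k => by positivity)
            ((summable_geometric_of_lt_one hr0 hr1).mul_left b),
          tsum_mul_left, tsum_geometric_of_lt_one hr0 hr1,
          ← ENNReal.ofReal_add hb (by positivity)]
        congr 1
        ring
end

section
/- Let α, b ≥ 0. Let s : ℤ → [0,∞), let (t_i)_{i∈ℕ} be real numbers and (c_i)_{i∈ℕ} nonnegative reals such that Σ_{i : |t_i| < 1} c_i ≤ b and Σ_{i : A ≤ |t_i| ≤ 2A} c_i ≤ b·A² for every real A ≥ 1. Assume that for all integers N ≥ T ≥ 1 one has Σ_{k : |k−N| ≤ T} s_k ≤ α·T + α·T·N^{−1/2}·Σ_{i : |t_i| ≤ N/T} (1+|t_i|)^{−1/2}·c_i + α·T·Σ_{i∈ℕ} (1+|t_i|)^{−5/2}·c_i. Then there exists a constant C > 0 depending only on α and b such that for every integer N ≥ 1, Σ_{k : |k−N| ≤ N^{2/3}} s_k ≤ C·N^{2/3}. -/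
/-!
The hypothesis is applied with `T = ⌈N^(2/3)⌉`, so that `N^(2/3) ≤ T ≤ 2 N^(2/3)`, `T ≤ N` and
`N / T ≤ N^(1/3)`. It remains to bound the two spectral sums, both by induction over dyadic
shells `2^m ≤ |t i| ≤ 2^(m+1)` (`tsum_shell_step`). In such a shell the weight
`(1 + |t i|)^(-p)` is at most `(2^m)^(-p)`, so the shell contributes at most `b (2^m)^(2-p)`.

* For `p = 1/2` the contributions grow geometrically, so the sum over `|t i| ≤ N^(1/3)` is
  `O(b (N^(1/3))^(3/2)) = O(b N^(1/2))`, which the factor `N^(-1/2)` cancels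
  (`tsum_half_le`).
* For `p = 5/2` they decay geometrically, so the full sum is at most `5 b`
  (`tsum_five_half_le`).

Hence the right-hand side is at most `α T (1 + 4 b + 5 b)`.
-/

open scoped ENNReal

/-- Passing from `|t i| < 2^m` to `|t i| < 2^(m+1)` adds one dyadic shell, on which the weight is
at most `(2^m)^q`. -/
lemma tsum_shell_step {b : ℝ} {t c : ℕ → ℝ} (hc : ∀ i, 0 ≤ c i)
    (h : ∀ A : ℝ, 1 ≤ A →
      ∑' i : {i : ℕ // A ≤ |t i| ∧ |t i| ≤ 2 * A}, ENNReal.ofReal (c i)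
        ≤ ENNReal.ofReal (b * A ^ 2))
    {q : ℝ} (hq : q ≤ 0) (m : ℕ) :
    ∑' i : {i : ℕ // |t i| < 2 ^ (m + 1)}, ENNReal.ofReal ((1 + |t i|) ^ q * c i)
      ≤ ∑' i : {i : ℕ // |t i| < 2 ^ m}, ENNReal.ofReal ((1 + |t i|) ^ q * c i)
        + ENNReal.ofReal (((2 : ℝ) ^ m) ^ q * (b * ((2 : ℝ) ^ m) ^ 2)) := by
  set B : ℝ := 2 ^ m with hB
  have hB1 : 1 ≤ B := one_le_pow₀ (by norm_num)
  let f : ℕ → ℝ≥0∞ := fun i => ENNReal.ofReal ((1 + |t i|) ^ q * c i)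
  have h1 : ∑' i : {i : ℕ | |t i| < 2 ^ (m + 1)}, f i
      ≤ ∑' i : ({i : ℕ | |t i| < B} ∪ {i : ℕ | B ≤ |t i| ∧ |t i| ≤ 2 * B} : Set ℕ), f i := by
    apply ENNReal.tsum_mono_subtype
    intro i hi
    simp only [Set.mem_ofPred_eq, Set.mem_union, pow_succ] at hi ⊢
    rcases lt_or_ge |t i| B with h' | h'
    · exact Or.inl h'
    · exact Or.inr ⟨h', by linarith⟩
  have h2 : ∑' i : {i : ℕ | B ≤ |t i| ∧ |t i| ≤ 2 * B}, f i
      ≤ ENNReal.ofReal (B ^ q * (b * B ^ 2)) := by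
    calc ∑' i : {i : ℕ | B ≤ |t i| ∧ |t i| ≤ 2 * B}, f i
        ≤ ∑' i : {i : ℕ | B ≤ |t i| ∧ |t i| ≤ 2 * B},
            ENNReal.ofReal (B ^ q) * ENNReal.ofReal (c i) := by
          apply ENNReal.tsum_le_tsum
          rintro ⟨i, hi⟩
          rw [← ENNReal.ofReal_mul (by positivity)]
          apply ENNReal.ofReal_le_ofReal
          apply mul_le_mul_of_nonneg_right _ (hc i)
          exact Real.rpow_le_rpow_of_nonpos (by positivity) (by linarith [hi.1]) hq
      _ ≤ _ := by
          rw [ENNReal.tsum_mul_left, ENNReal.ofReal_mul (by positivity)]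
          gcongr
          exact h B hB1
  exact h1.trans ((ENNReal.tsum_union_le f _ _).trans (by gcongr; exact le_rfl))

/-- The unit ball `|t i| < 1` contributes at most `b`. -/
lemma tsum_shell_zero {b : ℝ} {t c : ℕ → ℝ} (hc : ∀ i, 0 ≤ c i)
    (h : ∑' i : {i : ℕ // |t i| < 1}, ENNReal.ofReal (c i) ≤ ENNReal.ofReal b)
    {q : ℝ} (hq : q ≤ 0) :
    ∑' i : {i : ℕ // |t i| < 1}, ENNReal.ofReal ((1 + |t i|) ^ q * c i)
      ≤ ENNReal.ofReal b := by
  refine le_trans (ENNReal.tsum_le_tsum fun i => ENNReal.ofReal_le_ofReal ?_) h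
  refine mul_le_of_le_one_left (hc i) ?_
  exact Real.rpow_le_one_of_one_le_of_nonpos (by linarith [abs_nonneg (t i)]) hq

/-- With weight exponent `-1/2` the last shell dominates: each shell at most doubles the bound,
which the growth factor `2^(3/2) ≥ 2` of the claimed bound absorbs. -/
lemma tsum_half_le {b : ℝ} (hb : 0 ≤ b) {t c : ℕ → ℝ} (hc : ∀ i, 0 ≤ c i)
    (h0 : ∑' i : {i : ℕ // |t i| < 1}, ENNReal.ofReal (c i) ≤ ENNReal.ofReal b)
    (h : ∀ A : ℝ, 1 ≤ A →
      ∑' i : {i : ℕ // A ≤ |t i| ∧ |t i| ≤ 2 * A}, ENNReal.ofReal (c i)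
        ≤ ENNReal.ofReal (b * A ^ 2)) (m : ℕ) :
    ∑' i : {i : ℕ // |t i| < 2 ^ m}, ENNReal.ofReal ((1 + |t i|) ^ (-(1 : ℝ) / 2) * c i)
      ≤ ENNReal.ofReal (b * ((2 : ℝ) ^ m) ^ ((3 : ℝ) / 2)) := by
  induction m with
  | zero =>
    rw [pow_zero, Real.one_rpow, mul_one]
    exact tsum_shell_zero hc h0 (by norm_num)
  | succ m ih =>
    refine (tsum_shell_step hc h (by norm_num) m).trans ((add_le_add_left ih _).trans ?_)
    have hB : (0 : ℝ) < 2 ^ m := by positivity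
    rw [← ENNReal.ofReal_add (by positivity) (by positivity)]
    apply ENNReal.ofReal_le_ofReal
    have e1 : ((2 : ℝ) ^ m) ^ (-(1 : ℝ) / 2) * (b * ((2 : ℝ) ^ m) ^ 2)
        = b * ((2 : ℝ) ^ m) ^ ((3 : ℝ) / 2) := by
      rw [← Real.rpow_natCast ((2 : ℝ) ^ m) 2, mul_left_comm, ← Real.rpow_add hB]
      norm_num
    have e2 : (2 : ℝ) ≤ (2 : ℝ) ^ ((3 : ℝ) / 2) :=
      Real.self_le_rpow_of_one_le (by norm_num) (by norm_num)
    rw [e1, pow_succ, Real.mul_rpow hB.le (by norm_num)]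
    have : 0 ≤ b * ((2 : ℝ) ^ m) ^ ((3 : ℝ) / 2) := by positivity
    nlinarith

/-- With weight exponent `-5/2` the shells contribute a convergent geometric series of ratio
`2^(-1/2)`. -/
lemma tsum_five_half_lt_le {b : ℝ} (hb : 0 ≤ b) {t c : ℕ → ℝ} (hc : ∀ i, 0 ≤ c i)
    (h0 : ∑' i : {i : ℕ // |t i| < 1}, ENNReal.ofReal (c i) ≤ ENNReal.ofReal b)
    (h : ∀ A : ℝ, 1 ≤ A →
      ∑' i : {i : ℕ // A ≤ |t i| ∧ |t i| ≤ 2 * A}, ENNReal.ofReal (c i)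
        ≤ ENNReal.ofReal (b * A ^ 2)) (m : ℕ) :
    ∑' i : {i : ℕ // |t i| < 2 ^ m}, ENNReal.ofReal ((1 + |t i|) ^ (-(5 : ℝ) / 2) * c i)
      ≤ ENNReal.ofReal (b * (5 - 4 * ((2 : ℝ) ^ m) ^ (-(1 : ℝ) / 2))) := by
  induction m with
  | zero =>
    rw [pow_zero, Real.one_rpow, show b * (5 - 4 * 1) = b by ring]
    exact tsum_shell_zero hc h0 (by norm_num)
  | succ m ih =>
    refine (tsum_shell_step hc h (by norm_num) m).trans ((add_le_add_left ih _).trans ?_)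
    have hB : (0 : ℝ) < 2 ^ m := by positivity
    have hx : ((2 : ℝ) ^ m) ^ (-(1 : ℝ) / 2) ≤ 1 :=
      Real.rpow_le_one_of_one_le_of_nonpos (one_le_pow₀ (by norm_num)) (by norm_num)
    rw [← ENNReal.ofReal_add (mul_nonneg hb (by linarith)) (by positivity)]
    apply ENNReal.ofReal_le_ofReal
    have e1 : ((2 : ℝ) ^ m) ^ (-(5 : ℝ) / 2) * (b * ((2 : ℝ) ^ m) ^ 2)
        = b * ((2 : ℝ) ^ m) ^ (-(1 : ℝ) / 2) := by
      rw [← Real.rpow_natCast ((2 : ℝ) ^ m) 2, mul_left_comm, ← Real.rpow_add hB]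
      norm_num
    -- `4 * 2^(-1/2) ≤ 3` is what lets the constants `5` and `4` propagate.
    have e2 : (2 : ℝ) ^ (-(1 : ℝ) / 2) ≤ 3 / 4 := by
      have hsq : ((2 : ℝ) ^ (-(1 : ℝ) / 2)) ^ 2 = 1 / 2 := by
        rw [← Real.rpow_natCast, ← Real.rpow_mul (by norm_num)]
        norm_num [Real.rpow_neg_one]
      have : (0 : ℝ) ≤ (2 : ℝ) ^ (-(1 : ℝ) / 2) := by positivity
      nlinarith
    rw [e1, pow_succ, Real.mul_rpow hB.le (by norm_num)]
    have : 0 ≤ b * ((2 : ℝ) ^ m) ^ (-(1 : ℝ) / 2) := by positivity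
    nlinarith

lemma tsum_five_half_le {b : ℝ} (hb : 0 ≤ b) {t c : ℕ → ℝ} (hc : ∀ i, 0 ≤ c i)
    (h0 : ∑' i : {i : ℕ // |t i| < 1}, ENNReal.ofReal (c i) ≤ ENNReal.ofReal b)
    (h : ∀ A : ℝ, 1 ≤ A →
      ∑' i : {i : ℕ // A ≤ |t i| ∧ |t i| ≤ 2 * A}, ENNReal.ofReal (c i)
        ≤ ENNReal.ofReal (b * A ^ 2)) :
    ∑' i : ℕ, ENNReal.ofReal ((1 + |t i|) ^ (-(5 : ℝ) / 2) * c i)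
      ≤ ENNReal.ofReal (5 * b) := by
  rw [ENNReal.tsum_eq_iSup_sum]
  refine iSup_le fun F => ?_
  -- A finite set of indices lies in one ball `|t i| < 2^m`.
  obtain ⟨m, hm⟩ := pow_unbounded_of_one_lt (∑ i ∈ F, |t i|) (one_lt_two (α := ℝ))
  have hF : ∀ i ∈ F, |t i| < 2 ^ m := fun i hi =>
    (Finset.single_le_sum (f := fun i => |t i|) (fun _ _ => abs_nonneg _) hi).trans_lt hm
  let f : ℕ → ℝ≥0∞ := fun i => ENNReal.ofReal ((1 + |t i|) ^ (-(5 : ℝ) / 2) * c i)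
  calc ∑ i ∈ F, f i = ∑' i : (F : Set ℕ), f i := (Finset.tsum_subtype' F f).symm
    _ ≤ ∑' i : {i : ℕ | |t i| < 2 ^ m}, f i :=
        ENNReal.tsum_mono_subtype f fun i hi => hF i hi
    _ ≤ _ := tsum_five_half_lt_le hb hc h0 h m
    _ ≤ _ := by
        apply ENNReal.ofReal_le_ofReal
        have : 0 ≤ b * ((2 : ℝ) ^ m) ^ (-(1 : ℝ) / 2) := by positivity
        nlinarith

/-- From the spectral-identity bound together with the dyadic counting bounds on the
coefficients, one deduces the short-interval bound
`Σ_{|k−N| ≤ N^{2/3}} s k ≤ C N^{2/3}`, with `C` depending only on `α` and `b`. -/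
theorem short_interval_bound (α b : ℝ) (hα : 0 ≤ α) (hb : 0 ≤ b) :
    ∃ C : ℝ, 0 < C ∧
      ∀ (s : ℤ → ℝ) (t : ℕ → ℝ) (c : ℕ → ℝ),
        (∀ k, 0 ≤ s k) → (∀ i, 0 ≤ c i) →
        (∑' i : {i : ℕ // |t i| < 1}, ENNReal.ofReal (c i) ≤ ENNReal.ofReal b) →
        (∀ A : ℝ, 1 ≤ A →
          ∑' i : {i : ℕ // A ≤ |t i| ∧ |t i| ≤ 2 * A}, ENNReal.ofReal (c i)
            ≤ ENNReal.ofReal (b * A ^ 2)) →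
        (∀ N T : ℤ, 1 ≤ T → T ≤ N →
          ∑' k : {k : ℤ // |(k : ℝ) - (N : ℝ)| ≤ (T : ℝ)}, ENNReal.ofReal (s k)
            ≤ ENNReal.ofReal (α * T)
              + ENNReal.ofReal (α * T * (N : ℝ) ^ (-(1 : ℝ) / 2)) *
                  ∑' i : {i : ℕ // |t i| ≤ (N : ℝ) / (T : ℝ)},
                    ENNReal.ofReal ((1 + |t i|) ^ (-(1 : ℝ) / 2) * c i)
              + ENNReal.ofReal (α * T) *
                  ∑' i : ℕ, ENNReal.ofReal ((1 + |t i|) ^ (-(5 : ℝ) / 2) * c i)) →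
        ∀ N : ℤ, 1 ≤ N →
          ∑' k : {k : ℤ // |(k : ℝ) - (N : ℝ)| ≤ (N : ℝ) ^ ((2 : ℝ) / 3)},
              ENNReal.ofReal (s k)
            ≤ ENNReal.ofReal (C * (N : ℝ) ^ ((2 : ℝ) / 3)) := by
  refine ⟨2 * α * (1 + 9 * b) + 1, by positivity, ?_⟩
  intro s t c _ hc h0 h hmain N hN
  have hN1 : (1 : ℝ) ≤ N := by exact_mod_cast hN
  have hN0 : (0 : ℝ) < N := by linarith
  set Y : ℝ := (N : ℝ) ^ ((2 : ℝ) / 3) with hY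
  set X : ℝ := (N : ℝ) ^ ((1 : ℝ) / 3) with hX
  have hY1 : 1 ≤ Y := Real.one_le_rpow hN1 (by norm_num)
  have hX1 : 1 ≤ X := Real.one_le_rpow hN1 (by norm_num)
  have hYN : Y ≤ N := by
    simpa using Real.rpow_le_rpow_of_exponent_le hN1 (show (2 : ℝ) / 3 ≤ 1 by norm_num)
  have hXY : X * Y = N := by
    rw [hX, hY, ← Real.rpow_add hN0]
    norm_num
  set T : ℤ := ⌈Y⌉ with hT
  have hYT : Y ≤ T := Int.le_ceil Y
  have hT1' : (1 : ℝ) ≤ T := hY1.trans hYT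
  have hT1 : 1 ≤ T := by exact_mod_cast hT1'
  have hTN : T ≤ N := Int.ceil_le.2 hYN
  have hT2 : (T : ℝ) ≤ 2 * Y := by linarith [Int.ceil_lt_add_one Y]
  have hNT : (N : ℝ) / T ≤ X := by
    rw [div_le_iff₀ (by linarith), ← hXY]
    gcongr
  obtain ⟨m, hm1, hm2⟩ := exists_nat_pow_near hX1 (one_lt_two (α := ℝ))
  let f : ℕ → ℝ≥0∞ := fun i => ENNReal.ofReal ((1 + |t i|) ^ (-(1 : ℝ) / 2) * c i)
  have hlow : ∑' i : {i : ℕ // |t i| ≤ (N : ℝ) / (T : ℝ)},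
      ENNReal.ofReal ((1 + |t i|) ^ (-(1 : ℝ) / 2) * c i)
      ≤ ENNReal.ofReal (4 * b * (N : ℝ) ^ ((1 : ℝ) / 2)) := by
    calc ∑' i : {i : ℕ | |t i| ≤ (N : ℝ) / (T : ℝ)}, f i
        ≤ ∑' i : {i : ℕ | |t i| < 2 ^ (m + 1)}, f i :=
          ENNReal.tsum_mono_subtype f fun i hi => (le_trans hi hNT).trans_lt hm2
      _ ≤ _ := tsum_half_le hb hc h0 h (m + 1)
      _ ≤ _ := by
          apply ENNReal.ofReal_le_ofReal
          have e1 : ((2 : ℝ) ^ (m + 1)) ^ ((3 : ℝ) / 2) ≤ (2 * X) ^ ((3 : ℝ) / 2) := by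
            apply Real.rpow_le_rpow (by positivity) _ (by norm_num)
            rw [pow_succ]
            linarith
          have e2 : X ^ ((3 : ℝ) / 2) = (N : ℝ) ^ ((1 : ℝ) / 2) := by
            rw [hX, ← Real.rpow_mul hN0.le]
            norm_num
          have e3 : (2 : ℝ) ^ ((3 : ℝ) / 2) ≤ 4 := by
            calc (2 : ℝ) ^ ((3 : ℝ) / 2) ≤ (2 : ℝ) ^ (2 : ℝ) :=
                  Real.rpow_le_rpow_of_exponent_le (by norm_num) (by norm_num)
              _ = 4 := by norm_num
          rw [Real.mul_rpow (by norm_num) (by linarith), e2] at e1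
          calc b * ((2 : ℝ) ^ (m + 1)) ^ ((3 : ℝ) / 2)
              ≤ b * (4 * (N : ℝ) ^ ((1 : ℝ) / 2)) := by
                gcongr
                exact e1.trans (by gcongr)
            _ = _ := by ring
  let g : ℤ → ℝ≥0∞ := fun k => ENNReal.ofReal (s k)
  have hwiden : ∑' k : {k : ℤ | |(k : ℝ) - (N : ℝ)| ≤ Y}, g k
      ≤ ∑' k : {k : ℤ | |(k : ℝ) - (N : ℝ)| ≤ (T : ℝ)}, g k :=
    ENNReal.tsum_mono_subtype g fun k hk => le_trans hk hYT
  refine hwiden.trans ((hmain N T hT1 hTN).trans ?_)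
  have hαT : 0 ≤ α * T := mul_nonneg hα (by linarith)
  have hcancel : (N : ℝ) ^ (-(1 : ℝ) / 2) * (N : ℝ) ^ ((1 : ℝ) / 2) = 1 := by
    rw [← Real.rpow_add hN0]
    norm_num
  calc _ ≤ ENNReal.ofReal (α * T)
        + ENNReal.ofReal (α * T * (N : ℝ) ^ (-(1 : ℝ) / 2)) *
            ENNReal.ofReal (4 * b * (N : ℝ) ^ ((1 : ℝ) / 2))
        + ENNReal.ofReal (α * T) * ENNReal.ofReal (5 * b) := by
        gcongr
        exact tsum_five_half_le hb hc h0 h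
    _ = ENNReal.ofReal (α * T * (1 + 9 * b)) := by
        rw [← ENNReal.ofReal_mul (by positivity), ← ENNReal.ofReal_mul hαT,
          ← ENNReal.ofReal_add hαT (by positivity),
          ← ENNReal.ofReal_add (by positivity) (by positivity)]
        congr 1
        linear_combination 4 * b * (α * T) * hcancel
    _ ≤ _ := by
        apply ENNReal.ofReal_le_ofReal
        have : α * (1 + 9 * b) * T ≤ α * (1 + 9 * b) * (2 * Y) := by gcongr
        linarith
end
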